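/- Let n ≥ 2 and let Γ ⊂ ℝⁿ satisfy condition (C) with λ* = (1,−1,…,−1) ∉ ∂Γ. Then every continuous viscosity solution of λ(A[v]) ∈ ∂Γ in ℝⁿ is constant. -/

import Mathlib

open Filter Topology MeasureTheory Metric Set
open scoped BigOperators ENNReal NNReal

noncomputable section

/-- `ℝⁿ` with the Euclidean norm. -/
abbrev Euc (n : ℕ) := EuclideanSpace ℝ (Fin n)

/-- The positive cone `Γₙ = {λ : λᵢ > 0 ∀ i}`. -/
def GammaN (n : ℕ) : Set (Fin n → ℝ) := {lam | ∀ i, 0 < lam i}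

/-- Condition (C): `Γ ⊊ ℝⁿ` is a nonempty open symmetric cone with vertex at the origin
satisfying `Γ + Γₙ ⊆ Γ`. -/
def CondC {n : ℕ} (Γ : Set (Fin n → ℝ)) : Prop :=
  Γ.Nonempty ∧ Γ ≠ Set.univ ∧ IsOpen Γ ∧
    (∀ σ : Equiv.Perm (Fin n), ∀ lam ∈ Γ, lam ∘ σ ∈ Γ) ∧
    (∀ lam ∈ Γ, ∀ t : ℝ, 0 < t → t • lam ∈ Γ) ∧
    (∀ lam ∈ Γ, ∀ mu ∈ GammaN n, lam + mu ∈ Γ)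

/-- `λ* = (1, -1, …, -1)`. -/
def lamStar (n : ℕ) : Fin n → ℝ := fun i => if i.val = 0 then 1 else -1

/-- Partial derivative `∂ᵢ v (x)`. -/
def pgrad {n : ℕ} (v : Euc n → ℝ) (x : Euc n) (i : Fin n) : ℝ :=
  fderiv ℝ v x (EuclideanSpace.single i 1)

/-- Second partial derivative `∂ᵢ∂ⱼ v (x)`. -/
def phess {n : ℕ} (v : Euc n → ℝ) (x : Euc n) (i j : Fin n) : ℝ :=
  fderiv ℝ (fun y => fderiv ℝ v y (EuclideanSpace.single j 1)) x (EuclideanSpace.single i 1)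

/-- The Möbius Hessian
`A[v](x) = e^{-2v(x)} (-∇²v + ∇v ⊗ ∇v - ½ |∇v|² I)` as a matrix. -/
def mobius {n : ℕ} (v : Euc n → ℝ) (x : Euc n) : Matrix (Fin n) (Fin n) ℝ :=
  Real.exp (-2 * v x) • Matrix.of fun i j =>
    - phess v x i j + pgrad v x i * pgrad v x j
      - (1 / 2) * (∑ k, (pgrad v x k) ^ 2) * (if i = j then (1 : ℝ) else 0)

/-- The (unordered, permutation-invariant) eigenvalue tuple of the symmetric matrix `M`
belongs to the (permutation-invariant) set `S`. -/
def EigIn {n : ℕ} (M : Matrix (Fin n) (Fin n) ℝ) (S : Set (Fin n → ℝ)) : Prop :=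
  ∃ hM : M.IsHermitian, hM.eigenvalues ∈ S

/-- Viscosity supersolution of `λ(A[v]) ∈ ∂Γ` in `Ω`, i.e. `λ(A[v]) ∈ closure Γ`
in the viscosity sense (for a real-valued `v`). -/
def Supersol {n : ℕ} (Γ : Set (Fin n → ℝ)) (Ω : Set (Euc n)) (v : Euc n → ℝ) : Prop :=
  ∀ x₀ ∈ Ω, ∀ φ : Euc n → ℝ, ContDiff ℝ 2 φ → φ x₀ = v x₀ →
    (∀ᶠ x in 𝓝[Ω] x₀, φ x ≤ v x) → EigIn (mobius φ x₀) (closure Γ)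

/-- Viscosity subsolution of `λ(A[v]) ∈ ∂Γ` in `Ω`, i.e. `λ(A[v]) ∈ ℝⁿ ∖ Γ`
in the viscosity sense (for a real-valued `v`). -/
def Subsol {n : ℕ} (Γ : Set (Fin n → ℝ)) (Ω : Set (Euc n)) (v : Euc n → ℝ) : Prop :=
  ∀ x₀ ∈ Ω, ∀ φ : Euc n → ℝ, ContDiff ℝ 2 φ → φ x₀ = v x₀ →
    (∀ᶠ x in 𝓝[Ω] x₀, v x ≤ φ x) → EigIn (mobius φ x₀) Γᶜ

/-!
There are two mechanisms, according to the position of `λ*` relative to `Γ`.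

If `λ* ∈ Γ`, the radial functions `-log (1 - (|y - x₀|² / S) ^ k) / k`, whose Möbius Hessians have
eigenvalues proportional to `(1 - 2 k, -1, …, -1)`, are strict supersolutions for small `k > 0`.
Comparing `v`, as a subsolution, with them gives
`exp (k * v x) * (1 - (|x - x₀|² / S) ^ k) ≤ exp (k * v x₀)`, and `S → ∞` yields `v x ≤ v x₀`.

If `λ* ∉ closure Γ`, consider the conformal factor `w = exp (-v)` and its Kelvin transform
`b y = |y|² w (y / |y|²)`, which agrees with `w` on the unit sphere and satisfies the supersolution
inequality off the origin. Isolated singularities are removable: barriers bound `b` near `0`, and a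
test function touching its upper limit there can be moved by a multiple of `log |y|` so as to touch
`b` off the origin. The comparison principle on the unit ball, proved by sup-convolution and
doubling of variables, then gives `b ≤ w` inside. By Möbius invariance this holds for every sphere;
for the inversion exchanging `a` and `b`, centred on their line at distance `s` beyond `a`, it reads
`v a ≤ v b + log ((s + |b - a|) / s)`, and `s → ∞` yields `v a ≤ v b`.
-/

section QuadraticForms

variable {E : Type*} [NormedAddCommGroup E] [InnerProductSpace ℝ E]

/-- The quadratic form `h ↦ ⟪A h, h⟫` of an operator `A`, which need not be symmetric. -/
def operatorForm (A : E →ₗ[ℝ] E) : QuadraticForm ℝ E :=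
  LinearMap.BilinMap.toQuadraticMap (innerₗ E ∘ₗ A)

@[simp]
lemma operatorForm_apply (A : E →ₗ[ℝ] E) (h : E) : operatorForm A h = inner ℝ (A h) h := rfl

/-- The quadratic form `h ↦ ‖h‖ ^ 2`. -/
def normSqForm : QuadraticForm ℝ E := LinearMap.BilinMap.toQuadraticMap (innerₗ E)

@[simp]
lemma normSqForm_apply (h : E) : normSqForm h = ‖h‖ ^ 2 := real_inner_self_eq_norm_sq h

/-- The quadratic form `p ⊗ p : h ↦ ⟪p, h⟫ ^ 2`. -/
def innerSqForm (p : E) : QuadraticForm ℝ E := QuadraticMap.linMulLin (innerₗ E p) (innerₗ E p)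

@[simp]
lemma innerSqForm_apply (p h : E) : innerSqForm p h = inner ℝ p h ^ 2 := (sq _).symm

/-- The quadratic form `a • e ⊗ e + b • I`. -/
def axialForm (e : E) (a b : ℝ) : QuadraticForm ℝ E :=
  a • innerSqForm e + b • normSqForm

@[simp]
lemma axialForm_apply (e : E) (a b : ℝ) (h : E) :
    axialForm e a b h = a * inner ℝ e h ^ 2 + b * ‖h‖ ^ 2 := by
  simp [axialForm]

lemma quadraticForm_apply_smul (Q : QuadraticForm ℝ E) (c : ℝ) (h : E) :
    Q (c • h) = c ^ 2 * Q h := by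
  rw [QuadraticMap.map_smul, smul_eq_mul, sq]

variable [FiniteDimensional ℝ E]

lemma exists_abs_quadraticForm_le (Q : QuadraticForm ℝ E) :
    ∃ C, 0 ≤ C ∧ ∀ h, |Q h| ≤ C * ‖h‖ ^ 2 := by
  let B := (QuadraticMap.associated Q).toContinuousBilinearMap
  refine ⟨‖B‖, B.opNorm_nonneg, fun h => ?_⟩
  rw [← QuadraticMap.associated_eq_self_apply ℝ Q h, sq, ← mul_assoc]
  exact B.le_opNorm₂ h h

lemma quadraticForm_continuous (Q : QuadraticForm ℝ E) : Continuous Q := by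
  have hB : Continuous fun h => (QuadraticMap.associated Q).toContinuousBilinearMap h h := by
    fun_prop
  simpa [QuadraticMap.associated_eq_self_apply] using hB

lemma exists_gradient_quadraticForm (Q : QuadraticForm ℝ E) :
    ∃ L : E →L[ℝ] E, ∀ x k, Q (x + k) = Q x + 2 * inner ℝ (L x) k + Q k := by
  let B := (QuadraticMap.associated Q).toContinuousBilinearMap
  refine ⟨(InnerProductSpace.toDual ℝ E).symm.toContinuousLinearEquiv.toContinuousLinearMap ∘L B,
    fun x k => ?_⟩
  have hB : B x k = (Q (x + k) - Q x - Q k) / 2 := by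
    simp [B, QuadraticMap.associated_apply, div_eq_inv_mul]
  simp only [ContinuousLinearMap.comp_apply, ContinuousLinearEquiv.coe_coe,
    LinearIsometryEquiv.coe_toContinuousLinearEquiv, InnerProductSpace.toDual_symm_apply, hB]
  ring

end QuadraticForms

section Eigenvalues

variable {n : ℕ}

/-- The quadratic form `h ↦ ∑ i j, M i j * h i * h j`. -/
def matrixForm (M : Matrix (Fin n) (Fin n) ℝ) : QuadraticForm ℝ (Euc n) :=
  operatorForm (Matrix.toEuclideanLin M)

/-- The symmetric matrix of a quadratic form in the standard basis. -/
def formMatrix (Q : QuadraticForm ℝ (Euc n)) : Matrix (Fin n) (Fin n) ℝ :=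
  Matrix.of fun i j =>
    QuadraticMap.associated Q (EuclideanSpace.single i 1) (EuclideanSpace.single j 1)

lemma formMatrix_isHermitian (Q : QuadraticForm ℝ (Euc n)) : (formMatrix Q).IsHermitian := by
  ext i j
  exact QuadraticMap.associated_isSymm ℝ Q _ _

/-- The eigenvalues of a quadratic form, in the order chosen by
`Matrix.IsHermitian.eigenvalues`. -/
def eigs (Q : QuadraticForm ℝ (Euc n)) : Fin n → ℝ := (formMatrix_isHermitian Q).eigenvalues

lemma matrixForm_eq_sum (M : Matrix (Fin n) (Fin n) ℝ) (h : Euc n) :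
    matrixForm M h = ∑ i, ∑ j, M i j * h i * h j := by
  simp only [matrixForm, operatorForm_apply, PiLp.inner_apply, Matrix.toLpLin_apply,
    Matrix.mulVec, dotProduct, RCLike.inner_apply, conj_trivial, Finset.mul_sum]
  exact Finset.sum_congr rfl fun i _ => Finset.sum_congr rfl fun j _ => by ring

lemma matrixForm_formMatrix (Q : QuadraticForm ℝ (Euc n)) : matrixForm (formMatrix Q) = Q := by
  ext h
  let b := (EuclideanSpace.basisFun (Fin n) ℝ).toBasis
  rw [matrixForm_eq_sum, ← QuadraticMap.associated_eq_self_apply ℝ Q h,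
    ← LinearMap.sum_repr_mul_repr_mul b b h h]
  simp [b, formMatrix, Finsupp.sum_fintype, mul_comm, mul_left_comm]

lemma formMatrix_matrixForm {M : Matrix (Fin n) (Fin n) ℝ} (hM : M.IsHermitian) :
    formMatrix (matrixForm M) = M := by
  ext i j
  have hij : M j i = M i j := by simpa using congrFun₂ hM i j
  have hentry : ∀ i j, inner ℝ (Matrix.toEuclideanLin M (EuclideanSpace.single i 1))
      (EuclideanSpace.single j 1) = M j i := fun i j => by
    simp [EuclideanSpace.inner_single_right, Matrix.toLpLin_apply]
  simp only [formMatrix, matrixForm, Matrix.of_apply, QuadraticMap.associated_apply,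
    operatorForm_apply, map_add, inner_add_left, inner_add_right, hentry, hij]
  norm_num
  ring

lemma eigs_matrixForm {M : Matrix (Fin n) (Fin n) ℝ} (hM : M.IsHermitian) :
    eigs (matrixForm M) = hM.eigenvalues := by
  simp only [eigs]
  congr!
  exact formMatrix_matrixForm hM

lemma EigIn.eigs_matrixForm_mem {M : Matrix (Fin n) (Fin n) ℝ} {S : Set (Fin n → ℝ)}
    (h : EigIn M S) : eigs (matrixForm M) ∈ S := by
  obtain ⟨hM, hS⟩ := h
  rwa [eigs_matrixForm hM]

/-- An orthonormal basis of eigenvectors for `eigs Q`. -/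
def eigsBasis (Q : QuadraticForm ℝ (Euc n)) : OrthonormalBasis (Fin n) ℝ (Euc n) :=
  (formMatrix_isHermitian Q).eigenvectorBasis

lemma quadraticForm_eq_sum_eigs (Q : QuadraticForm ℝ (Euc n)) (h : Euc n) :
    Q h = ∑ i, eigs Q i * inner ℝ (eigsBasis Q i) h ^ 2 := by
  have hsymm := Matrix.isSymmetric_toEuclideanLin_iff.2 (formMatrix_isHermitian Q)
  conv_lhs => rw [← matrixForm_formMatrix Q, matrixForm, operatorForm_apply,
    ← (eigsBasis Q).sum_inner_mul_inner]
  refine Finset.sum_congr rfl fun i _ => ?_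
  have heigen : Matrix.toEuclideanLin (formMatrix Q) (eigsBasis Q i) =
      eigs Q i • eigsBasis Q i := by
    rw [Matrix.toLpLin_apply, eigsBasis, Matrix.IsHermitian.mulVec_eigenvectorBasis]
    rfl
  rw [hsymm, heigen, inner_smul_right, real_inner_comm h]
  ring

end Eigenvalues

section Weyl

variable {n : ℕ}

lemma exists_equiv_eigs_antitone : ∃ e : Fin n ≃ Fin (Fintype.card (Fin n)),
    ∀ (Q : QuadraticForm ℝ (Euc n)) (i j : Fin n), e i ≤ e j → eigs Q j ≤ eigs Q i :=
  ⟨(Fintype.equivOfCardEq (Fintype.card_fin _)).symm, fun Q _ _ hij =>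
    (formMatrix_isHermitian Q).eigenvalues₀_antitone hij⟩

lemma mul_norm_sq_le_of_inner_eigsBasis_eq_zero {Q : QuadraticForm ℝ (Euc n)} {c : ℝ} {h : Euc n}
    (hh : ∀ j, eigs Q j < c → inner ℝ (eigsBasis Q j) h = 0) : c * ‖h‖ ^ 2 ≤ Q h := by
  rw [quadraticForm_eq_sum_eigs, ← (eigsBasis Q).sum_sq_norm_inner_right h, Finset.mul_sum]
  refine Finset.sum_le_sum fun j _ => ?_
  rw [Real.norm_eq_abs, sq_abs]
  rcases lt_or_ge (eigs Q j) c with hj | hj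
  · simp [hh j hj]
  · gcongr

lemma le_mul_norm_sq_of_inner_eigsBasis_eq_zero {Q : QuadraticForm ℝ (Euc n)} {c : ℝ} {h : Euc n}
    (hh : ∀ j, c < eigs Q j → inner ℝ (eigsBasis Q j) h = 0) : Q h ≤ c * ‖h‖ ^ 2 := by
  rw [quadraticForm_eq_sum_eigs, ← (eigsBasis Q).sum_sq_norm_inner_right h, Finset.mul_sum]
  refine Finset.sum_le_sum fun j _ => ?_
  rw [Real.norm_eq_abs, sq_abs]
  rcases lt_or_ge c (eigs Q j) with hj | hj
  · simp [hh j hj]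
  · gcongr

-- Courant–Fischer: fewer than `n` orthogonality conditions on `h` make the `i`-th eigenvalue of
-- `Q` a lower bound for `Q h` and that of `R` an upper bound for `R (S h)`.
lemma eigs_le_of_forall_le {Q R : QuadraticForm ℝ (Euc n)} (S : Euc n ≃ₗᵢ[ℝ] Euc n) {t c : ℝ}
    (ht : 0 ≤ t) (H : ∀ h, Q h ≤ t * R (S h) + c * ‖h‖ ^ 2) (i : Fin n) :
    eigs Q i ≤ t * eigs R i + c := by
  obtain ⟨e, he⟩ := exists_equiv_eigs_antitone (n := n)
  let T : Euc n →ₗ[ℝ] ({j : Fin n // j ≠ i} → ℝ) := LinearMap.pi fun j =>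
    if e i < e j then innerₗ (Euc n) (eigsBasis Q j)
    else innerₗ (Euc n) (eigsBasis R j) ∘ₗ S.toLinearEquiv.toLinearMap
  have hker : LinearMap.ker T ≠ ⊥ := by
    apply LinearMap.ker_ne_bot_of_finrank_lt
    have hn : 0 < n := Fin.pos i
    simp only [ne_eq, Module.finrank_fintype_fun_eq_card, Fintype.card_subtype_compl,
      Fintype.card_fin, Fintype.card_unique, finrank_euclideanSpace]
    omega
  obtain ⟨h, hT, h0⟩ := Submodule.exists_mem_ne_zero_of_ne_bot hker
  have hT' : ∀ j (hj : j ≠ i), T h ⟨j, hj⟩ = 0 := fun j hj => congrFun hT _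
  have hQ : eigs Q i * ‖h‖ ^ 2 ≤ Q h :=
    mul_norm_sq_le_of_inner_eigsBasis_eq_zero fun j hj => by
      have hij : e i < e j := not_le.1 fun hji => (he Q j i hji).not_gt hj
      simpa [T, hij] using hT' j (by rintro rfl; exact lt_irrefl _ hij)
  have hR : R (S h) ≤ eigs R i * ‖S h‖ ^ 2 :=
    le_mul_norm_sq_of_inner_eigsBasis_eq_zero fun j hj => by
      have hij : ¬ e i < e j := fun hij => (he R i j hij.le).not_gt hj
      simpa [T, hij] using hT' j (by rintro rfl; exact lt_irrefl _ hj)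
  rw [S.norm_map] at hR
  refine le_of_mul_le_mul_right ?_ (by positivity : 0 < ‖h‖ ^ 2)
  calc eigs Q i * ‖h‖ ^ 2 ≤ t * R (S h) + c * ‖h‖ ^ 2 := hQ.trans (H h)
    _ ≤ t * (eigs R i * ‖h‖ ^ 2) + c * ‖h‖ ^ 2 := by gcongr
    _ = (t * eigs R i + c) * ‖h‖ ^ 2 := by ring

lemma eigs_eq_of_isometry {Q R : QuadraticForm ℝ (Euc n)} (S : Euc n ≃ₗᵢ[ℝ] Euc n)
    (H : ∀ h, Q h = R (S h)) : eigs Q = eigs R := by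
  ext i
  apply le_antisymm
  · simpa using eigs_le_of_forall_le S (c := 0) zero_le_one (fun h => by simp [H]) i
  · simpa using eigs_le_of_forall_le S.symm (c := 0) zero_le_one (fun h => by simp [H]) i

lemma eigs_smul {t : ℝ} (ht : 0 < t) (Q : QuadraticForm ℝ (Euc n)) :
    eigs (t • Q) = t • eigs Q := by
  ext i
  apply le_antisymm
  · simpa using eigs_le_of_forall_le (.refl ℝ _) (c := 0) ht.le (fun h => by simp) i
  · have h := eigs_le_of_forall_le (Q := Q) (R := t • Q) (.refl ℝ _) (c := 0)
      (inv_nonneg.2 ht.le) (fun h => by simp [ht.ne']) i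
    rwa [add_zero, le_inv_mul_iff₀ ht] at h

lemma eigs_add_smul_normSqForm (Q : QuadraticForm ℝ (Euc n)) (c : ℝ) (i : Fin n) :
    eigs (Q + c • normSqForm) i = eigs Q i + c := by
  apply le_antisymm
  · simpa using eigs_le_of_forall_le (.refl ℝ _) zero_le_one (fun h => by simp) i
  · have h := eigs_le_of_forall_le (Q := Q) (R := Q + c • normSqForm) (.refl ℝ _) (c := -c)
      zero_le_one (fun h => by simp) i
    linarith

lemma eigs_mem_of_forall_pos_add {S : Set (Fin n → ℝ)} (hS : IsClosed S)
    {Q : QuadraticForm ℝ (Euc n)} (s : ℝ)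
    (H : ∀ η : ℝ, 0 < η → eigs (Q + (s * η) • normSqForm) ∈ S) : eigs Q ∈ S := by
  have hcont : Continuous fun η : ℝ => fun i => eigs Q i + s * η := by fun_prop
  have hlim := (hcont.tendsto 0).mono_left (nhdsWithin_le_nhds (s := Ioi 0))
  simp only [mul_zero, add_zero] at hlim
  refine hS.mem_of_tendsto hlim (eventually_mem_nhdsWithin.mono fun η hη => ?_)
  simpa [funext (eigs_add_smul_normSqForm Q (s * η))] using H η hη

end Weyl

section Cones

variable {n : ℕ} {Γ : Set (Fin n → ℝ)} {a b : Fin n → ℝ} {Q R : QuadraticForm ℝ (Euc n)} {t : ℝ}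

lemma CondC.mem_of_mem_closure_of_lt (hΓ : CondC Γ) (ha : a ∈ closure Γ) (h : ∀ i, a i < b i) :
    b ∈ Γ := by
  obtain ⟨-, -, -, -, -, hadd⟩ := hΓ
  have hU : IsOpen {x : Fin n → ℝ | ∀ i, x i < b i} := by
    simp only [ofPred_forall]
    exact isOpen_iInter_of_finite fun i => isOpen_lt (continuous_apply i) continuous_const
  obtain ⟨x, hx, hxΓ⟩ := mem_closure_iff.1 ha _ hU h
  simpa using hadd x hxΓ (b - x) fun i => sub_pos.2 (hx i)

lemma CondC.mem_closure_of_le (hΓ : CondC Γ) (ha : a ∈ closure Γ) (h : a ≤ b) :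
    b ∈ closure Γ := by
  have hcont : Continuous fun η : ℝ => fun i => b i + η := by fun_prop
  have hlim := (hcont.tendsto 0).mono_left (nhdsWithin_le_nhds (s := Ioi 0))
  simp only [add_zero] at hlim
  refine mem_closure_of_tendsto hlim (eventually_mem_nhdsWithin.mono fun η hη => ?_)
  exact hΓ.mem_of_mem_closure_of_lt ha fun i => (h i).trans_lt (lt_add_of_pos_right _ hη)

lemma CondC.smul_mem_closure (hΓ : CondC Γ) (ha : a ∈ closure Γ) (ht : 0 < t) :
    t • a ∈ closure Γ := by
  obtain ⟨-, -, -, -, hsmul, -⟩ := hΓ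
  exact map_mem_closure (continuous_const_smul t) ha fun x hx => hsmul x hx t ht

lemma CondC.comp_mem_closure (hΓ : CondC Γ) (σ : Equiv.Perm (Fin n)) (ha : a ∈ closure Γ) :
    a ∘ σ ∈ closure Γ := by
  obtain ⟨-, -, -, hsymm, -, -⟩ := hΓ
  have hcont : Continuous fun f : Fin n → ℝ => f ∘ σ := by fun_prop
  exact map_mem_closure (f := fun f : Fin n → ℝ => f ∘ σ) hcont ha (hsymm σ)

lemma CondC.eigs_mem_closure_of_le (hΓ : CondC Γ) (hQ : eigs Q ∈ closure Γ)
    (S : Euc n ≃ₗᵢ[ℝ] Euc n) (ht : 0 < t) (H : ∀ h, t * Q h ≤ R (S h)) :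
    eigs R ∈ closure Γ := by
  refine hΓ.mem_closure_of_le (hΓ.smul_mem_closure hQ ht) fun i => ?_
  rw [← eigs_smul ht]
  simpa using eigs_le_of_forall_le S (c := 0) zero_le_one (fun h => by simpa using H h) i

lemma CondC.eigs_mem_of_add_le (hΓ : CondC Γ) (hQ : eigs Q ∈ closure Γ) (ht : 0 < t) {c : ℝ}
    (hc : 0 < c) (H : ∀ h, t * Q h + c * ‖h‖ ^ 2 ≤ R h) : eigs R ∈ Γ := by
  refine hΓ.mem_of_mem_closure_of_lt (hΓ.smul_mem_closure hQ ht) fun i => ?_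
  have hi := eigs_le_of_forall_le (Q := t • Q) (R := R) (.refl ℝ _) (c := -c) zero_le_one
    (fun h => by simpa [← sub_eq_add_neg] using le_sub_iff_add_le.2 (H h)) i
  rw [eigs_smul ht] at hi
  linarith

end Cones

section AxialForms

variable {n : ℕ} {e : Euc n}

/-- The tuple `(a + b, b, …, b)`, which lists the eigenvalues of `a • e ⊗ e + b • I` for a unit
vector `e`. In particular `λ* = axialTuple n 2 (-1)`. -/
def axialTuple (n : ℕ) (a b : ℝ) : Fin n → ℝ := fun i => if i.val = 0 then a + b else b

lemma lamStar_eq_axialTuple (n : ℕ) : lamStar n = axialTuple n 2 (-1) := by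
  ext i
  simp only [lamStar, axialTuple]
  norm_num

lemma exists_perm_eq_comp_of_map_univ_eq {ι α : Type*} [Fintype ι] {f g : ι → α}
    (h : Finset.univ.val.map f = Finset.univ.val.map g) : ∃ σ : Equiv.Perm ι, f = g ∘ σ := by
  classical
  have hfiber : ∀ c, Nonempty ({i // f i = c} ≃ {i // g i = c}) := fun c => by
    have hcount := congrArg (Multiset.count c) h
    rw [Multiset.count_map, Multiset.count_map] at hcount
    rw [← Fintype.card_eq, Fintype.card_subtype, Fintype.card_subtype]
    simpa [Finset.card, Finset.filter, eq_comm] using hcount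
  refine ⟨Equiv.ofFiberEquiv fun c => (hfiber c).some, funext fun i => ?_⟩
  exact (Equiv.ofFiberEquiv_map (fun c => (hfiber c).some) i).symm

lemma exists_perm_eigs_matrixForm_diagonal (d : Fin n → ℝ) :
    ∃ σ : Equiv.Perm (Fin n), eigs (matrixForm (Matrix.diagonal d)) = d ∘ σ := by
  have hD : (Matrix.diagonal d).IsHermitian := Matrix.isHermitian_diagonal d
  rw [eigs_matrixForm hD]
  apply exists_perm_eq_comp_of_map_univ_eq
  have hroots := hD.roots_charpoly_eq_eigenvalues
  rw [Matrix.charpoly_diagonal, Polynomial.roots_prod _ _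
    (Finset.prod_ne_zero_iff.2 fun i _ => Polynomial.X_sub_C_ne_zero _)] at hroots
  simpa using hroots.symm

lemma exists_isometry_apply_eq_inner (he : ‖e‖ = 1) (i : Fin n) :
    ∃ S : Euc n ≃ₗᵢ[ℝ] Euc n, ∀ h, (S h) i = inner ℝ e h := by
  let e' : Euc n := EuclideanSpace.single i 1
  let S := (ℝ ∙ (e - e'))ᗮ.reflection
  have hS : S e = e' := Submodule.reflection_sub (by simp [e', he])
  refine ⟨S, fun h => ?_⟩
  rw [← S.inner_map_map e h, hS]
  simp [e', EuclideanSpace.inner_single_left]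

lemma exists_perm_eigs_axialForm (he : ‖e‖ = 1) (a b : ℝ) :
    ∃ σ : Equiv.Perm (Fin n), eigs (axialForm e a b) = axialTuple n a b ∘ σ := by
  obtain rfl | n := n
  · simp [Subsingleton.elim e 0] at he
  obtain ⟨S, hS⟩ := exists_isometry_apply_eq_inner he 0
  obtain ⟨σ, hσ⟩ := exists_perm_eigs_matrixForm_diagonal (axialTuple (n + 1) a b)
  refine ⟨σ, (eigs_eq_of_isometry S fun h => ?_).trans hσ⟩
  rw [axialForm_apply, matrixForm_eq_sum, ← S.norm_map h, EuclideanSpace.real_norm_sq_eq, ← hS,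
    Fin.sum_univ_succ, Fin.sum_univ_succ]
  simp only [Matrix.diagonal_apply, axialTuple, Fin.coe_ofNat_eq_mod, Nat.zero_mod, ↓reduceIte,
    ite_mul, zero_mul, mul_assoc, Finset.sum_ite_eq, Finset.mem_univ, ← sq, Fin.val_succ,
    Nat.add_eq_zero_iff, one_ne_zero, and_false, ← Finset.mul_sum]
  ring

variable {Γ : Set (Fin n → ℝ)} {a b : ℝ}

lemma CondC.eigs_axialForm_mem (hΓ : CondC Γ) (he : ‖e‖ = 1) (h : axialTuple n a b ∈ Γ) :
    eigs (axialForm e a b) ∈ Γ := by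
  obtain ⟨σ, hσ⟩ := exists_perm_eigs_axialForm he a b
  obtain ⟨-, -, -, hsymm, -, -⟩ := hΓ
  exact hσ ▸ hsymm σ _ h

lemma CondC.eigs_notMem_closure_of_le_axialForm (hΓ : CondC Γ) (he : ‖e‖ = 1)
    (h : axialTuple n a b ∉ closure Γ) {t : ℝ} (ht : 0 < t) {Q : QuadraticForm ℝ (Euc n)}
    (H : ∀ h, Q h ≤ t * axialForm e a b h) : eigs Q ∉ closure Γ := fun hQ => by
  obtain ⟨σ, hσ⟩ := exists_perm_eigs_axialForm he a b
  have haxial := hΓ.eigs_mem_closure_of_le hQ (.refl ℝ _) (inv_pos.2 ht) (R := axialForm e a b)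
    fun h => (inv_mul_le_iff₀ ht).2 (H h)
  rw [hσ] at haxial
  refine h ?_
  simpa [Function.comp_assoc] using hΓ.comp_mem_closure σ.symm haxial

end AxialForms

section SecondOrderExpansions

open Asymptotics

lemma tendsto_const_add_nhds_zero {E : Type*} [NormedAddCommGroup E] (x : E) :
    Tendsto (x + ·) (𝓝 0) (𝓝 x) := by
  simpa using (continuous_const_add x).tendsto 0

lemma tendsto_sub_const_nhds_zero {E : Type*} [NormedAddCommGroup E] (x : E) :
    Tendsto (· - x) (𝓝 x) (𝓝 0) := by
  simpa using (continuous_sub_right x).tendsto x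

variable {E : Type*} [NormedAddCommGroup E] [InnerProductSpace ℝ E]
  {f g : E → ℝ} {x p p' : E} {Q Q' : QuadraticForm ℝ E} {K : Set E}

/-- `(p, Q)` belongs to the second-order superjet `J^{2,+}` of `f` at `x`: up to `o(‖h‖ ^ 2)`,
`f (x + h)` is at most `f x + ⟪p, h⟫ + Q h / 2`. -/
def HasSuperjet (f : E → ℝ) (x p : E) (Q : QuadraticForm ℝ E) : Prop :=
  ∀ η : ℝ, 0 < η → ∀ᶠ h in 𝓝 (0 : E), f (x + h) ≤ f x + inner ℝ p h + Q h / 2 + η * ‖h‖ ^ 2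

/-- The superjet `J^{2,+}_K` relative to a set `K`, which tests only the points of `K`. -/
def HasSuperjetWithin (f : E → ℝ) (K : Set E) (x p : E) (Q : QuadraticForm ℝ E) : Prop :=
  ∀ η : ℝ, 0 < η → ∀ᶠ h in 𝓝 (0 : E), x + h ∈ K →
    f (x + h) ≤ f x + inner ℝ p h + Q h / 2 + η * ‖h‖ ^ 2

/-- The second-order Taylor expansion of `f` at `x`, with gradient `p` and Hessian form `Q`. -/
def HasTaylorTwo (f : E → ℝ) (x p : E) (Q : QuadraticForm ℝ E) : Prop :=
  (fun h => f (x + h) - f x - inner ℝ p h - Q h / 2) =o[𝓝 0] fun h => ‖h‖ ^ 2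

lemma HasTaylorTwo.hasSuperjet (h : HasTaylorTwo f x p Q) : HasSuperjet f x p Q := by
  intro η hη
  filter_upwards [h.def hη] with k hk
  rw [Real.norm_eq_abs, Real.norm_of_nonneg (by positivity)] at hk
  linarith [(abs_le.1 hk).2]

lemma HasTaylorTwo.neg (h : HasTaylorTwo f x p Q) : HasTaylorTwo (fun y => -f y) x (-p) (-Q) := by
  refine (IsLittleO.neg_left h).congr_left fun k => ?_
  simp only [neg_sub, sub_neg_eq_add, inner_neg_left, neg_apply]
  ring

lemma HasSuperjetWithin.hasSuperjet (h : HasSuperjetWithin f K x p Q) (hK : K ∈ 𝓝 x) :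
    HasSuperjet f x p Q := fun η hη => by
  filter_upwards [h η hη, tendsto_const_add_nhds_zero x hK] with k hk hkK using hk hkK

lemma HasSuperjet.of_isLocalMax_sub (hg : HasSuperjet g x p Q)
    (H : IsLocalMax (fun y => f y - g y) x) : HasSuperjet f x p Q := fun η hη => by
  filter_upwards [hg η hη, (tendsto_const_add_nhds_zero x).eventually H] with h h1 h2
  linarith

lemma HasSuperjet.add (hf : HasSuperjet f x p Q) (hg : HasSuperjet g x p' Q') :
    HasSuperjet (fun y => f y + g y) x (p + p') (Q + Q') := fun η hη => by
  filter_upwards [hf (η / 2) (half_pos hη), hg (η / 2) (half_pos hη)] with h h1 h2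
  simp only [inner_add_left, add_apply]
  linarith

lemma hasDerivAt_taylorRemainder_line {q h : E} {c t : ℝ}
    (hg : HasFDerivAt g (innerSL ℝ q) (x + t • h)) :
    HasDerivAt (fun t : ℝ => g (x + t • h) - t * inner ℝ p h - t ^ 2 / 2 * c)
      (inner ℝ q h - inner ℝ p h - t * c) t := by
  have hline : HasDerivAt (fun t : ℝ => x + t • h) h t := by
    simpa using ((hasDerivAt_id t).smul_const h).const_add x
  have hlin := (hasDerivAt_id t).mul_const (inner ℝ p h)
  have hquad := ((hasDerivAt_pow 2 t).div_const 2).mul_const c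
  refine (((hg.comp_hasDerivAt t hline).sub hlin).sub hquad).congr_deriv ?_
  simp

lemma hasTaylorTwo_of_hasFDerivAt {P : E → E} {X : E →L[ℝ] E}
    (hg : ∀ᶠ z in 𝓝 x, HasFDerivAt g (innerSL ℝ (P z)) z) (hP : HasFDerivAt P X x) :
    HasTaylorTwo g x (P x) (operatorForm X) := by
  refine IsLittleO.of_bound fun η hη => ?_
  have hP' : ∀ᶠ z in 𝓝 x, ‖P z - P x - X (z - x)‖ ≤ η * ‖z - x‖ := hP.isLittleO.def hη
  obtain ⟨r, hr, hball⟩ := Metric.eventually_nhds_iff_ball.1 (hg.and hP')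
  filter_upwards [Metric.ball_mem_nhds (0 : E) hr] with h hh
  have hmem : ∀ t ∈ Icc (0 : ℝ) 1, x + t • h ∈ ball x r := fun t ht => by
    rw [mem_ball, dist_self_add_left, norm_smul, Real.norm_of_nonneg ht.1]
    exact (mul_le_of_le_one_left (norm_nonneg h) ht.2).trans_lt (mem_ball_zero_iff.1 hh)
  have hderiv := fun t ht => (hasDerivAt_taylorRemainder_line (p := P x) (c := inner ℝ (X h) h)
    (hball _ (hmem t ht)).1).hasDerivWithinAt (s := Icc 0 1)
  have hbound : ∀ t ∈ Ico (0 : ℝ) 1,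
      ‖inner ℝ (P (x + t • h)) h - inner ℝ (P x) h - t * inner ℝ (X h) h‖ ≤ η * ‖h‖ ^ 2 :=
    fun t ht => by
      have hPt := (hball _ (hmem t ⟨ht.1, ht.2.le⟩)).2
      simp only [add_sub_cancel_left, map_smul, norm_smul, Real.norm_of_nonneg ht.1] at hPt
      calc ‖inner ℝ (P (x + t • h)) h - inner ℝ (P x) h - t * inner ℝ (X h) h‖
          = ‖inner ℝ (P (x + t • h) - P x - t • X h) h‖ := by
            simp [inner_sub_left, real_inner_smul_left]
        _ ≤ η * (t * ‖h‖) * ‖h‖ := (norm_inner_le_norm _ _).trans (by gcongr)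
        _ ≤ η * (1 * ‖h‖) * ‖h‖ := by gcongr; exact ht.2.le
        _ = η * ‖h‖ ^ 2 := by ring
  have hmvt := norm_image_sub_le_of_norm_deriv_le_segment_01' hderiv hbound
  rw [Real.norm_of_nonneg (by positivity : 0 ≤ ‖h‖ ^ 2)]
  refine (congrArg norm ?_).trans_le hmvt
  simp only [operatorForm_apply, ContinuousLinearMap.coe_coe, one_smul, zero_smul, add_zero]
  ring

lemma hasTaylorTwo_of_hasDerivAt {G G' : ℝ → ℝ} {t b : ℝ}
    (hG : ∀ᶠ s in 𝓝 t, HasDerivAt G (G' s) s) (hG' : HasDerivAt G' b t) :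
    HasTaylorTwo G t (G' t) (b • normSqForm) := by
  have hform : operatorForm (ContinuousLinearMap.toSpanSingleton ℝ b : ℝ →ₗ[ℝ] ℝ) =
      b • normSqForm := by
    ext s
    simp only [ContinuousLinearMap.toLinearMap_toSpanSingleton, operatorForm_apply,
      LinearMap.toSpanSingleton_apply, smul_eq_mul, RCLike.inner_apply, Real.ringHom_apply,
      smul_apply, normSqForm_apply, Real.norm_eq_abs, sq_abs]
    ring
  rw [← hform]
  refine hasTaylorTwo_of_hasFDerivAt (hG.mono fun s hs => ?_) hG'.hasFDerivAt
  refine hs.hasFDerivAt.congr_fderiv ?_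
  ext
  simp

lemma hasTaylorTwo_exp (t : ℝ) :
    HasTaylorTwo Real.exp t (Real.exp t) (Real.exp t • normSqForm) :=
  hasTaylorTwo_of_hasDerivAt (.of_forall Real.hasDerivAt_exp) (Real.hasDerivAt_exp t)

lemma hasTaylorTwo_log {t : ℝ} (ht : 0 < t) :
    HasTaylorTwo Real.log t t⁻¹ (-(t ^ 2)⁻¹ • normSqForm) :=
  hasTaylorTwo_of_hasDerivAt (G' := fun s => s⁻¹)
    ((lt_mem_nhds ht).mono fun _ hs => Real.hasDerivAt_log hs.ne') (hasDerivAt_inv ht.ne')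

lemma hasTaylorTwo_norm_sub_sq (x₀ x : E) :
    HasTaylorTwo (fun y => ‖y - x₀‖ ^ 2) x ((2 : ℝ) • (x - x₀)) ((2 : ℝ) • normSqForm) := by
  refine (isLittleO_zero _ _).congr_left fun h => ?_
  simp only [add_sub_right_comm, norm_add_sq_real, real_inner_smul_left, smul_apply,
    normSqForm_apply, smul_eq_mul]
  ring

/-- The quadratic polynomial `y ↦ c + ⟪p, y - x⟫ + Q (y - x) / 2`. -/
def quadraticPoly (c : ℝ) (x p : E) (Q : QuadraticForm ℝ E) (y : E) : ℝ :=
  c + inner ℝ p (y - x) + Q (y - x) / 2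

@[simp]
lemma quadraticPoly_self (c : ℝ) (x p : E) (Q : QuadraticForm ℝ E) :
    quadraticPoly c x p Q x = c := by
  simp [quadraticPoly]

lemma quadraticPoly_add (c : ℝ) (x p : E) (Q : QuadraticForm ℝ E) (h : E) :
    quadraticPoly c x p Q (x + h) = c + inner ℝ p h + Q h / 2 := by
  simp [quadraticPoly]

lemma hasTaylorTwo_quadraticPoly (c : ℝ) (x p : E) (Q : QuadraticForm ℝ E) :
    HasTaylorTwo (quadraticPoly c x p Q) x p Q :=
  (isLittleO_zero _ _).congr_left fun h => by
    rw [quadraticPoly_add, quadraticPoly_self]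
    ring

lemma HasSuperjet.eventually_le_quadraticPoly (hf : HasSuperjet f x p Q) {η : ℝ} (hη : 0 < η) :
    ∀ᶠ y in 𝓝 x, f y ≤ quadraticPoly (f x) x p (Q + η • normSqForm) y := by
  filter_upwards [(tendsto_sub_const_nhds_zero x).eventually (hf (η / 2) (half_pos hη))] with y hy
  rw [add_sub_cancel] at hy
  simp only [quadraticPoly, add_apply, smul_apply, normSqForm_apply,
    smul_eq_mul]
  linarith

variable [FiniteDimensional ℝ E]

lemma quadraticForm_isBigO (Q : QuadraticForm ℝ E) (l : Filter E) :
    (fun h => Q h) =O[l] fun h => ‖h‖ ^ 2 := by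
  obtain ⟨C, -, hC⟩ := exists_abs_quadraticForm_le Q
  exact IsBigO.of_bound C (.of_forall fun h => by simpa using hC h)

lemma HasTaylorTwo.sub_inner_isBigO (hf : HasTaylorTwo f x p Q) :
    (fun h => f (x + h) - f x - inner ℝ p h) =O[𝓝 0] fun h => ‖h‖ ^ 2 := by
  refine (hf.isBigO.add ((quadraticForm_isBigO Q _).const_mul_left 2⁻¹)).congr_left fun h => ?_
  ring

lemma HasTaylorTwo.sub_isBigO (hf : HasTaylorTwo f x p Q) :
    (fun h => f (x + h) - f x) =O[𝓝 0] fun h => ‖h‖ := by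
  have hsq : (fun h : E => ‖h‖ ^ 2) =O[𝓝 0] fun h => ‖h‖ :=
    (isLittleO_norm_pow_id one_lt_two).isBigO.norm_right
  simpa using (hf.sub_inner_isBigO.trans hsq).add ((innerSL ℝ p).isBigO_id (𝓝 0)).norm_right

lemma HasTaylorTwo.sub_sq_sub_inner_sq_isLittleO (hf : HasTaylorTwo f x p Q) :
    (fun h => (f (x + h) - f x) ^ 2 - inner ℝ p h ^ 2) =o[𝓝 0] fun h => ‖h‖ ^ 2 := by
  have hzero : Tendsto (fun h : E => ‖h‖) (𝓝 0) (𝓝 0) := tendsto_norm_zero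
  have hsum : (fun h => f (x + h) - f x + inner ℝ p h) =o[𝓝 0] fun _ => (1 : ℝ) := by
    rw [isLittleO_one_iff]
    exact (hf.sub_isBigO.add ((innerSL ℝ p).isBigO_id (𝓝 0)).norm_right).trans_tendsto hzero
  refine (hf.sub_inner_isBigO.mul_isLittleO hsum).congr (fun h => ?_) fun h => mul_one _
  ring

lemma HasTaylorTwo.comp {G : ℝ → ℝ} {a b : ℝ} (hG : HasTaylorTwo G (f x) a (b • normSqForm))
    (hf : HasTaylorTwo f x p Q) :
    HasTaylorTwo (fun y => G (f y)) x (a • p) (a • Q + b • innerSqForm p) := by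
  have hzero : Tendsto (fun h => f (x + h) - f x) (𝓝 0) (𝓝 0) :=
    hf.sub_isBigO.trans_tendsto tendsto_norm_zero
  have hG' := (IsLittleO.comp_tendsto hG hzero).trans_isBigO (hf.sub_isBigO.norm_left.pow 2)
  refine ((hG'.add (hf.const_mul_left a)).add
    (hf.sub_sq_sub_inner_sq_isLittleO.const_mul_left (b / 2))).congr_left fun h => ?_
  simp only [RCLike.inner_apply, Real.ringHom_apply, smul_apply, normSqForm_apply, Real.norm_eq_abs,
    sq_abs, smul_eq_mul, Function.comp_apply, add_sub_cancel, inner_smul_left, add_apply,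
    innerSqForm_apply]
  ring

lemma HasSuperjet.comp {G : ℝ → ℝ} {a b : ℝ} (hG : HasTaylorTwo G (f x) a (b • normSqForm))
    (hf : HasSuperjet f x p Q) {s : Set ℝ} (hs : s ∈ 𝓝 (f x)) (hmono : MonotoneOn G s)
    (hfs : ∀ y, f y ∈ s) :
    HasSuperjet (fun y => G (f y)) x (a • p) (a • Q + b • innerSqForm p) := by
  intro η hη
  let θ := η / (|a| + 1)
  have hθ : a * θ ≤ η := by
    rw [← mul_div_assoc, div_le_iff₀ (by positivity)]
    nlinarith [le_abs_self a]
  let P := quadraticPoly (f x) x p (Q + θ • normSqForm)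
  have hPx : P x = f x := quadraticPoly_self _ _ _ _
  have hP : HasTaylorTwo P x p (Q + θ • normSqForm) := hasTaylorTwo_quadraticPoly _ _ _ _
  have hPs : ∀ᶠ y in 𝓝 x, P y ∈ s := by
    have hcont : Continuous P := by
      have := quadraticForm_continuous (Q + θ • normSqForm)
      unfold P quadraticPoly
      fun_prop
    exact hcont.continuousAt (hPx.symm ▸ hs)
  have htouch : IsLocalMax (fun y => G (f y) - G (P y)) x := by
    filter_upwards [hf.eventually_le_quadraticPoly (show 0 < θ by positivity), hPs] with y hy hys
    rw [hPx, sub_self, sub_nonpos]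
    exact hmono (hfs y) hys hy
  have hjet := (HasTaylorTwo.comp (hPx.symm ▸ hG) hP).hasSuperjet.of_isLocalMax_sub htouch
  filter_upwards [hjet (η / 2) (half_pos hη)] with h hh
  have hsq : a * θ * ‖h‖ ^ 2 ≤ η * ‖h‖ ^ 2 := by gcongr
  simp only [smul_add, add_apply, smul_apply, smul_eq_mul, normSqForm_apply,
    innerSqForm_apply] at hh ⊢
  linarith

end SecondOrderExpansions

section MobiusForms

variable {E : Type*} [NormedAddCommGroup E] [InnerProductSpace ℝ E]

/-- The quadratic form `Z + p ⊗ p - |p|² I / 2`. The Möbius Hessian of `v` is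
`e ^ (-2 * v) • mobiusForm (∇v) (-∇²v)`, so `p` stands for a gradient and `Z` for minus a
Hessian. -/
def mobiusForm (p : E) (Z : QuadraticForm ℝ E) : QuadraticForm ℝ E :=
  Z + innerSqForm p - (‖p‖ ^ 2 / 2) • normSqForm

@[simp]
lemma mobiusForm_apply (p : E) (Z : QuadraticForm ℝ E) (h : E) :
    mobiusForm p Z h = Z h + inner ℝ p h ^ 2 - ‖p‖ ^ 2 / 2 * ‖h‖ ^ 2 := by
  simp [mobiusForm]

lemma hasFDerivAt_quadraticPoly {Q : QuadraticForm ℝ E} {L : E →L[ℝ] E}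
    (hL : ∀ x k, Q (x + k) = Q x + 2 * inner ℝ (L x) k + Q k) {C : ℝ}
    (hC : ∀ h, |Q h| ≤ C * ‖h‖ ^ 2) (c : ℝ) (x₀ p x : E) :
    HasFDerivAt (quadraticPoly c x₀ p Q) (innerSL ℝ (p + L (x - x₀))) x := by
  rw [hasFDerivAt_iff_isLittleO_nhds_zero]
  have hQ : (fun h => Q h / 2) =O[𝓝 0] fun h : E => ‖h‖ ^ 2 :=
    .of_bound (C / 2) (.of_forall fun h => by
      rw [norm_div, Real.norm_eq_abs, Real.norm_of_nonneg (by positivity : 0 ≤ ‖h‖ ^ 2)]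
      norm_num
      linarith [hC h])
  refine (hQ.trans_isLittleO (Asymptotics.isLittleO_norm_pow_id one_lt_two)).congr_left
    fun h => ?_
  simp only [quadraticPoly, add_sub_right_comm x h x₀, hL, innerSL_apply_apply, inner_add_left,
    inner_add_right]
  ring

end MobiusForms

section TestFunctions

variable {n : ℕ}

lemma contDiff_quadraticPoly (c : ℝ) (x₀ p : Euc n) (Q : QuadraticForm ℝ (Euc n)) :
    ContDiff ℝ 2 (quadraticPoly c x₀ p Q) := by
  have hQ : ContDiff ℝ 2 fun y => (QuadraticMap.associated Q).toContinuousBilinearMap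
      (y - x₀) (y - x₀) := by fun_prop
  have hQ' : ContDiff ℝ 2 fun y => Q (y - x₀) := by
    convert hQ using 2 with y
    exact (QuadraticMap.associated_eq_self_apply ℝ Q _).symm
  have hp : ContDiff ℝ 2 fun y => inner ℝ p (y - x₀) :=
    contDiff_const.inner ℝ (contDiff_id.sub contDiff_const)
  exact (contDiff_const.add hp).add (hQ'.div_const 2)

lemma pgrad_quadraticPoly_self (c : ℝ) (x₀ p : Euc n) (Q : QuadraticForm ℝ (Euc n)) (i : Fin n) :
    pgrad (quadraticPoly c x₀ p Q) x₀ i = p i := by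
  obtain ⟨L, hL⟩ := exists_gradient_quadraticForm Q
  obtain ⟨C, -, hC⟩ := exists_abs_quadraticForm_le Q
  rw [pgrad, (hasFDerivAt_quadraticPoly hL hC c x₀ p x₀).fderiv]
  simp [EuclideanSpace.inner_single_right]

lemma phess_quadraticPoly (c : ℝ) (x₀ p x : Euc n) (Q : QuadraticForm ℝ (Euc n)) (i j : Fin n) :
    phess (quadraticPoly c x₀ p Q) x i j = formMatrix Q i j := by
  obtain ⟨L, hL⟩ := exists_gradient_quadraticForm Q
  obtain ⟨C, -, hC⟩ := exists_abs_quadraticForm_le Q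
  have hassoc : ∀ x k, QuadraticMap.associated Q x k = inner ℝ (L x) k := fun x k => by
    rw [QuadraticMap.associated_apply, hL]
    simp only [Module.End.smul_def, QuadraticMap.half_moduleEnd_apply_eq_half_smul, invOf_eq_inv,
      smul_eq_mul]
    ring
  have hlin : ∀ y, fderiv ℝ (quadraticPoly c x₀ p Q) y (EuclideanSpace.single j 1) =
      inner ℝ p (EuclideanSpace.single j 1) +
        inner ℝ (L (y - x₀)) (EuclideanSpace.single j 1) := fun y => by
    rw [(hasFDerivAt_quadraticPoly hL hC c x₀ p y).fderiv, innerSL_apply_apply, inner_add_left]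
  let e : Euc n := EuclideanSpace.single j 1
  have hderiv : HasFDerivAt (fun y => inner ℝ p e + inner ℝ (L (y - x₀)) e)
      ((innerSL ℝ e).comp L) x := by
    simpa [e, real_inner_comm] using
      (((innerSL ℝ e).comp L).hasFDerivAt.comp x ((hasFDerivAt_id x).sub_const x₀)).const_add
        (inner ℝ p e)
  simp only [phess, hlin]
  rw [hderiv.fderiv]
  simp [formMatrix, hassoc, e, real_inner_comm]

lemma formMatrix_innerSqForm (p : Euc n) (i j : Fin n) :
    formMatrix (innerSqForm p) i j = p i * p j := by
  simp only [formMatrix, QuadraticMap.associated_apply, innerSqForm_apply, inner_add_right,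
    EuclideanSpace.inner_single_right, Real.ringHom_apply, one_mul, Module.End.smul_def,
    QuadraticMap.half_moduleEnd_apply_eq_half_smul, invOf_eq_inv, smul_eq_mul, Matrix.of_apply]
  ring

lemma formMatrix_normSqForm (i j : Fin n) :
    formMatrix (normSqForm : QuadraticForm ℝ (Euc n)) i j = if i = j then 1 else 0 := by
  simp [formMatrix, QuadraticMap.associated_apply, norm_add_sq_real,
    EuclideanSpace.inner_single_right, eq_comm]

lemma mobius_quadraticPoly (c : ℝ) (x₀ p : Euc n) (Q : QuadraticForm ℝ (Euc n)) :
    mobius (quadraticPoly c x₀ p Q) x₀ = formMatrix (Real.exp (-2 * c) • mobiusForm p (-Q)) := by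
  have hlin : formMatrix (Real.exp (-2 * c) • mobiusForm p (-Q)) =
      Real.exp (-2 * c) • (-formMatrix Q + formMatrix (innerSqForm p)
        - (‖p‖ ^ 2 / 2) • formMatrix normSqForm) := by
    ext i j
    simp [formMatrix, mobiusForm]
  ext i j
  simp only [mobius, hlin, Matrix.smul_apply, Matrix.of_apply, Matrix.sub_apply, Matrix.add_apply,
    Matrix.neg_apply, phess_quadraticPoly, pgrad_quadraticPoly_self, quadraticPoly_self,
    formMatrix_innerSqForm, formMatrix_normSqForm, EuclideanSpace.real_norm_sq_eq, smul_eq_mul]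
  ring

lemma EigIn.eigs_mobiusForm_mem {S : Set (Fin n → ℝ)} {c : ℝ} {x₀ p : Euc n}
    {Q : QuadraticForm ℝ (Euc n)} (h : EigIn (mobius (quadraticPoly c x₀ p Q) x₀) S) :
    Real.exp (-2 * c) • eigs (mobiusForm p (-Q)) ∈ S := by
  rw [← eigs_smul (Real.exp_pos _), ← matrixForm_formMatrix (_ • _), ← mobius_quadraticPoly]
  exact h.eigs_matrixForm_mem

end TestFunctions

section JetSolutions

variable {n : ℕ} {Γ : Set (Fin n → ℝ)} {v : Euc n → ℝ}

/-- Viscosity subsolutions of `λ(A[v]) ∈ ∂Γ` in `ℝⁿ`, in terms of second-order superjets. -/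
def JetSubsol (Γ : Set (Fin n → ℝ)) (v : Euc n → ℝ) : Prop :=
  ∀ x p X, HasSuperjet v x p X → eigs (mobiusForm p (-X)) ∉ Γ

/-- At `x`, the function `-ω` is a viscosity supersolution of `λ(A[v]) ∈ ∂Γ`. The sign turns the
subjets of the supersolution into superjets of `ω`, and `ω` is the logarithm of the conformal
factor `e ^ ω`. -/
def LogSupersolAt (Γ : Set (Fin n → ℝ)) (ω : Euc n → ℝ) (x : Euc n) : Prop :=
  ∀ p Z, HasSuperjet ω x p Z → eigs (mobiusForm p Z) ∈ closure Γ

lemma mobiusForm_add_smul_normSqForm (p : Euc n) (Z : QuadraticForm ℝ (Euc n)) (c : ℝ) :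
    mobiusForm p (Z + c • normSqForm) = mobiusForm p Z + c • normSqForm := by
  ext h
  simp only [mobiusForm_apply, add_apply, smul_apply, normSqForm_apply, smul_eq_mul]
  ring

lemma mobiusForm_neg_left (p : Euc n) (Z : QuadraticForm ℝ (Euc n)) :
    mobiusForm (-p) Z = mobiusForm p Z := by
  ext h
  simp

lemma Subsol.jetSubsol (hΓ : CondC Γ) (h : Subsol Γ univ v) : JetSubsol Γ v := by
  intro x p X hX
  obtain ⟨-, -, hopen, -, hsmul, -⟩ := hΓ
  refine eigs_mem_of_forall_pos_add (S := Γᶜ) hopen.isClosed_compl (-1) fun η hη hmem => ?_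
  have htest := h x (mem_univ x) (quadraticPoly (v x) x p (X + η • normSqForm))
    (contDiff_quadraticPoly _ _ _ _) (quadraticPoly_self _ _ _ _)
    (nhdsWithin_univ x ▸ hX.eventually_le_quadraticPoly hη)
  refine htest.eigs_mobiusForm_mem (hsmul _ ?_ _ (Real.exp_pos _))
  have hneg : -(X + η • normSqForm) = -X + (-1 * η) • normSqForm := by
    ext h
    simp only [neg_add_rev, add_apply, neg_apply, smul_apply, normSqForm_apply, smul_eq_mul,
      neg_mul, one_mul]
    ring
  rwa [hneg, mobiusForm_add_smul_normSqForm]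

lemma Supersol.logSupersolAt (hΓ : CondC Γ) (h : Supersol Γ univ v) (x : Euc n) :
    LogSupersolAt Γ (fun y => -v y) x := by
  intro p Z hZ
  refine eigs_mem_of_forall_pos_add isClosed_closure 1 fun η hη => ?_
  have hle : ∀ᶠ y in 𝓝 x, quadraticPoly (v x) x (-p) (-(Z + η • normSqForm)) y ≤ v y := by
    filter_upwards [hZ.eventually_le_quadraticPoly hη] with y hy
    simp only [quadraticPoly, add_apply, smul_apply, normSqForm_apply, smul_eq_mul, inner_neg_left,
      neg_add_rev, neg_apply] at hy ⊢
    linarith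
  have htest := (h x (mem_univ x) _ (contDiff_quadraticPoly _ _ _ _) (quadraticPoly_self _ _ _ _)
    (nhdsWithin_univ x ▸ hle)).eigs_mobiusForm_mem
  have hunscaled := hΓ.smul_mem_closure htest (Real.exp_pos (2 * v x))
  rwa [smul_smul, ← Real.exp_add, neg_mul, add_neg_cancel, Real.exp_zero, one_smul, neg_neg,
    mobiusForm_neg_left, mobiusForm_add_smul_normSqForm, ← one_mul η] at hunscaled

end JetSolutions

section RadialBarriers

variable {E : Type*} [NormedAddCommGroup E] {k S : ℝ} {x₀ x z : E}

/-- The factor `1 - (|y - x₀|² / S) ^ k`. For `k > 0` it is positive inside the sphere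
`|y - x₀|² = S`, for `k < 0` outside. -/
def radialFactor (k S : ℝ) (x₀ y : E) : ℝ := 1 - (‖y - x₀‖ ^ 2 / S) ^ k

lemma continuousAt_radialFactor (hz : z ≠ x₀) (hS : 0 < S) :
    ContinuousAt (radialFactor k S x₀) z := by
  have hd : 0 < ‖z - x₀‖ := norm_pos_iff.2 (sub_ne_zero.2 hz)
  have hbase : ContinuousAt (fun y => ‖y - x₀‖ ^ 2 / S) z := by fun_prop
  exact continuousAt_const.sub (hbase.rpow_const (Or.inl (by positivity)))

lemma radialFactor_le_one (hS : 0 < S) : radialFactor k S x₀ x ≤ 1 := by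
  rw [radialFactor, sub_le_self_iff]
  positivity

/-- The radial barrier `-log (1 - (|y - x₀|² / S) ^ k) / k`, infinite on the sphere
`|y - x₀|² = S`; up to a positive factor, its Möbius Hessian has eigenvalues
`(1 - 2 * k, -1, …, -1)`. -/
def radialBarrier (k S : ℝ) (x₀ y : E) : ℝ := -(1 / k) * Real.log (radialFactor k S x₀ y)

lemma hasTaylorTwo_log_one_sub_rpow {s : ℝ} (hk : k ≠ 0) (hS : 0 < S) (hs : 0 < s)
    (hu : (s / S) ^ k < 1) :
    HasTaylorTwo (fun s => -(1 / k) * Real.log (1 - (s / S) ^ k)) s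
      ((s / S) ^ k / (s * (1 - (s / S) ^ k)))
      (((s / S) ^ k * (k - 1 + (s / S) ^ k) / (s ^ 2 * (1 - (s / S) ^ k) ^ 2)) • normSqForm) := by
  have hpow : ∀ t : ℝ, 0 < t → HasDerivAt (fun t => (t / S) ^ k) (k * (t / S) ^ k / t) t :=
    fun t ht => by
      have hrpow := ((hasDerivAt_id t).div_const S).rpow_const (p := k) (Or.inl (by positivity))
      refine hrpow.congr_deriv ?_
      rw [id, Real.rpow_sub_one (by positivity)]
      field_simp
  have hev : ∀ᶠ t in 𝓝 s, 0 < t ∧ (t / S) ^ k < 1 :=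
    (lt_mem_nhds hs).and ((hpow s hs).continuousAt.eventually (gt_mem_nhds hu))
  refine hasTaylorTwo_of_hasDerivAt (G' := fun s => (s / S) ^ k / (s * (1 - (s / S) ^ k))) ?_ ?_
  · filter_upwards [hev] with t ⟨ht, hut⟩
    have hne : 1 - (t / S) ^ k ≠ 0 := (sub_pos.2 hut).ne'
    refine ((((hpow t ht).const_sub 1).log hne).const_mul (-(1 / k))).congr_deriv ?_
    field_simp
  · have hne : 1 - (s / S) ^ k ≠ 0 := (sub_pos.2 hu).ne'
    refine ((hpow s hs).div ((hasDerivAt_id s).mul ((hpow s hs).const_sub 1))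
      (mul_ne_zero hs.ne' hne)).congr_deriv ?_
    simp only [Pi.mul_apply, id]
    field_simp
    ring

lemma exists_hasTaylorTwo_radialBarrier [InnerProductSpace ℝ E] [FiniteDimensional ℝ E]
    (hx : x ≠ x₀) (hk : k ≠ 0) (hS : 0 < S) (hu : 0 < radialFactor k S x₀ x) :
    ∃ p X, HasTaylorTwo (radialBarrier k S x₀) x p X ∧ ∃ β : ℝ, 0 < β ∧ ∃ e : E,
      ‖e‖ = 1 ∧ mobiusForm p (-X) = β • axialForm e (2 - 2 * k) (-1) := by
  have hd : 0 < ‖x - x₀‖ := norm_pos_iff.2 (sub_ne_zero.2 hx)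
  refine ⟨_, _, HasTaylorTwo.comp (f := fun y => ‖y - x₀‖ ^ 2)
    (hasTaylorTwo_log_one_sub_rpow hk hS (pow_pos hd 2) (sub_pos.1 hu))
    (hasTaylorTwo_norm_sub_sq x₀ x), ?_⟩
  set u := (‖x - x₀‖ ^ 2 / S) ^ k
  have hu0 : 0 < u := by positivity
  have hu1 : 0 < 1 - u := hu
  refine ⟨2 * u / (‖x - x₀‖ ^ 2 * (1 - u) ^ 2), by positivity, ‖x - x₀‖⁻¹ • (x - x₀),
    norm_smul_inv_norm (sub_ne_zero.2 hx), ?_⟩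
  ext h
  simp only [mobiusForm_apply, axialForm_apply, neg_apply, add_apply, smul_apply, smul_eq_mul,
    normSqForm_apply, innerSqForm_apply, real_inner_smul_left, norm_smul, Real.norm_eq_abs,
    mul_pow, sq_abs]
  field_simp
  ring

lemma isLocalMax_sub_of_isLocalMax_exp_mul {X : Type*} [TopologicalSpace X] {f B : X → ℝ} {z : X}
    {c : ℝ} (hc : 0 < c) (hB : ∀ᶠ y in 𝓝 z, 0 < B y)
    (H : IsLocalMax (fun y => Real.exp (c * f y) * B y) z) :
    IsLocalMax (fun y => f y - -(1 / c) * Real.log (B y)) z := by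
  have hlog : ∀ y, 0 < B y →
      c * (f y - -(1 / c) * Real.log (B y)) = Real.log (Real.exp (c * f y) * B y) := fun y hy => by
    rw [Real.log_mul (Real.exp_pos _).ne' hy.ne', Real.log_exp]
    field_simp
    ring
  filter_upwards [H, hB] with y hy hBy
  rw [← mul_le_mul_iff_right₀ hc, hlog y hBy, hlog z hB.self_of_nhds]
  exact Real.log_le_log (mul_pos (Real.exp_pos _) hBy) hy

end RadialBarriers

section RadialComparison

variable {n : ℕ} {Γ : Set (Fin n → ℝ)} {v ω : Euc n → ℝ} {c S : ℝ} {x₀ x z : Euc n}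

lemma JetSubsol.not_isLocalMax_exp_mul_radialFactor (hΓ : CondC Γ) (hv : JetSubsol Γ v)
    (hc : 0 < c) (ht : axialTuple n (2 - 2 * c) (-1) ∈ Γ) (hz : z ≠ x₀) (hS : 0 < S)
    (hpos : 0 < radialFactor c S x₀ z) :
    ¬ IsLocalMax (fun y => Real.exp (c * v y) * radialFactor c S x₀ y) z := fun hmax => by
  obtain ⟨p, X, hX, β, hβ, e, he, hform⟩ :=
    exists_hasTaylorTwo_radialBarrier hz hc.ne' hS hpos
  have htouch := isLocalMax_sub_of_isLocalMax_exp_mul hc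
    ((continuousAt_radialFactor hz hS).eventually (lt_mem_nhds hpos)) hmax
  refine hv z p X (hX.hasSuperjet.of_isLocalMax_sub htouch) ?_
  rw [hform, eigs_smul hβ]
  have haxial := hΓ.eigs_axialForm_mem he ht
  obtain ⟨-, -, -, -, hsmul, -⟩ := hΓ
  exact hsmul _ haxial _ hβ

lemma LogSupersolAt.not_isLocalMax_exp_mul_radialFactor (hΓ : CondC Γ) (hω : LogSupersolAt Γ ω z)
    (hc : 0 < c) (ht : axialTuple n (2 + 2 * c) (-1) ∉ closure Γ) (hz : z ≠ x₀) (hS : 0 < S)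
    (hpos : 0 < radialFactor (-c) S x₀ z) :
    ¬ IsLocalMax (fun y => Real.exp (c * ω y) * radialFactor (-c) S x₀ y) z := fun hmax => by
  obtain ⟨p, X, hX, β, hβ, e, he, hform⟩ :=
    exists_hasTaylorTwo_radialBarrier hz (neg_ne_zero.2 hc.ne') hS hpos
  have htouch : IsLocalMax (fun y => ω y - -radialBarrier (-c) S x₀ y) z := by
    refine (isLocalMax_sub_of_isLocalMax_exp_mul hc
      ((continuousAt_radialFactor hz hS).eventually (lt_mem_nhds hpos)) hmax).congr
        (.of_forall fun y => ?_)
    simp [radialBarrier]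
  refine hΓ.eigs_notMem_closure_of_le_axialForm he ht hβ (fun h => ?_)
    (hω _ _ (hX.neg.hasSuperjet.of_isLocalMax_sub htouch))
  rw [mobiusForm_neg_left, hform]
  simp

lemma JetSubsol.exp_mul_radialFactor_le (hΓ : CondC Γ) (hv : JetSubsol Γ v)
    (hcont : Continuous v) (hc : 0 < c) (ht : axialTuple n (2 - 2 * c) (-1) ∈ Γ) {R : ℝ}
    (hR : 0 < R) (hx : x ∈ closedBall x₀ R) :
    Real.exp (c * v x) * radialFactor c (R ^ 2) x₀ x ≤ Real.exp (c * v x₀) := by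
  let Ψ y := Real.exp (c * v y) * radialFactor c (R ^ 2) x₀ y
  have hΨ : Continuous Ψ := by
    have hpow : Continuous fun y : Euc n => (‖y - x₀‖ ^ 2 / R ^ 2) ^ c :=
      Continuous.rpow_const (by fun_prop) fun _ => Or.inr hc.le
    unfold Ψ radialFactor
    fun_prop
  have hΨ₀ : Ψ x₀ = Real.exp (c * v x₀) := by simp [Ψ, radialFactor, hc.ne']
  obtain ⟨z, hz, hmax⟩ := (isCompact_closedBall x₀ R).exists_isMaxOn
    ⟨x₀, mem_closedBall_self hR.le⟩ hΨ.continuousOn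
  rw [← hΨ₀]
  by_contra! hlt
  have hΨz : Ψ x₀ < Ψ z := hlt.trans_le (hmax hx)
  have hzx₀ : z ≠ x₀ := by
    rintro rfl
    exact lt_irrefl _ hΨz
  have hpos : 0 < radialFactor c (R ^ 2) x₀ z :=
    (mul_pos_iff_of_pos_left (Real.exp_pos _)).1 ((hΨ₀ ▸ Real.exp_pos _).trans hΨz)
  have hzR : z ∈ ball x₀ R := by
    rw [mem_ball_iff_norm]
    by_contra! hRz
    refine hpos.not_ge (sub_nonpos.2 (Real.one_le_rpow ?_ hc.le))
    rw [one_le_div₀ (by positivity)]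
    gcongr
  exact hv.not_isLocalMax_exp_mul_radialFactor hΓ hc ht hzx₀ (by positivity) hpos
    (hmax.isLocalMax (mem_of_superset (isOpen_ball.mem_nhds hzR) ball_subset_closedBall))

lemma exists_pos_axialTuple_mem (hΓ : CondC Γ) (hl : lamStar n ∈ Γ) :
    ∃ c : ℝ, 0 < c ∧ axialTuple n (2 - 2 * c) (-1) ∈ Γ := by
  have hcont : Continuous fun c : ℝ => axialTuple n (2 - 2 * c) (-1) := by
    refine continuous_pi fun i => ?_
    unfold axialTuple
    split_ifs <;> fun_prop
  obtain ⟨-, -, hopen, -, -, -⟩ := hΓ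
  have hev : ∀ᶠ c in 𝓝 (0 : ℝ), axialTuple n (2 - 2 * c) (-1) ∈ Γ :=
    hcont.continuousAt (hopen.mem_nhds (by simpa [← lamStar_eq_axialTuple] using hl))
  exact ((eventually_mem_nhdsWithin.and (hev.filter_mono nhdsWithin_le_nhds)).exists :
    ∃ c : ℝ, c ∈ Ioi 0 ∧ _)

theorem JetSubsol.le_of_lamStar_mem (hΓ : CondC Γ) (hl : lamStar n ∈ Γ) (hv : JetSubsol Γ v)
    (hcont : Continuous v) (x x₀ : Euc n) : v x ≤ v x₀ := by
  obtain ⟨c, hc, ht⟩ := exists_pos_axialTuple_mem hΓ hl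
  have hlim : Tendsto (fun R : ℝ => Real.exp (c * v x) * radialFactor c (R ^ 2) x₀ x) atTop
      (𝓝 (Real.exp (c * v x) * (1 - 0 ^ c))) := by
    have hbase : Tendsto (fun R : ℝ => ‖x - x₀‖ ^ 2 / R ^ 2) atTop (𝓝 0) :=
      tendsto_const_nhds.div_atTop (tendsto_pow_atTop two_ne_zero)
    exact ((hbase.rpow_const (Or.inr hc.le)).const_sub 1).const_mul _
  have hle := le_of_tendsto hlim (b := Real.exp (c * v x₀)) (by
    filter_upwards [eventually_gt_atTop 0, eventually_ge_atTop ‖x - x₀‖] with R hR hxR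
    exact hv.exp_mul_radialFactor_le hΓ hcont hc ht hR (mem_closedBall_iff_norm.2 hxR))
  rw [Real.zero_rpow hc.ne', sub_zero, mul_one, Real.exp_le_exp] at hle
  exact le_of_mul_le_mul_left hle hc

end RadialComparison

section SingularityBound

variable {n : ℕ} {Γ : Set (Fin n → ℝ)} {ω : Euc n → ℝ} {c M r : ℝ} {x : Euc n}

lemma exp_mul_radialFactor_le_of_logSupersolAt (hΓ : CondC Γ) (hω : ∀ z ≠ 0, LogSupersolAt Γ ω z)
    (hcont : ContinuousOn ω {0}ᶜ) (hc : 0 < c) (ht : axialTuple n (2 + 2 * c) (-1) ∉ closure Γ)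
    (hM : ∀ y, ‖y‖ = 1 → ω y ≤ M) (hr : 0 < r) (hrx : r ≤ ‖x‖) (hx : ‖x‖ ≤ 1) :
    Real.exp (c * ω x) * radialFactor (-c) (r ^ 2) 0 x ≤ Real.exp (c * M) := by
  let Ψ y := Real.exp (c * ω y) * radialFactor (-c) (r ^ 2) 0 y
  let K : Set (Euc n) := closedBall 0 1 ∩ {y | r ≤ ‖y‖}
  have hK : IsCompact K :=
    (isCompact_closedBall 0 1).inter_right (isClosed_le continuous_const continuous_norm)
  have hK₀ : ∀ y ∈ K, y ≠ 0 := fun y hy => norm_pos_iff.1 (hr.trans_le hy.2)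
  have hΨ : ContinuousOn Ψ K := fun y hy =>
    ((Real.continuous_exp.comp_continuousOn (hcont.const_mul c)) |>.mono hK₀ y hy).mul
      (continuousAt_radialFactor (hK₀ y hy) (by positivity)).continuousWithinAt
  obtain ⟨z, hz, hmax⟩ := hK.exists_isMaxOn ⟨x, mem_closedBall_zero_iff.2 hx, hrx⟩ hΨ
  by_contra! hlt
  have hMz : Real.exp (c * M) < Ψ z := hlt.trans_le (hmax ⟨mem_closedBall_zero_iff.2 hx, hrx⟩)
  have hpos : 0 < radialFactor (-c) (r ^ 2) 0 z :=
    (mul_pos_iff_of_pos_left (Real.exp_pos _)).1 ((Real.exp_pos _).trans hMz)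
  have hz1 : ‖z‖ < 1 := by
    refine (mem_closedBall_zero_iff.1 hz.1).lt_of_ne fun hz1 => hMz.not_ge ?_
    calc Ψ z ≤ Real.exp (c * ω z) * 1 :=
          mul_le_mul_of_nonneg_left (radialFactor_le_one (by positivity)) (Real.exp_pos _).le
      _ ≤ Real.exp (c * M) := by
          rw [mul_one]
          gcongr
          exact hM z hz1
  have hrz : r < ‖z‖ := by
    refine hz.2.lt_of_ne fun hrz => hpos.ne' ?_
    rw [radialFactor, sub_zero, ← hrz, div_self (by positivity), Real.one_rpow, sub_self]
  refine (hω z (hK₀ z hz)).not_isLocalMax_exp_mul_radialFactor hΓ hc ht (hK₀ z hz) (by positivity)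
    hpos (hmax.isLocalMax ?_)
  filter_upwards [continuous_norm.continuousAt.eventually (gt_mem_nhds hz1),
    continuous_norm.continuousAt.eventually (lt_mem_nhds hrz)] with y hy1 hry
  exact ⟨mem_closedBall_zero_iff.2 hy1.le, hry.le⟩

theorem le_of_logSupersolAt_of_sphere_le (hΓ : CondC Γ) (hω : ∀ z ≠ 0, LogSupersolAt Γ ω z)
    (hcont : ContinuousOn ω {0}ᶜ) (hc : 0 < c) (ht : axialTuple n (2 + 2 * c) (-1) ∉ closure Γ)
    (hM : ∀ y, ‖y‖ = 1 → ω y ≤ M) (hx₀ : x ≠ 0) (hx : ‖x‖ ≤ 1) : ω x ≤ M := by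
  have hlim : Tendsto (fun r : ℝ => Real.exp (c * ω x) * radialFactor (-c) (r ^ 2) 0 x) (𝓝[>] 0)
      (𝓝 (Real.exp (c * ω x) * (1 - 0 ^ c))) := by
    have hcont : Continuous fun r : ℝ => (r ^ 2 / ‖x - 0‖ ^ 2) ^ c :=
      Continuous.rpow_const (by fun_prop) fun _ => Or.inr hc.le
    have hzero : Tendsto (fun r : ℝ => (r ^ 2 / ‖x - 0‖ ^ 2) ^ c) (𝓝[>] 0) (𝓝 (0 ^ c)) := by
      simpa using (hcont.tendsto 0).mono_left nhdsWithin_le_nhds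
    refine ((hzero.const_sub 1).congr fun r => ?_).const_mul _
    rw [radialFactor, Real.rpow_neg (by positivity), ← Real.inv_rpow (by positivity), inv_div]
  have hle := le_of_tendsto hlim (b := Real.exp (c * M)) (by
    filter_upwards [Ioo_mem_nhdsGT (norm_pos_iff.2 hx₀)] with r hr
    exact exp_mul_radialFactor_le_of_logSupersolAt hΓ hω hcont hc ht hM hr.1 hr.2.le hx)
  rw [Real.zero_rpow hc.ne', sub_zero, mul_one, Real.exp_le_exp] at hle
  exact le_of_mul_le_mul_left hle hc

end SingularityBound

section SupConvolution

lemma exists_forall_le_of_quadratic_le {E : Type*} [NormedAddCommGroup E] [ProperSpace E]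
    {f : E → ℝ} (hf : Continuous f) {a b c : ℝ} (ha : 0 < a)
    (h : ∀ z, a * ‖z‖ ^ 2 - b * ‖z‖ - c ≤ f z) : ∃ z, ∀ z', f z ≤ f z' := by
  have hpoly : Tendsto (fun t : ℝ => t * (a * t - b) + -c) atTop atTop :=
    tendsto_atTop_add_const_right _ _ <| tendsto_id.atTop_mul_atTop₀ <|
      tendsto_atTop_add_const_right _ _ (tendsto_id.const_mul_atTop ha)
  refine hf.exists_forall_le (tendsto_atTop_mono (fun z => ?_)
    (hpoly.comp (tendsto_norm_cocompact_atTop (E := E))))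
  rw [Function.comp_apply]
  linarith [h z]

/-- `f` is the sup-convolution `z ↦ max_{x ∈ K} (u x - κ / 2 * |x - z| ^ 2)` of `u`. As a relation,
it records that the maximum is attained. -/
def IsSupConv {E : Type*} [NormedAddCommGroup E] (κ : ℝ) (K : Set E) (u f : E → ℝ) : Prop :=
  ∀ z, IsGreatest ((fun x => u x - κ / 2 * ‖x - z‖ ^ 2) '' K) (f z)

variable {E : Type*} [NormedAddCommGroup E] {κ : ℝ} {K : Set E} {u f : E → ℝ} {x z : E}

lemma exists_isSupConv (hK : IsCompact K) (hne : K.Nonempty) (hu : UpperSemicontinuousOn u K)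
    (κ : ℝ) : ∃ f, IsSupConv κ K u f := by
  have hmax : ∀ z, ∃ x ∈ K, IsMaxOn (fun x => u x - κ / 2 * ‖x - z‖ ^ 2) K x := fun z => by
    have hcont : ContinuousOn (fun x => -(κ / 2 * ‖x - z‖ ^ 2)) K := by fun_prop
    simpa only [sub_eq_add_neg] using
      (hu.add hcont.upperSemicontinuousOn).exists_isMaxOn hne hK
  choose m hm hmax using hmax
  exact ⟨fun z => u (m z) - κ / 2 * ‖m z - z‖ ^ 2,
    fun z => ⟨mem_image_of_mem _ (hm z), forall_mem_image.2 (hmax z)⟩⟩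

lemma IsSupConv.exists_eq (hf : IsSupConv κ K u f) (z : E) :
    ∃ x ∈ K, f z = u x - κ / 2 * ‖x - z‖ ^ 2 := by
  obtain ⟨x, hx, h⟩ := (hf z).1
  exact ⟨x, hx, h.symm⟩

lemma IsSupConv.sub_sq_le (hf : IsSupConv κ K u f) (hx : x ∈ K) (z : E) :
    u x - κ / 2 * ‖x - z‖ ^ 2 ≤ f z :=
  (hf z).2 (mem_image_of_mem _ hx)

variable [InnerProductSpace ℝ E]

lemma norm_sub_add_sq (x z d : E) :
    ‖x - (z + d)‖ ^ 2 = ‖x - z‖ ^ 2 - 2 * inner ℝ (x - z) d + ‖d‖ ^ 2 := by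
  rw [← sub_sub, norm_sub_sq_real]

lemma eq_zero_of_inner_le_sq {a : E} {C : ℝ} (h : ∀ d, inner ℝ a d ≤ C * ‖d‖ ^ 2) : a = 0 := by
  have hC : 0 < |C| + 1 := by positivity
  have ha := h ((|C| + 1)⁻¹ • a)
  rw [inner_smul_right, norm_smul, mul_pow, Real.norm_eq_abs, sq_abs,
    real_inner_self_eq_norm_sq] at ha
  field_simp at ha
  have hsq : ‖a‖ ^ 2 ≤ 0 := by nlinarith [le_abs_self C, sq_nonneg ‖a‖]
  exact norm_eq_zero.1 (pow_eq_zero_iff two_ne_zero |>.1 (hsq.antisymm (sq_nonneg _)))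

lemma IsSupConv.add_inner_sub_sq_le (hf : IsSupConv κ K u f) (hx : x ∈ K)
    (hxz : f z = u x - κ / 2 * ‖x - z‖ ^ 2) (d : E) :
    f z + inner ℝ (κ • (x - z)) d - κ / 2 * ‖d‖ ^ 2 ≤ f (z + d) := by
  have hd := hf.sub_sq_le hx (z + d)
  rw [norm_sub_add_sq] at hd
  rw [hxz, real_inner_smul_left]
  linarith

lemma IsSupConv.convexOn (hf : IsSupConv κ K u f) :
    ConvexOn ℝ univ fun z => f z + κ / 2 * ‖z‖ ^ 2 := by
  refine ⟨convex_univ, fun y _ z _ a b ha hb hab => ?_⟩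
  obtain ⟨x, hx, hxz⟩ := hf.exists_eq (a • y + b • z)
  have haff : ∀ w, u x - κ / 2 * ‖x - w‖ ^ 2 + κ / 2 * ‖w‖ ^ 2 =
      u x - κ / 2 * ‖x‖ ^ 2 + κ * inner ℝ x w := fun w => by
    rw [norm_sub_sq_real]
    ring
  calc f (a • y + b • z) + κ / 2 * ‖a • y + b • z‖ ^ 2
      = a * (u x - κ / 2 * ‖x‖ ^ 2 + κ * inner ℝ x y) +
          b * (u x - κ / 2 * ‖x‖ ^ 2 + κ * inner ℝ x z) := by
        rw [hxz, haff, inner_add_right, real_inner_smul_right, real_inner_smul_right]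
        linear_combination -(u x - κ / 2 * ‖x‖ ^ 2) * hab
    _ ≤ a * (f y + κ / 2 * ‖y‖ ^ 2) + b * (f z + κ / 2 * ‖z‖ ^ 2) := by
        rw [← haff, ← haff]
        gcongr <;> exact hf.sub_sq_le hx _

lemma IsSupConv.continuous [FiniteDimensional ℝ E] (hf : IsSupConv κ K u f) : Continuous f := by
  have hcont := continuousOn_univ.1 (hf.convexOn.continuousOn isOpen_univ)
  exact (hcont.sub (g := fun z => κ / 2 * ‖z‖ ^ 2) (by fun_prop)).congr fun z =>
    add_sub_cancel_right _ _

lemma IsSupConv.le_sub_sq (hf : IsSupConv κ K u f) (hκ : 0 < κ) {R M : ℝ}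
    (hR : ∀ x ∈ K, ‖x‖ ≤ R) (hM : ∀ x ∈ K, u x ≤ M) (z : E) :
    f z ≤ M - κ / 2 * (‖z‖ ^ 2 - 2 * R * ‖z‖) := by
  obtain ⟨x, hx, hxz⟩ := hf.exists_eq z
  have hsq : ‖z‖ ^ 2 - 2 * R * ‖z‖ ≤ ‖x - z‖ ^ 2 := by
    rw [norm_sub_sq_real]
    nlinarith [real_inner_le_norm x z, mul_le_mul_of_nonneg_right (hR x hx) (norm_nonneg z)]
  rw [hxz]
  gcongr
  exact hM x hx

end SupConvolution

section LasryLions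

variable {E : Type*} [NormedAddCommGroup E] [InnerProductSpace ℝ E]
  {κ C : ℝ} {K : Set E} {u f F g : E → ℝ} {P : E → E} {x z m : E}

/-- `g` is a `C^{1,1}` majorant of `f`, with gradient `P`, which agrees with `f` wherever `f` is
touched from above by a paraboloid of opening `κ`. -/
structure IsLasryLionsMajorant (κ : ℝ) (f g : E → ℝ) (P : E → E) : Prop where
  abs_sub_le : ∀ z d, |g (z + d) - g z - inner ℝ (P z) d| ≤ κ * ‖d‖ ^ 2
  le : ∀ z, f z ≤ g z
  le_of_touch : ∀ z q, (∀ d, f (z + d) ≤ f z + κ * inner ℝ q d + κ / 2 * ‖d‖ ^ 2) → g z ≤ f z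

lemma norm_sub_sq_le_add (a b : E) : ‖a - b‖ ^ 2 ≤ 3 / 2 * ‖a‖ ^ 2 + 3 * ‖b‖ ^ 2 := by
  have hsq := sq_nonneg ‖a + (2 : ℝ) • b‖
  rw [norm_add_sq_real, norm_smul, mul_pow, real_inner_smul_right] at hsq
  norm_num at hsq
  rw [norm_sub_sq_real]
  linarith

lemma add_inner_le_of_convexOn (hconv : ConvexOn ℝ univ F) {p : E}
    (h : ∀ d, F m + inner ℝ p d - C * ‖d‖ ^ 2 ≤ F (m + d)) (d : E) :
    F m + inner ℝ p d ≤ F (m + d) := by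
  have hquot : ∀ t ∈ Ioo (0 : ℝ) 1, F m + inner ℝ p d - t * (C * ‖d‖ ^ 2) ≤ F (m + d) := by
    intro t ht
    have hle := hconv.2 (mem_univ m) (mem_univ (m + d)) (sub_nonneg.2 ht.2.le) ht.1.le
      (sub_add_cancel 1 t)
    have hpt : (1 - t) • m + t • (m + d) = m + t • d := by module
    have hlow := h (t • d)
    rw [real_inner_smul_right, norm_smul, Real.norm_of_nonneg ht.1.le] at hlow
    rw [hpt, smul_eq_mul, smul_eq_mul] at hle
    refine le_of_mul_le_mul_left ?_ ht.1
    linarith [show C * (t * ‖d‖) ^ 2 = t * (t * (C * ‖d‖ ^ 2)) by ring]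
  have hcont : Continuous fun t : ℝ => F m + inner ℝ p d - t * (C * ‖d‖ ^ 2) := by fun_prop
  have hlim := (hcont.tendsto 0).mono_left (nhdsWithin_le_nhds (s := Ioi 0))
  rw [zero_mul, sub_zero] at hlim
  exact le_of_tendsto hlim (by filter_upwards [Ioo_mem_nhdsGT one_pos] with t ht using hquot t ht)

lemma IsSupConv.exists_forall_add_sq_le [FiniteDimensional ℝ E]
    (hF : IsSupConv (2 * κ / 3) K u F) (hne : K.Nonempty) (hκ : 0 < κ) (z : E) :
    ∃ m, ∀ y, F m + κ * ‖z - m‖ ^ 2 ≤ F y + κ * ‖z - y‖ ^ 2 := by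
  obtain ⟨x, hx⟩ := hne
  have hcont := hF.continuous
  refine exists_forall_le_of_quadratic_le (f := fun y => F y + κ * ‖z - y‖ ^ 2) (by fun_prop)
    (a := 2 * κ / 3) (b := 2 * κ / 3 * ‖x‖ + 2 * κ * ‖z‖) (c := κ / 3 * ‖x‖ ^ 2 - u x)
    (by positivity) fun y => ?_
  have hxy : ‖x - y‖ ^ 2 ≤ (‖x‖ + ‖y‖) ^ 2 := by
    gcongr
    exact norm_sub_le _ _
  have hzy : (‖y‖ - ‖z‖) ^ 2 ≤ ‖z - y‖ ^ 2 := by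
    rw [sq_le_sq, abs_norm, norm_sub_rev]
    exact abs_norm_sub_norm_le _ _
  nlinarith [hF.sub_sq_le hx y, mul_le_mul_of_nonneg_left hxy hκ.le,
    mul_le_mul_of_nonneg_left hzy hκ.le, mul_nonneg hκ.le (sq_nonneg ‖z‖)]

lemma add_inner_sub_sq_le_of_forall_add_sq_le
    (hF : ConvexOn ℝ univ fun z => F z + κ / 3 * ‖z‖ ^ 2)
    (hm : ∀ y, F m + κ * ‖z - m‖ ^ 2 ≤ F y + κ * ‖z - y‖ ^ 2) (d : E) :
    F m + 2 * κ * inner ℝ (z - m) d - κ / 3 * ‖d‖ ^ 2 ≤ F (m + d) := by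
  have hslope := add_inner_le_of_convexOn (C := 2 * κ / 3)
    (p := (2 * κ) • (z - m) + (2 * κ / 3) • m) hF (m := m) (fun e => ?_) d
  · rw [norm_add_sq_real, inner_add_left, real_inner_smul_left, real_inner_smul_left] at hslope
    linarith
  · have hme := hm (m + e)
    rw [norm_sub_add_sq] at hme
    rw [norm_add_sq_real, inner_add_left, real_inner_smul_left, real_inner_smul_left]
    linarith

lemma abs_sub_le_of_forall_add_sq_le (hF : ConvexOn ℝ univ fun z => F z + κ / 3 * ‖z‖ ^ 2)
    (hκ : 0 < κ) {d m' : E} (hm : ∀ y, F m + κ * ‖z - m‖ ^ 2 ≤ F y + κ * ‖z - y‖ ^ 2)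
    (hm' : ∀ y, F m' + κ * ‖z + d - m'‖ ^ 2 ≤ F y + κ * ‖z + d - y‖ ^ 2) :
    |F m' + κ * ‖z + d - m'‖ ^ 2 - (F m + κ * ‖z - m‖ ^ 2) - inner ℝ ((2 * κ) • (z - m)) d| ≤
      κ * ‖d‖ ^ 2 := by
  rw [real_inner_smul_left, abs_le]
  constructor
  · obtain ⟨r, rfl⟩ : ∃ r, m' = m + (d - r) := ⟨m + d - m', by abel⟩
    have hslope := add_inner_sub_sq_le_of_forall_add_sq_le hF hm (d - r)
    rw [inner_sub_right] at hslope
    rw [show z + d - (m + (d - r)) = z - m + r by abel, norm_add_sq_real]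
    nlinarith [norm_sub_sq_le_add d r, mul_nonneg hκ.le (sq_nonneg ‖d‖)]
  · have hle := hm' m
    rw [add_sub_right_comm z d m, norm_add_sq_real (z - m)] at hle
    linarith

lemma IsSupConv.le_add_sq (hf : IsSupConv κ K u f) (hF : IsSupConv (2 * κ / 3) K u F) (hκ : 0 < κ)
    (z m : E) : f z ≤ F m + κ * ‖z - m‖ ^ 2 := by
  obtain ⟨x, hx, hxz⟩ := hf.exists_eq z
  have hsq := norm_sub_sq_le_add (x - z) (m - z)
  rw [sub_sub_sub_cancel_right, norm_sub_rev m z] at hsq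
  nlinarith [hF.sub_sq_le hx m]

lemma IsSupConv.add_sq_le_of_touch (hf : IsSupConv κ K u f) (hF : IsSupConv (2 * κ / 3) K u F)
    (hκ : 0 < κ) {q : E}
    (hq : ∀ d, f (z + d) ≤ f z + 2 * κ * inner ℝ q d + κ / 2 * ‖d‖ ^ 2) :
    F (z - q) + κ * ‖z - (z - q)‖ ^ 2 ≤ f z := by
  obtain ⟨x, hx, hxz⟩ := hF.exists_eq (z - q)
  obtain ⟨k, rfl⟩ : ∃ k, x = z - q + (3 : ℝ) • k := ⟨(3 : ℝ)⁻¹ • (x - (z - q)), by module⟩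
  have hlow := hf.sub_sq_le hx (z + (k - q))
  have hk := hq (k - q)
  rw [show z - q + (3 : ℝ) • k - (z + (k - q)) = (2 : ℝ) • k by module, norm_smul] at hlow
  rw [inner_sub_right, norm_sub_rev, norm_sub_sq_real, real_inner_self_eq_norm_sq] at hk
  rw [hxz, sub_sub_cancel, add_sub_cancel_left, norm_smul]
  have hqk := mul_nonneg hκ.le (sq_nonneg ‖q - k‖)
  rw [norm_sub_sq_real] at hqk
  norm_num at hlow ⊢
  linarith

theorem IsSupConv.exists_isLasryLionsMajorant [FiniteDimensional ℝ E] (hK : IsCompact K)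
    (hne : K.Nonempty) (hu : UpperSemicontinuousOn u K) (hκ : 0 < κ) (hf : IsSupConv κ K u f) :
    ∃ g P, IsLasryLionsMajorant κ f g P := by
  obtain ⟨F, hF⟩ := exists_isSupConv hK hne hu (2 * κ / 3)
  have hconv : ConvexOn ℝ univ fun z => F z + κ / 3 * ‖z‖ ^ 2 := by
    convert hF.convexOn using 4
    ring
  choose m hm using hF.exists_forall_add_sq_le hne hκ
  refine ⟨fun z => F (m z) + κ * ‖z - m z‖ ^ 2, fun z => (2 * κ) • (z - m z),
    fun z d => abs_sub_le_of_forall_add_sq_le hconv hκ (hm z) (hm (z + d)),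
    fun z => hf.le_add_sq hF hκ z (m z), fun z q hq => ?_⟩
  refine (hm z _).trans (hf.add_sq_le_of_touch hF hκ (q := (1 / 2 : ℝ) • q) fun d => ?_)
  rw [real_inner_smul_left]
  linarith [hq d]

lemma hasFDerivAt_of_abs_sub_le (h : ∀ z d, |g (z + d) - g z - inner ℝ (P z) d| ≤ C * ‖d‖ ^ 2)
    (z : E) : HasFDerivAt g (innerSL ℝ (P z)) z := by
  rw [hasFDerivAt_iff_isLittleO_nhds_zero]
  have hO : (fun d => g (z + d) - g z - innerSL ℝ (P z) d) =O[𝓝 0] fun d => ‖d‖ ^ 2 :=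
    .of_bound C (.of_forall fun d => by simpa using h z d)
  exact hO.trans_isLittleO (Asymptotics.isLittleO_norm_pow_id one_lt_two)

lemma norm_gradient_sub_le_of_abs_sub_le (hC : 0 < C)
    (h : ∀ z d, |g (z + d) - g z - inner ℝ (P z) d| ≤ C * ‖d‖ ^ 2) (z d : E) :
    ‖P (z + d) - P z‖ ≤ 6 * C * ‖d‖ := by
  set Δ := P (z + d) - P z with hΔ
  have hinner : ∀ e, inner ℝ Δ e ≤ C * (‖d + e‖ ^ 2 + ‖d‖ ^ 2 + ‖e‖ ^ 2) := fun e => by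
    have hde := (abs_le.1 (h z (d + e))).2
    rw [← add_assoc, inner_add_right] at hde
    rw [hΔ, inner_sub_left]
    linarith [(abs_le.1 (h z d)).1, (abs_le.1 (h (z + d) e)).1]
  have hle := hinner ((6 * C)⁻¹ • Δ)
  have hsum : ‖d + (6 * C)⁻¹ • Δ‖ ^ 2 ≤ 2 * (‖d‖ ^ 2 + ‖(6 * C)⁻¹ • Δ‖ ^ 2) := by
    linarith [parallelogram_law_with_norm ℝ d ((6 * C)⁻¹ • Δ),
      sq_nonneg ‖d - (6 * C)⁻¹ • Δ‖]
  have hΔsq : ‖(6 * C)⁻¹ • Δ‖ ^ 2 = ((6 * C)⁻¹) ^ 2 * ‖Δ‖ ^ 2 := by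
    rw [norm_smul, mul_pow, Real.norm_eq_abs, sq_abs]
  rw [real_inner_smul_right, real_inner_self_eq_norm_sq] at hle
  rw [hΔsq] at hle hsum
  have hsq : ‖Δ‖ ^ 2 ≤ (6 * C * ‖d‖) ^ 2 := by
    have hlin := hle.trans (mul_le_mul_of_nonneg_left
      (add_le_add_left (add_le_add_left hsum _) _) hC.le)
    field_simp at hlin
    nlinarith
  exact (abs_le_of_sq_le_sq' hsq (by positivity)).2

lemma IsLasryLionsMajorant.gradient_eq (hg : IsLasryLionsMajorant κ f g P) {p : E}
    (hp : ∀ d, f z + inner ℝ p d - κ / 2 * ‖d‖ ^ 2 ≤ f (z + d)) (hgf : g z ≤ f z) : P z = p := by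
  refine (sub_eq_zero.1 (eq_zero_of_inner_le_sq (C := 3 / 2 * κ) fun d => ?_)).symm
  rw [inner_sub_left]
  linarith [hp d, (abs_le.1 (hg.abs_sub_le z d)).2, hg.le (z + d)]

lemma IsSupConv.hasSuperjetWithin (hf : IsSupConv κ K u f) (hg : IsLasryLionsMajorant κ f g P)
    (hxz : f z = u x - κ / 2 * ‖x - z‖ ^ 2) (hgf : g z ≤ f z) {X : E →L[ℝ] E}
    (hX : HasFDerivAt P X z) : HasSuperjetWithin u K x (P z) (operatorForm X) := fun η hη => by
  have htaylor := hasTaylorTwo_of_hasFDerivAt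
    (.of_forall (hasFDerivAt_of_abs_sub_le hg.abs_sub_le)) hX
  filter_upwards [htaylor.hasSuperjet η hη] with h hh hK
  have hlow := hf.sub_sq_le hK (z + h)
  rw [add_sub_add_right_eq_sub] at hlow
  linarith [hg.le (z + h)]

end LasryLions

section Density

variable {E : Type*} [NormedAddCommGroup E] [InnerProductSpace ℝ E] {S : Set E} {z h : E}

lemma inner_apply_nonpos_of_mem_tangentConeAt {Q : E → E} {D : E →L[ℝ] E}
    (hD : HasFDerivAt Q D z) (hQ : ∀ z' ∈ S, inner ℝ (Q z' - Q z) (z' - z) ≤ 0)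
    (hh : h ∈ tangentConeAt ℝ S z) : inner ℝ (D h) h ≤ 0 := by
  obtain ⟨_, l, _, c, d, hd, hdS, hcd⟩ := exists_fun_of_mem_tangentConeAt hh
  refine le_of_tendsto ((hD.hasFDerivWithinAt.lim hd hdS hcd).inner hcd) ?_
  filter_upwards [hdS] with i hi
  have hle := hQ _ hi
  rw [add_sub_cancel_left] at hle
  rw [real_inner_smul_left, real_inner_smul_right, ← mul_assoc]
  exact mul_nonpos_of_nonneg_of_nonpos (mul_self_nonneg _) hle

section Measure

variable [FiniteDimensional ℝ E] [MeasurableSpace E] [BorelSpace E] {μ : Measure E}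

lemma mem_tangentConeAt_of_density_one [μ.IsAddHaarMeasure]
    (hS : Tendsto (fun r => μ (S ∩ closedBall z r) / μ (closedBall z r)) (𝓝[>] 0) (𝓝 1)) (h : E) :
    h ∈ tangentConeAt ℝ S z := by
  rw [nhds_basis_ball.tangentConeAt_eq_biInter_closure]
  refine mem_iInter₂.2 fun ρ hρ => Metric.mem_closure_iff.2 fun ε hε => ?_
  have hdense := Measure.eventually_nonempty_inter_smul_of_density_one μ S z hS (ball h ε)
    measurableSet_ball (measure_ball_pos μ h hε).ne'
  have hsmall : ∀ᶠ s : ℝ in 𝓝[>] 0, s * (‖h‖ + ε) < ρ := by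
    have hlim : Tendsto (fun s : ℝ => s * (‖h‖ + ε)) (𝓝[>] 0) (𝓝 (0 * (‖h‖ + ε))) :=
      (tendsto_id.mul_const _).mono_left nhdsWithin_le_nhds
    exact hlim.eventually_lt_const (by rwa [zero_mul])
  obtain ⟨s, ⟨⟨_, hzS, _, rfl, _, ⟨k, hk, rfl⟩, rfl⟩, hsρ⟩, hs⟩ :=
    ((hdense.and hsmall).and self_mem_nhdsWithin).exists
  refine ⟨k, ⟨s⁻¹, mem_univ _, s • k, ⟨?_, hzS⟩, inv_smul_smul₀ hs.ne' k⟩, mem_ball'.1 hk⟩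
  have hkh : ‖k‖ ≤ ‖h‖ + ε := by
    linarith [norm_sub_norm_le k h, (dist_eq_norm k h).symm.trans_lt hk]
  rw [mem_ball_zero_iff, norm_smul, Real.norm_of_nonneg hs.le]
  exact (mul_le_mul_of_nonneg_left hkh hs.le).trans_lt hsρ

lemma hausdorffMeasure_ne_zero_of_closedBall_subset_image {C : ℝ≥0} {Q : E → E}
    (hQ : LipschitzWith C Q) {r : ℝ} (hr : 0 < r) (hS : closedBall 0 r ⊆ Q '' S) :
    (μH[Module.finrank ℝ E] : Measure E) S ≠ 0 := fun h0 => by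
  have himage := hQ.hausdorffMeasure_image_le (Nat.cast_nonneg (Module.finrank ℝ E)) S
  rw [h0, mul_zero] at himage
  exact (measure_closedBall_pos _ (0 : E) hr).not_ge ((measure_mono hS).trans himage)

lemma exists_mem_density_one_and_of_ae [IsFiniteMeasureOnCompacts μ] (hS : μ S ≠ 0) {p : E → Prop}
    (hp : ∀ᵐ z ∂μ, p z) : ∃ z ∈ S, p z ∧
      Tendsto (fun r => μ (S ∩ closedBall z r) / μ (closedBall z r)) (𝓝[>] 0) (𝓝 1) := by
  by_contra! hne
  have hae := (ae_restrict_of_ae (s := S) hp).and (Besicovitch.ae_tendsto_measure_inter_div μ S)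
  rw [ae_iff] at hae
  refine hS (measure_mono_null (fun z hz => ?_)
    (le_antisymm ((Measure.le_restrict_apply S _).trans hae.le) zero_le))
  exact ⟨fun h => hne z hz h.1 h.2, hz⟩

end Measure

theorem exists_hasFDerivAt_inner_add_inner_nonpos [FiniteDimensional ℝ E] {C₁ C₂ : ℝ≥0}
    {P₁ P₂ : E → E} (h₁ : LipschitzWith C₁ P₁) (h₂ : LipschitzWith C₂ P₂) {r : ℝ}
    (hr : 0 < r) (hS : closedBall 0 r ⊆ (fun z => P₁ z + P₂ z) '' S)
    (hmono : ∀ z ∈ S, ∀ z' ∈ S, inner ℝ (P₁ z' + P₂ z' - (P₁ z + P₂ z)) (z' - z) ≤ 0) :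
    ∃ z ∈ S, ∃ X Y : E →L[ℝ] E, HasFDerivAt P₁ X z ∧ HasFDerivAt P₂ Y z ∧
      ∀ h, inner ℝ (X h) h + inner ℝ (Y h) h ≤ 0 := by
  borelize E
  obtain ⟨z, hz, ⟨hz₁, hz₂⟩, hdense⟩ := exists_mem_density_one_and_of_ae
    (hausdorffMeasure_ne_zero_of_closedBall_subset_image (h₁.add h₂) hr hS)
    (h₁.ae_differentiableAt.and h₂.ae_differentiableAt)
  refine ⟨z, hz, _, _, hz₁.hasFDerivAt, hz₂.hasFDerivAt, fun h => ?_⟩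
  rw [← inner_add_left]
  exact inner_apply_nonpos_of_mem_tangentConeAt (hz₁.hasFDerivAt.add hz₂.hasFDerivAt)
    (hmono z hz) (mem_tangentConeAt_of_density_one hdense h)

end Density

section TheoremOnSums

variable {E : Type*} [NormedAddCommGroup E] [InnerProductSpace ℝ E]
  {κ r : ℝ} {K : Set E} {u₁ u₂ f₁ f₂ g₁ g₂ : E → ℝ} {P₁ P₂ : E → E} {x y z q : E}

/-- `q` is a supergradient of `F` at `z`. -/
def IsSupergradientAt (F : E → ℝ) (q z : E) : Prop :=
  ∀ d, F (z + d) ≤ F z + inner ℝ q d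

lemma IsSupergradientAt.inner_sub_le_zero {F : E → ℝ} {q' z' : E} (h : IsSupergradientAt F q z)
    (h' : IsSupergradientAt F q' z') : inner ℝ (q' - q) (z' - z) ≤ 0 := by
  have hz := h (z' - z)
  have hz' := h' (z - z')
  rw [add_sub_cancel] at hz hz'
  rw [← neg_sub z' z, inner_neg_right] at hz'
  rw [inner_sub_left]
  linarith

lemma IsSupConv.exists_isSupergradientAt [FiniteDimensional ℝ E] (hf₁ : IsSupConv κ K u₁ f₁)
    (hf₂ : IsSupConv κ K u₂ f₂) (hK : IsCompact K) (hne : K.Nonempty)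
    (hu₁ : UpperSemicontinuousOn u₁ K) (hu₂ : UpperSemicontinuousOn u₂ K) (hκ : 0 < κ) (q : E) :
    ∃ z, IsSupergradientAt (f₁ + f₂) q z := by
  obtain ⟨R, hR⟩ := hK.isBounded.exists_norm_le
  obtain ⟨m₁, -, hm₁⟩ := hu₁.exists_isMaxOn hne hK
  obtain ⟨m₂, -, hm₂⟩ := hu₂.exists_isMaxOn hne hK
  have hcont₁ := hf₁.continuous
  have hcont₂ := hf₂.continuous
  obtain ⟨z, hz⟩ := exists_forall_le_of_quadratic_le
    (f := fun z => inner ℝ q z - (f₁ z + f₂ z)) (by fun_prop)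
    (a := κ) (b := 2 * R * κ + ‖q‖) (c := u₁ m₁ + u₂ m₂) hκ fun z => by
      linarith [hf₁.le_sub_sq hκ hR hm₁ z, hf₂.le_sub_sq hκ hR hm₂ z,
        neg_le_of_abs_le (abs_real_inner_le_norm q z)]
  refine ⟨z, fun d => ?_⟩
  have hzd := hz (z + d)
  rw [inner_add_right] at hzd
  rw [Pi.add_apply, Pi.add_apply]
  linarith

lemma IsSupConv.smul_add_smul_eq (hf₁ : IsSupConv κ K u₁ f₁) (hf₂ : IsSupConv κ K u₂ f₂)
    (hx : x ∈ K) (hy : y ∈ K) (hxz : f₁ z = u₁ x - κ / 2 * ‖x - z‖ ^ 2)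
    (hyz : f₂ z = u₂ y - κ / 2 * ‖y - z‖ ^ 2) (hq : IsSupergradientAt (f₁ + f₂) q z) :
    κ • (x - z) + κ • (y - z) = q := by
  refine sub_eq_zero.1 (eq_zero_of_inner_le_sq (C := κ) fun d => ?_)
  have hqd := hq d
  rw [Pi.add_apply, Pi.add_apply] at hqd
  rw [inner_sub_left, inner_add_left]
  linarith [hf₁.add_inner_sub_sq_le hx hxz d, hf₂.add_inner_sub_sq_le hy hyz d]

lemma IsSupConv.touch_of_isSupergradientAt (hf₁ : IsSupConv κ K u₁ f₁)
    (hf₂ : IsSupConv κ K u₂ f₂) (hx : x ∈ K) (hy : y ∈ K)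
    (hxz : f₁ z = u₁ x - κ / 2 * ‖x - z‖ ^ 2) (hyz : f₂ z = u₂ y - κ / 2 * ‖y - z‖ ^ 2)
    (hq : IsSupergradientAt (f₁ + f₂) q z) (d : E) :
    f₁ (z + d) ≤ f₁ z + κ * inner ℝ (x - z) d + κ / 2 * ‖d‖ ^ 2 := by
  have hqd := hq d
  rw [Pi.add_apply, Pi.add_apply, ← hf₁.smul_add_smul_eq hf₂ hx hy hxz hyz hq, inner_add_left,
    real_inner_smul_left (x - z)] at hqd
  linarith [hf₂.add_inner_sub_sq_le hy hyz d]

/-- The function of three variables whose maximum the theorem on sums locates: the two functions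
are doubled through a common pivot `z`, and tilted by the linear form `q`. -/
def doubled (κ : ℝ) (u₁ u₂ : E → ℝ) (q x y z : E) : ℝ :=
  u₁ x - κ / 2 * ‖x - z‖ ^ 2 + (u₂ y - κ / 2 * ‖y - z‖ ^ 2) - inner ℝ q z

lemma IsSupConv.doubled_le (hf₁ : IsSupConv κ K u₁ f₁) (hf₂ : IsSupConv κ K u₂ f₂)
    (hxz : f₁ z = u₁ x - κ / 2 * ‖x - z‖ ^ 2) (hyz : f₂ z = u₂ y - κ / 2 * ‖y - z‖ ^ 2)
    (hq : IsSupergradientAt (f₁ + f₂) q z) {x' y' : E} (hx' : x' ∈ K) (hy' : y' ∈ K) (z' : E) :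
    doubled κ u₁ u₂ q x' y' z' ≤ doubled κ u₁ u₂ q x y z := by
  have hqz := hq (z' - z)
  rw [Pi.add_apply, Pi.add_apply, add_sub_cancel, inner_sub_right] at hqz
  rw [doubled, doubled, ← hxz, ← hyz]
  linarith [hf₁.sub_sq_le hx' z', hf₂.sub_sq_le hy' z']

lemma IsLasryLionsMajorant.lipschitzWith (hg : IsLasryLionsMajorant κ f₁ g₁ P₁) (hκ : 0 < κ) :
    LipschitzWith (Real.toNNReal (6 * κ)) P₁ := by
  refine LipschitzWith.of_dist_le_mul fun z' z => ?_
  rw [dist_eq_norm, dist_eq_norm, Real.coe_toNNReal _ (by positivity)]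
  simpa only [add_sub_cancel] using
    norm_gradient_sub_le_of_abs_sub_le hκ hg.abs_sub_le z (z' - z)

lemma IsSupConv.gradient_eq (hf₁ : IsSupConv κ K u₁ f₁) (hf₂ : IsSupConv κ K u₂ f₂)
    (hg₁ : IsLasryLionsMajorant κ f₁ g₁ P₁) (hx : x ∈ K) (hy : y ∈ K)
    (hxz : f₁ z = u₁ x - κ / 2 * ‖x - z‖ ^ 2) (hyz : f₂ z = u₂ y - κ / 2 * ‖y - z‖ ^ 2)
    (hq : IsSupergradientAt (f₁ + f₂) q z) : g₁ z ≤ f₁ z ∧ P₁ z = κ • (x - z) := by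
  have hgf := hg₁.le_of_touch z _ (hf₁.touch_of_isSupergradientAt hf₂ hx hy hxz hyz hq)
  exact ⟨hgf, hg₁.gradient_eq (hf₁.add_inner_sub_sq_le hx hxz) hgf⟩

theorem exists_isMax_doubled_hasSuperjetWithin [FiniteDimensional ℝ E] (hK : IsCompact K)
    (hne : K.Nonempty) (hu₁ : UpperSemicontinuousOn u₁ K) (hu₂ : UpperSemicontinuousOn u₂ K)
    (hκ : 0 < κ) (hr : 0 < r) :
    ∃ x ∈ K, ∃ y ∈ K, ∃ z q : E, ∃ X Y : QuadraticForm ℝ E,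
      ‖q‖ ≤ r ∧ κ • (x - z) + κ • (y - z) = q ∧ (∀ h, X h + Y h ≤ 0) ∧
      HasSuperjetWithin u₁ K x (κ • (x - z)) X ∧ HasSuperjetWithin u₂ K y (κ • (y - z)) Y ∧
      ∀ x' ∈ K, ∀ y' ∈ K, ∀ z', doubled κ u₁ u₂ q x' y' z' ≤ doubled κ u₁ u₂ q x y z := by
  obtain ⟨f₁, hf₁⟩ := exists_isSupConv hK hne hu₁ κ
  obtain ⟨f₂, hf₂⟩ := exists_isSupConv hK hne hu₂ κ
  obtain ⟨g₁, P₁, hg₁⟩ := hf₁.exists_isLasryLionsMajorant hK hne hu₁ hκ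
  obtain ⟨g₂, P₂, hg₂⟩ := hf₂.exists_isLasryLionsMajorant hK hne hu₂ hκ
  have hP : ∀ q z, IsSupergradientAt (f₁ + f₂) q z → P₁ z + P₂ z = q := fun q z hq => by
    obtain ⟨x, hx, hxz⟩ := hf₁.exists_eq z
    obtain ⟨y, hy, hyz⟩ := hf₂.exists_eq z
    rw [(hf₁.gradient_eq hf₂ hg₁ hx hy hxz hyz hq).2,
      (hf₂.gradient_eq hf₁ hg₂ hy hx hyz hxz (add_comm f₁ f₂ ▸ hq)).2,
      hf₁.smul_add_smul_eq hf₂ hx hy hxz hyz hq]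
  obtain ⟨z, ⟨q, hqr, hq⟩, X, Y, hX, hY, hXY⟩ := exists_hasFDerivAt_inner_add_inner_nonpos
    (S := {z | ∃ q, ‖q‖ ≤ r ∧ IsSupergradientAt (f₁ + f₂) q z})
    (hg₁.lipschitzWith hκ) (hg₂.lipschitzWith hκ) hr
    (fun q hq => by
      obtain ⟨z, hz⟩ := hf₁.exists_isSupergradientAt hf₂ hK hne hu₁ hu₂ hκ q
      exact ⟨z, ⟨q, mem_closedBall_zero_iff.1 hq, hz⟩, hP q z hz⟩)
    (by
      rintro z ⟨q, -, hq⟩ z' ⟨q', -, hq'⟩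
      rw [hP q z hq, hP q' z' hq']
      exact hq.inner_sub_le_zero hq')
  obtain ⟨x, hx, hxz⟩ := hf₁.exists_eq z
  obtain ⟨y, hy, hyz⟩ := hf₂.exists_eq z
  obtain ⟨hgf₁, hP₁⟩ := hf₁.gradient_eq hf₂ hg₁ hx hy hxz hyz hq
  obtain ⟨hgf₂, hP₂⟩ := hf₂.gradient_eq hf₁ hg₂ hy hx hyz hxz (add_comm f₁ f₂ ▸ hq)
  exact ⟨x, hx, y, hy, z, q, operatorForm X, operatorForm Y, hqr,
    hf₁.smul_add_smul_eq hf₂ hx hy hxz hyz hq, by simpa using hXY,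
    hP₁ ▸ hf₁.hasSuperjetWithin hg₁ hxz hgf₁ hX, hP₂ ▸ hf₂.hasSuperjetWithin hg₂ hyz hgf₂ hY,
    fun x' hx' y' hy' z' => hf₁.doubled_le hf₂ hxz hyz hq hx' hy' z'⟩

end TheoremOnSums

section StrictComparison

lemma exists_pos_forall_mem_interior {X : Type*} [PseudoMetricSpace X] {K : Set X} {v u : X → ℝ}
    {a b : ℝ} (hK : IsCompact K) (hv : ContinuousOn v K)
    (hu : UpperSemicontinuousOn u K) (hbd : ∀ y ∈ K \ interior K, v y + u y ≤ a) (hab : a < b) :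
    ∃ τ > 0, ∀ x ∈ K, ∀ y ∈ K, dist x y < τ → b ≤ v x + u y →
      x ∈ interior K ∧ y ∈ interior K ∧ a < v y + u y := by
  obtain ⟨e, hae, heb⟩ := exists_between hab
  have hS : IsCompact (K ∩ (fun y => v y + u y) ⁻¹' Ici e) :=
    (hv.upperSemicontinuousOn.add hu).isCompact_inter_preimage_Ici hK e
  have hSK : K ∩ (fun y => v y + u y) ⁻¹' Ici e ⊆ interior K := fun y hy => by
    by_contra hyK
    exact (hae.trans_le hy.2).not_ge (hbd y ⟨hy.1, hyK⟩)
  obtain ⟨ρ, hρ, hthick⟩ := hS.exists_thickening_subset_open isOpen_interior hSK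
  obtain ⟨ς, hς, hunif⟩ := Metric.uniformContinuousOn_iff.1
    (hK.uniformContinuousOn_of_continuous hv) (b - e) (sub_pos.2 heb)
  refine ⟨min ς ρ, lt_min hς hρ, fun x hx y hy hxy hb => ?_⟩
  rw [lt_min_iff] at hxy
  have hvxy := (abs_lt.1 (hunif x hx y hy hxy.1)).2
  have hey : e ≤ v y + u y := by linarith
  have hyS : y ∈ K ∩ (fun y => v y + u y) ⁻¹' Ici e := ⟨hy, hey⟩
  exact ⟨hthick (mem_thickening_iff.2 ⟨y, hyS, hxy.2⟩), hSK hyS, hae.trans_le hyS.2⟩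

section Doubling

variable {E : Type*} [NormedAddCommGroup E] [InnerProductSpace ℝ E]
  {κ R a c : ℝ} {K : Set E} {v u : E → ℝ} {x y z q x₀ : E}

lemma mobiusForm_sub_le {X Y : QuadraticForm ℝ E} (p q : E) {h : E} (hXY : X h + Y h ≤ 0) :
    mobiusForm (q - p) Y h ≤
      mobiusForm p (-X) h + (‖q‖ ^ 2 + 3 * (‖q‖ * ‖p‖)) * ‖h‖ ^ 2 := by
  have hq := abs_real_inner_le_norm q h
  have hqh : inner ℝ q h ^ 2 ≤ ‖q‖ ^ 2 * ‖h‖ ^ 2 := by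
    rw [← mul_pow, ← sq_abs (inner ℝ q h)]
    gcongr
  have hqp : -(inner ℝ q h * inner ℝ p h) ≤ ‖q‖ * ‖p‖ * ‖h‖ ^ 2 :=
    calc -(inner ℝ q h * inner ℝ p h) ≤ |inner ℝ q h| * |inner ℝ p h| := by
          rw [← abs_mul]
          exact neg_le_abs _
      _ ≤ ‖q‖ * ‖h‖ * (‖p‖ * ‖h‖) := by
          gcongr
          exact abs_real_inner_le_norm p h
      _ = ‖q‖ * ‖p‖ * ‖h‖ ^ 2 := by ring
  have hinner := mul_le_mul_of_nonneg_right (real_inner_le_norm q p) (sq_nonneg ‖h‖)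
  have hsq := mul_nonneg (sq_nonneg ‖q‖) (sq_nonneg ‖h‖)
  rw [mobiusForm_apply, mobiusForm_apply, neg_apply, inner_sub_left,
    norm_sub_sq_real]
  linarith

lemma norm_le_of_smul_add_smul_eq (hκ : 0 < κ) (hx : ‖x‖ ≤ R) (hy : ‖y‖ ≤ R) (hq : ‖q‖ ≤ κ)
    (hxyz : κ • (x - z) + κ • (y - z) = q) : ‖z‖ ≤ R + 1 := by
  have hz : (2 * κ) • z = κ • x + κ • y - q := by
    rw [← hxyz]
    module
  have hnorm : ‖(2 * κ) • z‖ ≤ κ * R + κ * R + κ := by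
    rw [hz]
    refine (norm_sub_le _ _).trans (add_le_add ((norm_add_le _ _).trans ?_) hq)
    rw [norm_smul, norm_smul, Real.norm_of_nonneg hκ.le]
    gcongr
  rw [norm_smul, Real.norm_of_nonneg (by positivity)] at hnorm
  nlinarith

lemma le_add_of_doubled_le (hκ : 0 ≤ κ)
    (hmax : doubled κ v u q x₀ x₀ x₀ ≤ doubled κ v u q x y z) :
    v x₀ + u x₀ - ‖q‖ * (‖x₀‖ + ‖z‖) + κ / 4 * ‖x - y‖ ^ 2 ≤ v x + u y := by
  have hpar := parallelogram_law_with_norm ℝ (x - z) (y - z)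
  rw [sub_sub_sub_cancel_right] at hpar
  have hsq : ‖x - y‖ ^ 2 ≤ 2 * (‖x - z‖ ^ 2 + ‖y - z‖ ^ 2) := by
    linarith [mul_self_nonneg ‖x - z + (y - z)‖]
  simp only [doubled, sub_self, norm_zero] at hmax
  linarith [mul_le_mul_of_nonneg_left hsq hκ, real_inner_le_norm q x₀,
    neg_le_of_abs_le (abs_real_inner_le_norm q z)]

lemma exists_pos_small (κ R : ℝ) (hκ : 0 < κ) (ha : 0 < a) (hc : 0 < c) :
    ∃ r > 0, r ≤ κ ∧ r * R ≤ a ∧ r ^ 2 + 3 * (r * (κ * R)) ≤ c := by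
  have hlim₁ : Tendsto (fun r : ℝ => r * R) (𝓝[>] 0) (𝓝 0) :=
    (Continuous.tendsto' (by fun_prop) _ _ (by ring)).mono_left nhdsWithin_le_nhds
  have hlim₂ : Tendsto (fun r : ℝ => r ^ 2 + 3 * (r * (κ * R))) (𝓝[>] 0) (𝓝 0) :=
    (Continuous.tendsto' (by fun_prop) _ _ (by ring)).mono_left nhdsWithin_le_nhds
  have hIoo : ∀ᶠ r in 𝓝[>] (0 : ℝ), r ∈ Ioo 0 κ := Ioo_mem_nhdsGT hκ
  obtain ⟨r, ⟨hr, hrκ⟩, hra, hrc⟩ :=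
    (hIoo.and ((hlim₁.eventually_lt_const ha).and (hlim₂.eventually_lt_const hc))).exists
  exact ⟨r, hr, hrκ.le, hra.le, hrc.le⟩

theorem exists_hasSuperjet_hasSuperjet_of_lt [FiniteDimensional ℝ E] (hK : IsCompact K)
    (hv : ContinuousOn v K) (hu : UpperSemicontinuousOn u K)
    (hbd : ∀ y ∈ K \ interior K, v y + u y ≤ a) (hx₀ : x₀ ∈ K) (ha : a < v x₀ + u x₀)
    (hc : 0 < c) :
    ∃ x, ∃ y ∈ interior K, a < v y + u y ∧ ∃ p q X Y, HasSuperjet v x p X ∧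
      HasSuperjet u y (q - p) Y ∧ (∀ h, X h + Y h ≤ 0) ∧ ‖q‖ ^ 2 + 3 * (‖q‖ * ‖p‖) ≤ c := by
  obtain ⟨R, hR⟩ := hK.isBounded.exists_norm_le
  obtain ⟨m₁, -, hm₁⟩ := hv.upperSemicontinuousOn.exists_isMaxOn ⟨x₀, hx₀⟩ hK
  obtain ⟨m₂, -, hm₂⟩ := hu.exists_isMaxOn ⟨x₀, hx₀⟩ hK
  obtain ⟨b, hab, hb⟩ := exists_between ha
  obtain ⟨τ, hτ, hint⟩ := exists_pos_forall_mem_interior hK hv hu hbd hab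
  have hgap : 0 < v m₁ + u m₂ - b + 1 := by
    linarith [isMaxOn_iff.1 hm₁ x₀ hx₀, isMaxOn_iff.1 hm₂ x₀ hx₀]
  obtain ⟨κ, hκ, hκτ⟩ : ∃ κ > 0, κ / 4 * τ ^ 2 = v m₁ + u m₂ - b + 1 :=
    ⟨4 * (v m₁ + u m₂ - b + 1) / τ ^ 2, by positivity, by field_simp⟩
  obtain ⟨r, hr, hrκ, hrb, hrc⟩ := exists_pos_small κ (2 * R + 1) hκ (sub_pos.2 hb) hc
  obtain ⟨x, hx, y, hy, z, q, X, Y, hq, hxyz, hXY, hX, hY, hmax⟩ :=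
    exists_isMax_doubled_hasSuperjetWithin hK ⟨x₀, hx₀⟩ hv.upperSemicontinuousOn hu hκ hr
  have hz := norm_le_of_smul_add_smul_eq hκ (hR x hx) (hR y hy) (hq.trans hrκ) hxyz
  have hle := le_add_of_doubled_le hκ.le (hmax x₀ hx₀ x₀ hx₀ x₀)
  have hqz : ‖q‖ * (‖x₀‖ + ‖z‖) ≤ r * (2 * R + 1) :=
    mul_le_mul hq (by linarith [hR x₀ hx₀]) (by positivity) hr.le
  have hsq : 0 ≤ κ / 4 * ‖x - y‖ ^ 2 := by positivity
  have hxy : ‖x - y‖ < τ := by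
    by_contra! hτxy
    have hκxy : κ / 4 * τ ^ 2 ≤ κ / 4 * ‖x - y‖ ^ 2 := by gcongr
    linarith [isMaxOn_iff.1 hm₁ x hx, isMaxOn_iff.1 hm₂ y hy]
  obtain ⟨hxK, hyK, hay⟩ := hint x hx y hy (by rwa [dist_eq_norm]) (by linarith)
  have hp : ‖κ • (x - z)‖ ≤ κ * (2 * R + 1) := by
    rw [norm_smul, Real.norm_of_nonneg hκ.le]
    gcongr
    linarith [norm_sub_le x z, hR x hx]
  refine ⟨x, y, hyK, hay, κ • (x - z), q, X, Y, hX.hasSuperjet (mem_interior_iff_mem_nhds.1 hxK),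
    ?_, hXY, le_trans (by gcongr) hrc⟩
  rw [← hxyz, add_sub_cancel_left]
  exact hY.hasSuperjet (mem_interior_iff_mem_nhds.1 hyK)

end Doubling

theorem JetSubsol.add_le_of_strict {n : ℕ} {Γ : Set (Fin n → ℝ)} (hΓ : CondC Γ) {K : Set (Euc n)}
    (hK : IsCompact K) {v u : Euc n → ℝ} (hv : JetSubsol Γ v) (hvc : ContinuousOn v K)
    (hu : UpperSemicontinuousOn u K) {a c : ℝ} (hc : 0 < c)
    (hbd : ∀ y ∈ K \ interior K, v y + u y ≤ a)
    (hstrict : ∀ y ∈ interior K, a < v y + u y → ∀ p Y, HasSuperjet u y p Y →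
      eigs (mobiusForm p Y - c • normSqForm) ∈ closure Γ) {x : Euc n} (hx : x ∈ K) :
    v x + u x ≤ a := by
  by_contra! ha
  obtain ⟨x, y, hy, hay, p, q, X, Y, hX, hY, hXY, hpq⟩ :=
    exists_hasSuperjet_hasSuperjet_of_lt hK hvc hu hbd hx ha (half_pos hc)
  refine hv x p X hX (hΓ.eigs_mem_of_add_le (hstrict y hy hay _ Y hY) one_pos (half_pos hc)
    fun h => ?_)
  have hle := mobiusForm_sub_le p q (hXY h)
  have hpqh := mul_le_mul_of_nonneg_right hpq (sq_nonneg ‖h‖)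
  rw [sub_apply, smul_apply, normSqForm_apply, smul_eq_mul]
  linarith

end StrictComparison

section ComparisonOnBall

section LogPerturbation

variable {E : Type*} [NormedAddCommGroup E] [InnerProductSpace ℝ E]

lemma upperSemicontinuousOn_log {X : Type*} [TopologicalSpace X] {s : Set X} {f : X → ℝ}
    (hf : UpperSemicontinuousOn f s) (hpos : ∀ x ∈ s, 0 < f x) :
    UpperSemicontinuousOn (fun x => Real.log (f x)) s := by
  rw [upperSemicontinuousOn_iff] at hf ⊢
  intro x hx
  specialize hf x hx
  rw [upperSemicontinuousWithinAt_iff] at hf ⊢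
  intro c hc
  filter_upwards [hf _ ((Real.log_lt_iff_lt_exp (hpos x hx)).1 hc), self_mem_nhdsWithin]
    with y hy hys using (Real.log_lt_iff_lt_exp (hpos y hys)).2 hy

lemma HasSuperjet.of_log [FiniteDimensional ℝ E] {f : E → ℝ} {x p : E} {Q : QuadraticForm ℝ E}
    (hf : HasSuperjet (fun y => Real.log (f y)) x p Q) (hpos : ∀ y, 0 < f y) :
    HasSuperjet f x (f x • p) (f x • Q + f x • innerSqForm p) := by
  have hexp := hf.comp (hasTaylorTwo_exp _) univ_mem (Real.exp_monotone.monotoneOn _)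
    fun _ => mem_univ _
  simpa only [Real.exp_log (hpos _)] using hexp

lemma HasSuperjet.of_log_add_one_add_norm_sq [FiniteDimensional ℝ E] {b : E → ℝ} {d : ℝ}
    {y p : E} {Y : QuadraticForm ℝ E}
    (hY : HasSuperjet (fun y => Real.log (b y + d * (1 + ‖y‖ ^ 2))) y p Y)
    (hpos : ∀ y, 0 < b y + d * (1 + ‖y‖ ^ 2)) {t : ℝ} (ht : t = b y + d * (1 + ‖y‖ ^ 2)) :
    HasSuperjet b y (t • p - (2 * d) • y) (t • Y + t • innerSqForm p - (2 * d) • normSqForm) := by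
  subst ht
  have hquad : HasSuperjet (fun z => -(d * (1 + ‖z‖ ^ 2))) y (-(2 * d) • y)
      (-((2 * d) • normSqForm)) := fun η hη => .of_forall fun h => by
    have hsq := norm_add_sq_real y h
    simp only [neg_apply, smul_apply, normSqForm_apply, smul_eq_mul, real_inner_smul_left]
    rw [hsq]
    linarith [mul_nonneg hη.le (sq_nonneg ‖h‖)]
  have hadd := (hY.of_log hpos).add hquad
  simp only [add_neg_cancel_right] at hadd
  rwa [neg_smul, ← sub_eq_add_neg, ← sub_eq_add_neg] at hadd

lemma mul_norm_sq_le_add_norm_smul_sub_sq {b d t : ℝ} (hb : 0 ≤ b) (hd : 0 ≤ d) {y : E}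
    (hy : ‖y‖ ≤ 1) (ht : t = b + d * (1 + ‖y‖ ^ 2)) (p : E) :
    b * t * ‖p‖ ^ 2 ≤ 2 * d * b + ‖t • p - (2 * d) • y‖ ^ 2 := by
  have ht₀ : 0 ≤ t := by
    rw [ht]
    positivity
  have hy₀ : 0 ≤ 1 - ‖y‖ ^ 2 := sub_nonneg.2 (pow_le_one₀ (norm_nonneg y) hy)
  have hsquare : (1 + ‖y‖ ^ 2) * (2 * d * b + ‖t • p - (2 * d) • y‖ ^ 2 - b * t * ‖p‖ ^ 2) =
      d * (t * ‖(1 + ‖y‖ ^ 2) • p - (2 : ℝ) • y‖ ^ 2 + 2 * (b * (1 - ‖y‖ ^ 2))) := by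
    simp only [norm_sub_sq_real, norm_smul, real_inner_smul_left, real_inner_smul_right, mul_pow,
      Real.norm_eq_abs, sq_abs]
    rw [ht]
    ring
  have hnonneg : 0 ≤ d * (t * ‖(1 + ‖y‖ ^ 2) • p - (2 : ℝ) • y‖ ^ 2 +
      2 * (b * (1 - ‖y‖ ^ 2))) := by positivity
  rw [← hsquare] at hnonneg
  linarith [nonneg_of_mul_nonneg_right hnonneg (by positivity)]

lemma add_log_le_log_iff (v : ℝ) {t A : ℝ} (ht : 0 < t) (hA : 0 < A) :
    v + Real.log t ≤ Real.log A ↔ t ≤ A * Real.exp (-v) := by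
  rw [← le_sub_iff_add_le', Real.log_le_iff_le_exp ht, sub_eq_add_neg, Real.exp_add,
    Real.exp_log hA]

end LogPerturbation

variable {n : ℕ} {Γ : Set (Fin n → ℝ)} {v b : Euc n → ℝ}

/-- `LogSupersolAt` written for `b = exp ω`, i.e. for the conformal factor itself. Unlike `ω`, the
function `b` may vanish. -/
def ExpSupersolAt (Γ : Set (Fin n → ℝ)) (b : Euc n → ℝ) (y : Euc n) : Prop :=
  ∀ P Z, HasSuperjet b y P Z → eigs (b y • Z - (‖P‖ ^ 2 / 2) • normSqForm) ∈ closure Γ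

/-- Adding `d * (1 + ‖y‖ ^ 2)` to the conformal factor makes the supersolution strict. -/
lemma ExpSupersolAt.eigs_mobiusForm_sub_mem_closure (hΓ : CondC Γ) {y : Euc n}
    (hb : ExpSupersolAt Γ b y) (hb₀ : ∀ y, 0 ≤ b y) (hby : 0 < b y) {c d : ℝ} (hd : 0 < d)
    (hy : ‖y‖ ≤ 1) (hc : c * (b y + d * (1 + ‖y‖ ^ 2)) ≤ d) {p : Euc n}
    {Y : QuadraticForm ℝ (Euc n)}
    (hY : HasSuperjet (fun y => Real.log (b y + d * (1 + ‖y‖ ^ 2))) y p Y) :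
    eigs (mobiusForm p Y - c • normSqForm) ∈ closure Γ := by
  have hpos (z : Euc n) : 0 < b z + d * (1 + ‖z‖ ^ 2) := by
    have := hb₀ z
    positivity
  obtain ⟨t, ht⟩ : ∃ t, t = b y + d * (1 + ‖y‖ ^ 2) := ⟨_, rfl⟩
  have ht₀ : 0 < t := ht ▸ hpos y
  have hmem := hb _ _ (hY.of_log_add_one_add_norm_sq hpos ht)
  refine hΓ.eigs_mem_closure_of_le hmem (.refl ℝ _) (inv_pos.2 (mul_pos hby ht₀)) fun h => ?_
  rw [inv_mul_le_iff₀ (by positivity)]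
  have hgrad := mul_le_mul_of_nonneg_right
    (mul_norm_sq_le_add_norm_smul_sub_sq (hb₀ y) hd.le hy ht p) (sq_nonneg ‖h‖)
  have hcb := mul_le_mul_of_nonneg_right (mul_le_mul_of_nonneg_left hc hby.le) (sq_nonneg ‖h‖)
  rw [← ht] at hcb
  simp only [LinearIsometryEquiv.coe_refl, id, sub_apply, add_apply, smul_apply, smul_eq_mul,
    normSqForm_apply, innerSqForm_apply, mobiusForm_apply]
  linarith

lemma JetSubsol.le_one_add_mul_exp_neg (hΓ : CondC Γ) (hv : JetSubsol Γ v)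
    (hvc : ContinuousOn v (closedBall 0 1)) (hb₀ : ∀ y, 0 ≤ b y)
    (hbu : UpperSemicontinuousOn b (closedBall 0 1))
    (hb : ∀ y, ‖y‖ < 1 → 0 < b y → ExpSupersolAt Γ b y)
    (hbd : ∀ y, ‖y‖ = 1 → b y ≤ Real.exp (-v y)) {V B : ℝ} (hV : ∀ y, ‖y‖ ≤ 1 → v y ≤ V)
    (hB : ∀ y, ‖y‖ ≤ 1 → b y ≤ B) {d : ℝ} (hd : 0 < d) {x : Euc n} (hx : ‖x‖ ≤ 1) :
    b x ≤ (1 + 2 * d * Real.exp V) * Real.exp (-v x) := by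
  have hpos (z : Euc n) : 0 < b z + d * (1 + ‖z‖ ^ 2) := by
    have := hb₀ z
    positivity
  have hiff (y : Euc n) := add_log_le_log_iff (v y) (hpos y)
    (by positivity : 0 < 1 + 2 * d * Real.exp V)
  have hquad (y : Euc n) (hy : ‖y‖ ≤ 1) : d * (1 + ‖y‖ ^ 2) ≤ 2 * d := by
    nlinarith [pow_le_one₀ (n := 2) (norm_nonneg y) hy]
  have hexp (y : Euc n) (hy : ‖y‖ ≤ 1) : 1 ≤ Real.exp V * Real.exp (-v y) := by
    rw [← Real.exp_add, Real.one_le_exp_iff]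
    linarith [hV y hy]
  have hquadc : Continuous fun y : Euc n => d * (1 + ‖y‖ ^ 2) := by fun_prop
  have husc := upperSemicontinuousOn_log
    (hbu.add hquadc.continuousOn.upperSemicontinuousOn) fun y _ => hpos y
  have hBd : 0 < B + 2 * d := by linarith [hb₀ x, hB x hx]
  have hmain := hv.add_le_of_strict hΓ (isCompact_closedBall 0 1) hvc husc
    (a := Real.log (1 + 2 * d * Real.exp V)) (div_pos hd hBd) ?_ ?_
    (mem_closedBall_zero_iff.2 hx)
  · have hdx : 0 ≤ d * (1 + ‖x‖ ^ 2) := by positivity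
    linarith [(hiff x).1 hmain]
  · intro y hy
    rw [interior_closedBall _ one_ne_zero, closedBall_sdiff_ball, mem_sphere_zero_iff_norm] at hy
    rw [hiff]
    nlinarith [hquad y hy.le, hbd y hy, hexp y hy.le]
  · intro y hy hlt p Y hY
    rw [interior_closedBall _ one_ne_zero, mem_ball_zero_iff] at hy
    rw [← not_le, hiff, not_le] at hlt
    have hby : 0 < b y := by nlinarith [hquad y hy.le, hexp y hy.le, Real.exp_pos (-v y)]
    have hsum : b y + d * (1 + ‖y‖ ^ 2) ≤ B + 2 * d := add_le_add (hB y hy.le) (hquad y hy.le)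
    refine (hb y hy hby).eigs_mobiusForm_sub_mem_closure hΓ hb₀ hby hd hy.le ?_ hY
    rw [div_mul_eq_mul_div, div_le_iff₀ hBd]
    gcongr

theorem JetSubsol.le_exp_neg_of_sphere_le (hΓ : CondC Γ) (hv : JetSubsol Γ v)
    (hvc : ContinuousOn v (closedBall 0 1)) (hb₀ : ∀ y, 0 ≤ b y)
    (hbu : UpperSemicontinuousOn b (closedBall 0 1))
    (hb : ∀ y, ‖y‖ < 1 → 0 < b y → ExpSupersolAt Γ b y)
    (hbd : ∀ y, ‖y‖ = 1 → b y ≤ Real.exp (-v y)) {x : Euc n} (hx : ‖x‖ ≤ 1) :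
    b x ≤ Real.exp (-v x) := by
  obtain ⟨V, hV⟩ := (isCompact_closedBall (0 : Euc n) 1).exists_bound_of_continuousOn hvc
  have hV' (y : Euc n) (hy : ‖y‖ ≤ 1) : v y ≤ V :=
    (le_abs_self _).trans (hV y (mem_closedBall_zero_iff.2 hy))
  have hlim : Tendsto (fun d => (1 + 2 * d * Real.exp V) * Real.exp (-v x)) (𝓝[>] 0)
      (𝓝 (Real.exp (-v x))) :=
    (Continuous.tendsto' (by fun_prop) _ _ (by simp)).mono_left nhdsWithin_le_nhds
  obtain ⟨m, -, hm⟩ := hbu.exists_isMaxOn ⟨x, mem_closedBall_zero_iff.2 hx⟩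
    (isCompact_closedBall _ _)
  exact ge_of_tendsto hlim (eventually_mem_nhdsWithin.mono fun d hd =>
    hv.le_one_add_mul_exp_neg hΓ hvc hb₀ hbu hb hbd hV'
      (fun y hy => hm (mem_closedBall_zero_iff.2 hy)) hd hx)

end ComparisonOnBall

section PuncturedMinima

variable {E : Type*} [NormedAddCommGroup E] {F ω g : E → ℝ} {h₀ : E} {R r δ ε : ℝ}

lemma exists_isLocalMin_of_lt_sphere [ProperSpace E] (hF : ContinuousOn F {0}ᶜ) (h0 : h₀ ≠ 0)
    (hR : ‖h₀‖ < R) (hzero : ∀ᶠ h in 𝓝[≠] 0, F h₀ < F h) (hsphere : ∀ h, ‖h‖ = R → F h₀ < F h) :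
    ∃ x ≠ 0, ‖x‖ < R ∧ IsLocalMin F x := by
  obtain ⟨ρ, hρ, hball⟩ := Metric.eventually_nhds_iff_ball.1 (eventually_nhdsWithin_iff.1 hzero)
  have hρh₀ : ρ ≤ ‖h₀‖ := by
    by_contra! hlt
    exact (hball h₀ (mem_ball_zero_iff.2 hlt) h0).false
  have hK : IsCompact (closedBall (0 : E) R ∩ {y | ρ / 2 ≤ ‖y‖}) :=
    (isCompact_closedBall 0 R).inter_right (isClosed_le continuous_const continuous_norm)
  have hsub : ball (0 : E) R ∩ {y | ρ / 2 < ‖y‖} ⊆ closedBall (0 : E) R ∩ {y | ρ / 2 ≤ ‖y‖} :=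
    inter_subset_inter ball_subset_closedBall fun _ (hy : ρ / 2 < _) => hy.le
  have hne : ∀ y : E, ρ / 2 ≤ ‖y‖ → y ≠ 0 := fun y hy =>
    norm_pos_iff.1 ((half_pos hρ).trans_le hy)
  have hbdry : ∀ y ∈ (closedBall (0 : E) R ∩ {y | ρ / 2 ≤ ‖y‖}) \
      (ball (0 : E) R ∩ {y | ρ / 2 < ‖y‖}), F h₀ < F y := fun y hy => by
    by_cases hyR : ‖y‖ = R
    · exact hsphere y hyR
    have hylt : ‖y‖ < R := (mem_closedBall_zero_iff.1 hy.1.1).lt_of_ne hyR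
    have hyρ : ‖y‖ ≤ ρ / 2 := by
      by_contra! hlt
      exact hy.2 ⟨mem_ball_zero_iff.2 hylt, hlt⟩
    exact hball y (mem_ball_zero_iff.2 (hyρ.trans_lt (half_lt_self hρ))) (hne y hy.1.2)
  obtain ⟨x, hx, hmin⟩ := hK.exists_isLocalMin_mem_open hsub
    (hF.mono fun y hy => hne y hy.2) (z := h₀)
    ⟨mem_closedBall_zero_iff.2 hR.le, (half_le_self hρ.le).trans hρh₀⟩
    hbdry (isOpen_ball.inter (isOpen_lt continuous_const continuous_norm))
  exact ⟨x, hne x (le_of_lt hx.2), mem_ball_zero_iff.1 hx.1, hmin⟩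

lemma exists_sub_sub_log_lt (hg : ContinuousAt g 0) (hg0 : g 0 = ω 0)
    (hlim : ∀ a < ω 0, ∃ᶠ h in 𝓝[≠] 0, a < ω h) (hR : 0 < R) (hR1 : R ≤ 1) (hε : 0 < ε)
    (hδ : 0 < δ) :
    ∃ h₀ ≠ 0, ‖h₀‖ < R ∧ ∃ η, 0 < η ∧ η ≤ δ ∧ g h₀ - ω h₀ + -η * Real.log ‖h₀‖ < ε := by
  have hgsmall : ∀ᶠ h in 𝓝[≠] 0, g h < ω 0 + ε / 4 :=
    nhdsWithin_le_nhds (hg.eventually (gt_mem_nhds (by linarith)))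
  have hnear : ∀ᶠ h in 𝓝[≠] (0 : E), h ≠ 0 ∧ h ∈ ball 0 R :=
    eventually_mem_nhdsWithin.and (nhdsWithin_le_nhds (ball_mem_nhds 0 hR))
  obtain ⟨h₀, hω₀, hg₀, h0, hR₀⟩ :=
    ((hlim (ω 0 - ε / 4) (by linarith)).and_eventually (hgsmall.and hnear)).exists
  rw [mem_ball_zero_iff] at hR₀
  have hlog : 0 < -Real.log ‖h₀‖ :=
    neg_pos.2 (Real.log_neg (norm_pos_iff.2 h0) (hR₀.trans_le hR1))
  obtain ⟨η, hη, hηlt⟩ := exists_between (lt_min hδ (div_pos (half_pos hε) hlog))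
  rw [lt_min_iff, lt_div_iff₀ hlog] at hηlt
  exact ⟨h₀, h0, hR₀, η, hη, hηlt.1.le, by linarith⟩

/-- The barrier `-η * log ‖y‖` keeps the touching point away from `0`. -/
lemma exists_isLocalMax_sub_sub_log [ProperSpace E] (hω : ContinuousOn ω {0}ᶜ) (hg : Continuous g)
    (hg0 : g 0 = ω 0) (hlim : ∀ a < ω 0, ∃ᶠ h in 𝓝[≠] 0, a < ω h) (hε : 0 < ε)
    (hle : ∀ᶠ h in 𝓝[≠] 0, ω h + ε * ‖h‖ ≤ g h) (hr : 0 < r) (hδ : 0 < δ) :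
    ∃ η, 0 < η ∧ η ≤ δ ∧ ∃ x ≠ 0, ‖x‖ < r ∧
      IsLocalMax (fun y => ω y - (g y + -η * Real.log ‖y‖)) x := by
  obtain ⟨ρ, hρ, hball⟩ := Metric.eventually_nhds_iff_ball.1 (eventually_nhdsWithin_iff.1 hle)
  obtain ⟨R, hR, hRlt⟩ := exists_between (lt_min hρ (lt_min hr one_pos))
  simp only [lt_min_iff] at hRlt
  obtain ⟨h₀, h0, hR₀, η, hη, hηδ, hF₀⟩ :=
    exists_sub_sub_log_lt hg.continuousAt hg0 hlim hR hRlt.2.2.le (mul_pos hε hR) hδ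
  let F h := g h - ω h + -η * Real.log ‖h‖
  have hF : ContinuousOn F {0}ᶜ := (hg.continuousOn.sub hω).add
    (continuousOn_const.mul (continuous_norm.continuousOn.log fun y hy => norm_ne_zero_iff.2 hy))
  have hzero : ∀ᶠ h in 𝓝[≠] 0, F h₀ < F h := by
    have hlog : Tendsto (fun h : E => -η * Real.log ‖h‖) (𝓝[≠] 0) atTop :=
      (Real.tendsto_log_nhdsGT_zero.comp tendsto_norm_nhdsNE_zero).const_mul_atBot_of_neg
        (neg_neg_of_pos hη)
    filter_upwards [hlog.eventually_gt_atTop (F h₀), hle] with h h1 h2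
    simp only [F] at h1 ⊢
    linarith [mul_nonneg hε.le (norm_nonneg h)]
  have hsphere : ∀ h, ‖h‖ = R → F h₀ < F h := fun h hh => by
    have hgap := hball h (mem_ball_zero_iff.2 (hh ▸ hRlt.1)) (norm_pos_iff.1 (hh ▸ hR))
    have hlog := mul_nonneg_of_nonpos_of_nonpos (neg_nonpos.2 hη.le)
      (Real.log_nonpos hR.le hRlt.2.2.le)
    simp only [F, hh] at hgap ⊢
    linarith
  obtain ⟨x, hx0, hxR, hmin⟩ := exists_isLocalMin_of_lt_sphere hF h0 hR₀ hzero hsphere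
  refine ⟨η, hη, hηδ, x, hx0, hxR.trans hRlt.2.1, hmin.mono fun y hy => ?_⟩
  simp only [F] at hy
  linarith

end PuncturedMinima

section LogarithmicBarrier

lemma hasTaylorTwo_quadraticPoly_of_gradient {E : Type*} [NormedAddCommGroup E]
    [InnerProductSpace ℝ E] {Q : QuadraticForm ℝ E} {L : E →L[ℝ] E}
    (hL : ∀ x k, Q (x + k) = Q x + 2 * inner ℝ (L x) k + Q k) (c : ℝ) (x₀ p x : E) :
    HasTaylorTwo (quadraticPoly c x₀ p Q) x (p + L (x - x₀)) Q := by
  refine (Asymptotics.isLittleO_zero _ _).congr_left fun h => ?_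
  simp only [quadraticPoly, add_sub_right_comm x h x₀, hL, inner_add_left, inner_add_right]
  ring

lemma hasTaylorTwo_neg_log_norm {E : Type*} [NormedAddCommGroup E] [InnerProductSpace ℝ E]
    [FiniteDimensional ℝ E] (η : ℝ) {x : E} (hx : x ≠ 0) :
    HasTaylorTwo (fun y => -η * Real.log ‖y‖) x (-(η / ‖x‖ ^ 2) • x)
      ((η / ‖x‖ ^ 2) • axialForm (‖x‖⁻¹ • x) 2 (-1)) := by
  have : 0 < ‖x‖ := norm_pos_iff.2 hx
  have hG : HasTaylorTwo (fun s => -(η / 2) * Real.log s) (‖x - 0‖ ^ 2)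
      (-(η / 2) * (‖x - 0‖ ^ 2)⁻¹) ((-(η / 2) * -((‖x - 0‖ ^ 2) ^ 2)⁻¹) • normSqForm) := by
    have hpos : 0 < ‖x - 0‖ ^ 2 := by
      rw [sub_zero]
      positivity
    exact hasTaylorTwo_of_hasDerivAt (G' := fun s => -(η / 2) * s⁻¹)
      ((lt_mem_nhds hpos).mono fun s hs => (Real.hasDerivAt_log hs.ne').const_mul _)
      ((hasDerivAt_inv hpos.ne').const_mul _)
  have hcomp := HasTaylorTwo.comp (f := fun y => ‖y - 0‖ ^ 2) hG (hasTaylorTwo_norm_sub_sq 0 x)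
  convert hcomp using 1
  · ext y
    rw [sub_zero, Real.log_pow]
    push_cast
    ring
  · rw [smul_smul, sub_zero]
    congr 1
    field_simp
  · ext h
    simp only [smul_apply, axialForm_apply, real_inner_smul_left, neg_mul, one_mul, smul_eq_mul,
      sub_zero, mul_neg, neg_neg, add_apply, normSqForm_apply, innerSqForm_apply]
    field_simp
    ring

variable {n : ℕ} {Γ : Set (Fin n → ℝ)} {ω : Euc n → ℝ} {δ ε : ℝ} {p : Euc n}
  {Z : QuadraticForm ℝ (Euc n)}

lemma mobiusForm_neg_log_norm_apply (p : Euc n) (Z : QuadraticForm ℝ (Euc n)) {x : Euc n}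
    (hx : x ≠ 0) (η : ℝ) (h : Euc n) :
    mobiusForm (p + -(η / ‖x‖ ^ 2) • x) (Z + (η / ‖x‖ ^ 2) • axialForm (‖x‖⁻¹ • x) 2 (-1)) h =
      mobiusForm p Z h + η / ‖x‖ ^ 2 * (axialForm (‖x‖⁻¹ • x) (2 + η) (-1 - η / 2) h
        - 2 * (inner ℝ p h * inner ℝ x h) + inner ℝ p x * ‖h‖ ^ 2) := by
  have : 0 < ‖x‖ := norm_pos_iff.2 hx
  simp only [mobiusForm_apply, add_apply, smul_apply, axialForm_apply, inner_add_left,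
    real_inner_smul_left, norm_add_sq_real, inner_smul_right, norm_smul, smul_eq_mul, mul_pow,
    Real.norm_eq_abs, sq_abs]
  field_simp
  ring

lemma mobiusForm_le_axialForm_of_neg_log_norm {x : Euc n} (hx : x ≠ 0)
    (hZ : ∀ h, Z h ≤ -(‖p‖ ^ 2 * ‖h‖ ^ 2)) (hpx : 3 * (‖p‖ * ‖x‖) ≤ δ) {η : ℝ} (hη : 0 < η)
    (hηδ : η ≤ δ) (h : Euc n) :
    mobiusForm (p + -(η / ‖x‖ ^ 2) • x) (Z + (η / ‖x‖ ^ 2) • axialForm (‖x‖⁻¹ • x) 2 (-1)) h ≤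
      η / ‖x‖ ^ 2 * axialForm (‖x‖⁻¹ • x) (2 + δ) (-(1 - δ)) h := by
  have hbase : mobiusForm p Z h ≤ 0 := by
    have hph : inner ℝ p h ^ 2 ≤ ‖p‖ ^ 2 * ‖h‖ ^ 2 := by
      rw [← sq_abs, ← mul_pow]
      gcongr
      exact abs_real_inner_le_norm p h
    have hnorm : 0 ≤ ‖p‖ ^ 2 / 2 * ‖h‖ ^ 2 := by positivity
    rw [mobiusForm_apply]
    linarith [hZ h]
  have hcross : -(inner ℝ p h * inner ℝ x h) ≤ ‖p‖ * ‖x‖ * ‖h‖ ^ 2 :=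
    calc -(inner ℝ p h * inner ℝ x h) ≤ |inner ℝ p h| * |inner ℝ x h| := by
          rw [← abs_mul]
          exact neg_le_abs _
      _ ≤ ‖p‖ * ‖h‖ * (‖x‖ * ‖h‖) := by gcongr <;> exact abs_real_inner_le_norm _ _
      _ = ‖p‖ * ‖x‖ * ‖h‖ ^ 2 := by ring
  have hinner : inner ℝ p x * ‖h‖ ^ 2 ≤ ‖p‖ * ‖x‖ * ‖h‖ ^ 2 := by
    gcongr
    exact real_inner_le_norm p x
  have hδ : 3 * (‖p‖ * ‖x‖) * ‖h‖ ^ 2 ≤ δ * ‖h‖ ^ 2 := by gcongr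
  have hη' : η * inner ℝ (‖x‖⁻¹ • x) h ^ 2 ≤ δ * inner ℝ (‖x‖⁻¹ • x) h ^ 2 := by gcongr
  have hnorm : 0 ≤ η / 2 * ‖h‖ ^ 2 := by positivity
  rw [mobiusForm_neg_log_norm_apply p Z hx]
  refine add_le_of_nonpos_of_le hbase (mul_le_mul_of_nonneg_left ?_ (by positivity))
  simp only [axialForm_apply]
  linarith

lemma LogSupersolAt.not_isLocalMax_sub_sub_log (hΓ : CondC Γ)
    (ht : axialTuple n (2 + δ) (-(1 - δ)) ∉ closure Γ) {x : Euc n} (hx : x ≠ 0)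
    (hω : LogSupersolAt Γ ω x) {g : Euc n → ℝ} (hg : HasSuperjet g x p Z)
    (hZ : ∀ h, Z h ≤ -(‖p‖ ^ 2 * ‖h‖ ^ 2)) (hpx : 3 * (‖p‖ * ‖x‖) ≤ δ) {η : ℝ} (hη : 0 < η)
    (hηδ : η ≤ δ) : ¬ IsLocalMax (fun y => ω y - (g y + -η * Real.log ‖y‖)) x := by
  intro hmax
  have hxpos : 0 < ‖x‖ := norm_pos_iff.2 hx
  refine hΓ.eigs_notMem_closure_of_le_axialForm (e := ‖x‖⁻¹ • x)
    (by rw [norm_smul, norm_inv, norm_norm, inv_mul_cancel₀ hxpos.ne']) ht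
    (by positivity : 0 < η / ‖x‖ ^ 2) (mobiusForm_le_axialForm_of_neg_log_norm hx hZ hpx hη hηδ)
    (hω _ _ ((hg.add (hasTaylorTwo_neg_log_norm η hx).hasSuperjet).of_isLocalMax_sub hmax))

end LogarithmicBarrier

section RemovableSingularity

lemma exists_isLocalMax_sub_tilt {E : Type*} [NormedAddCommGroup E] [InnerProductSpace ℝ E]
    [ProperSpace E] {ω g : E → ℝ} {θ r : ℝ} (hω : ContinuousOn ω {0}ᶜ) (hg : Continuous g)
    (hθ : 0 < θ) (hlow : ∀ᶠ h in 𝓝 0, ω h + θ * ‖h‖ ^ 2 ≤ g h)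
    (hcone : ∀ ε : ℝ, 0 < ε → ∃ᶠ h in 𝓝[≠] 0, g h < ω h + ε * ‖h‖) (hr : 0 < r) :
    ∃ q, ‖q‖ < r ∧ ∃ x ≠ 0, ‖x‖ < r ∧ IsLocalMax (fun y => ω y - (g y - inner ℝ q y)) x := by
  obtain ⟨ρ, hρ, hball⟩ := Metric.eventually_nhds_iff_ball.1 hlow
  obtain ⟨R, hR, hRlt⟩ := exists_between (lt_min hρ (lt_min hr (div_pos hr hθ)))
  simp only [lt_min_iff, lt_div_iff₀ hθ] at hRlt
  have hnear : ∀ᶠ h in 𝓝[≠] (0 : E), h ≠ 0 ∧ h ∈ ball 0 R :=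
    eventually_mem_nhdsWithin.and (nhdsWithin_le_nhds (ball_mem_nhds 0 hR))
  obtain ⟨h₀, hgh₀, h0, hR₀⟩ := ((hcone (R * θ) (by positivity)).and_eventually hnear).exists
  rw [mem_ball_zero_iff] at hR₀
  have hpos : 0 < ‖h₀‖ := norm_pos_iff.2 h0
  let q := (R * θ * ‖h₀‖⁻¹) • h₀
  have hq : ‖q‖ = R * θ := by
    rw [norm_smul, Real.norm_of_nonneg (by positivity), mul_assoc, inv_mul_cancel₀ hpos.ne',
      mul_one]
  let F h := g h - ω h - inner ℝ q h
  have hF₀ : F h₀ < 0 := by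
    have hqh₀ : inner ℝ q h₀ = R * θ * ‖h₀‖ := by
      rw [real_inner_smul_left, real_inner_self_eq_norm_sq]
      field_simp
    simp only [F, hqh₀]
    linarith
  have hFlow : ∀ h ∈ ball 0 ρ, θ * ‖h‖ ^ 2 - R * θ * ‖h‖ ≤ F h := fun h hh => by
    have hqh := real_inner_le_norm q h
    rw [hq] at hqh
    simp only [F]
    linarith [hball h hh]
  have hzero : ∀ᶠ h in 𝓝[≠] 0, F h₀ < F h := by
    have hcont : ContinuousAt (fun h : E => θ * ‖h‖ ^ 2 - R * θ * ‖h‖) 0 := by fun_prop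
    filter_upwards [nhdsWithin_le_nhds (hcont.eventually (lt_mem_nhds (by simpa using hF₀))),
      nhdsWithin_le_nhds (ball_mem_nhds 0 hρ)] with h h1 h2 using h1.trans_le (hFlow h h2)
  have hsphere : ∀ h, ‖h‖ = R → F h₀ < F h := fun h hh => by
    refine hF₀.trans_le (le_of_eq_of_le ?_ (hFlow h (mem_ball_zero_iff.2 (hh ▸ hRlt.1))))
    rw [hh]
    ring
  have hF : ContinuousOn F {0}ᶜ := (hg.continuousOn.sub hω).sub (by fun_prop)
  obtain ⟨x, hx0, hxR, hmin⟩ := exists_isLocalMin_of_lt_sphere hF h0 hR₀ hzero hsphere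
  refine ⟨q, hq.trans_lt hRlt.2.2, x, hx0, hxR.trans hRlt.2.1, hmin.mono fun y hy => ?_⟩
  simp only [F] at hy
  linarith

variable {n : ℕ} {Γ : Set (Fin n → ℝ)} {ω : Euc n → ℝ} {δ ε : ℝ} {p : Euc n}
  {Z : QuadraticForm ℝ (Euc n)}

lemma exists_forall_sub_smul_normSqForm_le (p : Euc n) (Z : QuadraticForm ℝ (Euc n)) :
    ∃ K : ℝ, ∀ (p' h : Euc n), ‖p'‖ ≤ ‖p‖ + 1 → (Z - K • normSqForm : QuadraticForm ℝ (Euc n)) h ≤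
      -(‖p'‖ ^ 2 * ‖h‖ ^ 2) := by
  obtain ⟨C, -, hZ⟩ := exists_abs_quadraticForm_le Z
  refine ⟨C + (‖p‖ + 1) ^ 2, fun p' h hp' => ?_⟩
  have hsq : ‖p'‖ ^ 2 * ‖h‖ ^ 2 ≤ (‖p‖ + 1) ^ 2 * ‖h‖ ^ 2 := by gcongr
  simp only [sub_apply, smul_apply, normSqForm_apply, smul_eq_mul]
  linarith [(abs_le.1 (hZ h)).2]

/-- Otherwise a steep concave paraboloid minus `η * log ‖·‖` would touch `ω` from above off `0`, at
a point where the Möbius Hessian has its eigenvalues outside `closure Γ`. -/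
lemma frequently_quadraticPoly_lt (hΓ : CondC Γ) (hδ : 0 < δ)
    (ht : axialTuple n (2 + δ) (-(1 - δ)) ∉ closure Γ) (hcont : ContinuousOn ω {0}ᶜ)
    (hω : ∀ z ≠ 0, LogSupersolAt Γ ω z) (hlim : ∀ a < ω 0, ∃ᶠ h in 𝓝[≠] 0, a < ω h)
    (p : Euc n) (Z : QuadraticForm ℝ (Euc n)) (hε : 0 < ε) :
    ∃ᶠ h in 𝓝[≠] 0, quadraticPoly (ω 0) 0 p Z h < ω h + ε * ‖h‖ := by
  intro hcon
  obtain ⟨K, hK⟩ := exists_forall_sub_smul_normSqForm_le p Z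
  obtain ⟨L, hL⟩ := exists_gradient_quadraticForm (Z - K • normSqForm)
  let g := quadraticPoly (ω 0) 0 p (Z - K • normSqForm)
  have hle : ∀ᶠ h in 𝓝[≠] 0, ω h + ε / 2 * ‖h‖ ≤ g h := by
    have hsmall : ∀ᶠ h in 𝓝 (0 : Euc n), K * ‖h‖ < ε :=
      (isOpen_lt (by fun_prop) continuous_const).mem_nhds (by simpa using hε)
    filter_upwards [hcon, nhdsWithin_le_nhds hsmall] with h h1 h2
    have h3 := mul_le_mul_of_nonneg_right h2.le (norm_nonneg h)
    simp only [g, quadraticPoly, sub_zero, sub_apply, smul_apply, normSqForm_apply, smul_eq_mul,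
      not_lt] at h1 ⊢
    linarith
  have hgrad : ∀ᶠ x in 𝓝 (0 : Euc n), ‖p + L (x - 0)‖ < ‖p‖ + 1 :=
    (isOpen_lt (by fun_prop) continuous_const).mem_nhds (by simp)
  have hsmall : ∀ᶠ x in 𝓝 (0 : Euc n), 3 * (‖p + L (x - 0)‖ * ‖x‖) < δ :=
    (isOpen_lt (by fun_prop) continuous_const).mem_nhds (by simpa using hδ)
  obtain ⟨r, hr, hball⟩ := Metric.eventually_nhds_iff_ball.1 (hgrad.and hsmall)
  obtain ⟨η, hη, hηδ, x, hx0, hxr, hmax⟩ := exists_isLocalMax_sub_sub_log hcont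
    (contDiff_quadraticPoly _ _ _ _).continuous (quadraticPoly_self _ _ _ _) hlim (half_pos hε)
    hle hr hδ
  obtain ⟨hgrad, hsmall⟩ := hball x (mem_ball_zero_iff.2 hxr)
  exact (hω x hx0).not_isLocalMax_sub_sub_log hΓ ht hx0
    (hasTaylorTwo_quadraticPoly_of_gradient hL _ _ _ _).hasSuperjet (fun h => hK _ h hgrad.le)
    hsmall.le hη hηδ hmax

lemma mobiusForm_apply_le_add (p p' : Euc n) (Z : QuadraticForm ℝ (Euc n)) (h : Euc n) :
    mobiusForm p' Z h ≤ mobiusForm p Z h + 3 / 2 * (‖p' - p‖ * ‖p' + p‖) * ‖h‖ ^ 2 := by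
  have hinner : inner ℝ p' h ^ 2 - inner ℝ p h ^ 2 ≤ ‖p' - p‖ * ‖p' + p‖ * ‖h‖ ^ 2 := by
    calc inner ℝ p' h ^ 2 - inner ℝ p h ^ 2 = inner ℝ (p' - p) h * inner ℝ (p' + p) h := by
          rw [inner_sub_left, inner_add_left]
          ring
      _ ≤ |inner ℝ (p' - p) h| * |inner ℝ (p' + p) h| := by
          rw [← abs_mul]
          exact le_abs_self _
      _ ≤ ‖p' - p‖ * ‖h‖ * (‖p' + p‖ * ‖h‖) := by gcongr <;> exact abs_real_inner_le_norm _ _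
      _ = ‖p' - p‖ * ‖p' + p‖ * ‖h‖ ^ 2 := by ring
  have hnorm : (‖p‖ ^ 2 - ‖p'‖ ^ 2) * ‖h‖ ^ 2 ≤ ‖p' - p‖ * ‖p' + p‖ * ‖h‖ ^ 2 := by
    gcongr
    calc ‖p‖ ^ 2 - ‖p'‖ ^ 2 = inner ℝ (p - p') (p' + p) := by
          rw [inner_sub_left, inner_add_right, inner_add_right, real_inner_self_eq_norm_sq,
            real_inner_self_eq_norm_sq, real_inner_comm p p']
          ring
      _ ≤ ‖p' - p‖ * ‖p' + p‖ := norm_sub_rev p p' ▸ real_inner_le_norm _ _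
  simp only [mobiusForm_apply]
  linarith

lemma isClosed_setOf_eigs_mobiusForm_mem_closure (hΓ : CondC Γ) (Z : QuadraticForm ℝ (Euc n)) :
    IsClosed {p | eigs (mobiusForm p Z) ∈ closure Γ} := by
  refine isClosed_of_closure_subset fun p hp =>
    eigs_mem_of_forall_pos_add isClosed_closure 1 fun η hη => ?_
  have hsmall : ∀ᶠ p' in 𝓝 p, 3 / 2 * (‖p' - p‖ * ‖p' + p‖) < η :=
    (isOpen_lt (by fun_prop) continuous_const).mem_nhds (by simpa using hη)
  obtain ⟨p', hmem, hp'⟩ := ((mem_closure_iff_frequently.1 hp).and_eventually hsmall).exists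
  refine hΓ.eigs_mem_closure_of_le hmem (.refl ℝ _) one_pos fun h => ?_
  have hη' : 3 / 2 * (‖p' - p‖ * ‖p' + p‖) * ‖h‖ ^ 2 ≤ η * ‖h‖ ^ 2 := by gcongr
  simp only [one_mul, LinearIsometryEquiv.coe_refl, id, add_apply, smul_apply, normSqForm_apply,
    smul_eq_mul]
  linarith [mobiusForm_apply_le_add p p' Z h]

theorem logSupersolAt_zero_of_forall_ne (hΓ : CondC Γ) (hδ : 0 < δ)
    (ht : axialTuple n (2 + δ) (-(1 - δ)) ∉ closure Γ) (hcont : ContinuousOn ω {0}ᶜ)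
    (hω : ∀ z ≠ 0, LogSupersolAt Γ ω z) (hlim : ∀ a < ω 0, ∃ᶠ h in 𝓝[≠] 0, a < ω h) :
    LogSupersolAt Γ ω 0 := by
  intro p Z hpZ
  refine eigs_mem_of_forall_pos_add isClosed_closure 4 fun θ hθ => ?_
  rw [← mobiusForm_add_smul_normSqForm]
  let Q := Z + (4 * θ) • normSqForm
  obtain ⟨L, hL⟩ := exists_gradient_quadraticForm Q
  have hlow : ∀ᶠ h in 𝓝 0, ω h + θ * ‖h‖ ^ 2 ≤ quadraticPoly (ω 0) 0 p Q h := by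
    filter_upwards [hpZ.eventually_le_quadraticPoly hθ] with h hh
    have : 0 ≤ θ * ‖h‖ ^ 2 := by positivity
    simp only [Q, quadraticPoly, sub_zero, add_apply, smul_apply, normSqForm_apply,
      smul_eq_mul] at hh ⊢
    linarith
  refine (isClosed_setOf_eigs_mobiusForm_mem_closure hΓ Q).closure_subset
    (Metric.mem_closure_iff.2 fun κ hκ => ?_)
  obtain ⟨q, hq, x, hx0, hx, hmax⟩ := exists_isLocalMax_sub_tilt hcont
    (contDiff_quadraticPoly _ _ _ _).continuous hθ hlow
    (fun ε => frequently_quadraticPoly_lt hΓ hδ ht hcont hω hlim p Q)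
    (div_pos hκ (by positivity : 0 < 1 + ‖L‖))
  have htilt : (fun y => quadraticPoly (ω 0) 0 p Q y - inner ℝ q y) =
      quadraticPoly (ω 0) 0 (p - q) Q := by
    ext y
    simp only [quadraticPoly, sub_zero, inner_sub_left]
    ring
  have hjet := (hasTaylorTwo_quadraticPoly_of_gradient hL (ω 0) 0 (p - q) x).hasSuperjet
  refine ⟨_, hω x hx0 _ _ ((htilt ▸ hjet).of_isLocalMax_sub hmax), ?_⟩
  calc dist p (p - q + L (x - 0)) = ‖q - L x‖ := by
        rw [dist_eq_norm, sub_zero]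
        congr 1
        abel
    _ ≤ ‖q‖ + ‖L‖ * ‖x‖ := (norm_sub_le _ _).trans (by gcongr; exact L.le_opNorm x)
    _ < κ / (1 + ‖L‖) + ‖L‖ * (κ / (1 + ‖L‖)) :=
        add_lt_add_of_lt_of_le hq (by gcongr)
    _ = κ := by
        field_simp

end RemovableSingularity

section AffineRescaling

variable {E : Type*} [NormedAddCommGroup E] [InnerProductSpace ℝ E] {f : E → ℝ} {x y p : E}
  {Q : QuadraticForm ℝ E} {l : ℝ}

lemma HasSuperjet.of_comp_add_smul (hl : 0 < l) (h : HasSuperjet (fun z => f (x + l • z)) y p Q) :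
    HasSuperjet f (x + l • y) (l⁻¹ • p) ((l⁻¹ ^ 2) • Q) := by
  intro η hη
  have hscale : Tendsto (fun k : E => l⁻¹ • k) (𝓝 0) (𝓝 0) := by
    simpa using (continuous_const_smul l⁻¹).tendsto (0 : E)
  filter_upwards [hscale.eventually (h (η * l ^ 2) (by positivity))] with k hk
  have hnorm : η * l ^ 2 * ‖l⁻¹ • k‖ ^ 2 = η * ‖k‖ ^ 2 := by
    rw [norm_smul, Real.norm_of_nonneg (by positivity)]
    field_simp
  rw [smul_add, smul_inv_smul₀ hl.ne', ← add_assoc, real_inner_smul_right,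
    quadraticForm_apply_smul, hnorm] at hk
  rwa [real_inner_smul_left, smul_apply, smul_eq_mul]

lemma mobiusForm_smul (c : ℝ) (p : E) (Z : QuadraticForm ℝ E) :
    mobiusForm (c • p) (c ^ 2 • Z) = c ^ 2 • mobiusForm p Z := by
  ext h
  simp only [mobiusForm_apply, smul_apply, smul_eq_mul, real_inner_smul_left, norm_smul, mul_pow,
    Real.norm_eq_abs, sq_abs]
  ring

variable {n : ℕ} {Γ : Set (Fin n → ℝ)} {v ω : Euc n → ℝ}

lemma JetSubsol.comp_add_smul (hΓ : CondC Γ) (hv : JetSubsol Γ v) (x : Euc n) (hl : 0 < l) :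
    JetSubsol Γ fun y => v (x + l • y) := by
  intro y p Q hQ hmem
  refine hv _ _ _ (hQ.of_comp_add_smul hl) ?_
  have hneg : -(l⁻¹ ^ 2 • Q) = l⁻¹ ^ 2 • -Q := (smul_neg _ Q).symm
  rw [hneg, mobiusForm_smul, eigs_smul (by positivity)]
  exact hΓ.2.2.2.2.1 _ hmem _ (by positivity)

lemma LogSupersolAt.comp_add_smul (hΓ : CondC Γ) {x y : Euc n} (hl : 0 < l)
    (hω : LogSupersolAt Γ ω (x + l • y)) : LogSupersolAt Γ (fun z => ω (x + l • z)) y := by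
  intro p Q hQ
  have hmem := hω _ _ (hQ.of_comp_add_smul hl)
  rw [mobiusForm_smul, eigs_smul (by positivity)] at hmem
  simpa [hl.ne'] using hΓ.smul_mem_closure hmem (pow_pos hl 2)

end AffineRescaling

section Exponential

variable {n : ℕ} {Γ : Set (Fin n → ℝ)} {b : Euc n → ℝ} {y : Euc n}

lemma logSupersolAt_log_iff (hΓ : CondC Γ) (hb : ∀ y, 0 < b y) :
    LogSupersolAt Γ (fun y => Real.log (b y)) y ↔ ExpSupersolAt Γ b y := by
  have hby := hb y
  constructor
  · intro h P Z hPZ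
    have hlog := hPZ.comp (hasTaylorTwo_log hby) (Ioi_mem_nhds hby)
      (Real.strictMonoOn_log.monotoneOn) hb
    refine hΓ.eigs_mem_closure_of_le (h _ _ hlog) (.refl ℝ _) (pow_pos hby 2) fun k => le_of_eq ?_
    simp only [mobiusForm_apply, add_apply, sub_apply, smul_apply, smul_eq_mul, innerSqForm_apply,
      normSqForm_apply, LinearIsometryEquiv.coe_refl, id, real_inner_smul_left, norm_smul, mul_pow,
      Real.norm_eq_abs, sq_abs]
    field_simp
    ring
  · intro h p Z hpZ
    refine hΓ.eigs_mem_closure_of_le (h _ _ (hpZ.of_log hb)) (.refl ℝ _)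
      (inv_pos.2 (pow_pos hby 2)) fun k => le_of_eq ?_
    simp only [mobiusForm_apply, add_apply, sub_apply, smul_apply, smul_eq_mul, innerSqForm_apply,
      normSqForm_apply, LinearIsometryEquiv.coe_refl, id, norm_smul, mul_pow, Real.norm_eq_abs,
      sq_abs]
    field_simp

end Exponential

section Inversion

open Asymptotics
open EuclideanGeometry (inversion)

lemma tendsto_inv_norm_add_sq {E : Type*} [NormedAddCommGroup E] {z : E} (hz : z ≠ 0) :
    Tendsto (fun k => (‖z + k‖ ^ 2)⁻¹) (𝓝 0) (𝓝 (‖z‖ ^ 2)⁻¹) :=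
  ((tendsto_const_add_nhds_zero z).norm.pow 2).inv₀ (by positivity)

variable {E : Type*} [NormedAddCommGroup E] [InnerProductSpace ℝ E] {f b : E → ℝ} {x z P : E}
  {Z : QuadraticForm ℝ E}

lemma inversion_zero_one_apply (x : E) : inversion 0 1 x = (‖x‖ ^ 2)⁻¹ • x := by
  simp [inversion]

lemma norm_inversion_zero_one (x : E) : ‖inversion 0 1 x‖ = ‖x‖⁻¹ := by
  simpa using EuclideanGeometry.dist_inversion_center (0 : E) x 1

lemma inversion_zero_one_ne_zero (hx : x ≠ 0) : inversion 0 1 x ≠ 0 := by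
  rw [← norm_pos_iff, norm_inversion_zero_one]
  positivity

lemma reflection_orthogonal_span_singleton_apply (z h : E) :
    (ℝ ∙ z)ᗮ.reflection h = h - (2 * inner ℝ z h / ‖z‖ ^ 2) • z := by
  rw [Submodule.reflection_orthogonal_apply, Submodule.reflection_singleton_apply, neg_sub,
    ← Nat.cast_smul_eq_nsmul ℝ, smul_smul, ← mul_div_assoc]
  rfl

lemma norm_sq_smul_inversion_add_sub {k : E} (hz : z ≠ 0) (hk : z + k ≠ 0) :
    ‖z + k‖ ^ 2 • (inversion 0 1 (z + k) - inversion 0 1 z) =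
      (ℝ ∙ z)ᗮ.reflection k - ‖k‖ ^ 2 • inversion 0 1 z := by
  have hsplit : ‖z + k‖ ^ 2 * (‖z‖ ^ 2)⁻¹ =
      1 + 2 * inner ℝ z k / ‖z‖ ^ 2 + ‖k‖ ^ 2 * (‖z‖ ^ 2)⁻¹ := by
    rw [norm_add_sq_real]
    field_simp
  rw [reflection_orthogonal_span_singleton_apply, inversion_zero_one_apply,
    inversion_zero_one_apply, smul_sub, smul_inv_smul₀ (by positivity), smul_smul, hsplit]
  module

lemma inner_reflection_orthogonal_left (z P k : E) :
    inner ℝ ((ℝ ∙ z)ᗮ.reflection P) k = inner ℝ P ((ℝ ∙ z)ᗮ.reflection k) := by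
  rw [← LinearIsometryEquiv.inner_map_map (ℝ ∙ z)ᗮ.reflection,
    Submodule.reflection_reflection]

variable [FiniteDimensional ℝ E]

lemma quadraticForm_sub_isLittleO (Q : QuadraticForm ℝ E) {l : Filter E} {u s : E → E}
    {φ : E → ℝ} (hus : (fun h => u h - s h) =o[l] φ) (hs : s =O[l] φ) :
    (fun h => Q (u h) - Q (s h)) =o[l] fun h => φ h ^ 2 := by
  obtain ⟨L, hL⟩ := exists_gradient_quadraticForm Q
  obtain ⟨C, -, hC⟩ := exists_abs_quadraticForm_le Q
  have hQ : (fun h => Q (u h - s h)) =O[l] fun h => ‖u h - s h‖ ^ 2 :=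
    .of_bound C (.of_forall fun h => by simpa using hC (u h - s h))
  have hcross : (fun h => inner ℝ (L (s h)) (u h - s h)) =o[l] fun h => φ h ^ 2 := by
    simp only [sq]
    refine IsBigO.trans_isLittleO (.of_norm_le fun h => norm_inner_le_norm _ _)
      (((L.isBigO_comp s l).trans hs).norm_left.mul_isLittleO hus.norm_left)
  refine ((hcross.const_mul_left 2).add
    (hQ.trans_isLittleO (hus.norm_left.pow two_pos))).congr_left fun h => ?_
  have hLh := hL (s h) (u h - s h)
  rw [add_sub_cancel] at hLh
  linarith

lemma quadraticForm_inversion_sub_isLittleO (Z : QuadraticForm ℝ E) (hz : z ≠ 0) :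
    (fun k => ‖z + k‖ ^ 2 * Z (inversion 0 1 (z + k) - inversion 0 1 z) -
      (‖z‖ ^ 2)⁻¹ * Z ((ℝ ∙ z)ᗮ.reflection k)) =o[𝓝 0] fun k => ‖k‖ ^ 2 := by
  let S := (ℝ ∙ z)ᗮ.reflection
  let U k := S k - ‖k‖ ^ 2 • inversion 0 1 z
  have hUS : (fun k => U k - S k) =o[𝓝 0] fun k => ‖k‖ := by
    have hsq : (fun k : E => ‖k‖ ^ 2) =o[𝓝 0] fun k => ‖k‖ :=
      (isLittleO_norm_pow_id one_lt_two).norm_right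
    refine IsBigO.trans_isLittleO (.of_bound ‖inversion 0 1 z‖ (.of_forall fun k => ?_)) hsq
    simp [U, norm_smul, mul_comm]
  have hS : (fun k => S k) =O[𝓝 0] fun k => ‖k‖ := .of_norm_le fun k => by simp
  have hU := quadraticForm_sub_isLittleO Z hUS hS
  have hZS : (fun k => Z (S k)) =O[𝓝 0] fun k => ‖k‖ ^ 2 := by
    simpa using quadraticForm_isBigO (Z.comp S.toLinearMap) (𝓝 0)
  have hinv : (fun k => (‖z + k‖ ^ 2)⁻¹ - (‖z‖ ^ 2)⁻¹) =o[𝓝 0] fun _ => (1 : ℝ) := by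
    rw [isLittleO_one_iff, tendsto_sub_nhds_zero_iff]
    exact tendsto_inv_norm_add_sq hz
  have hbdd := (tendsto_inv_norm_add_sq hz).isBigO_one ℝ
  refine ((hbdd.mul_isLittleO hU).add (hinv.mul_isBigO hZS)).congr' ?_
    (.of_forall fun k => one_mul _)
  filter_upwards [(tendsto_const_add_nhds_zero z).eventually_ne hz] with k hk
  have hU : U k = ‖z + k‖ ^ 2 • (inversion 0 1 (z + k) - inversion 0 1 z) :=
    (norm_sq_smul_inversion_add_sub hz hk).symm
  rw [hU, quadraticForm_apply_smul]
  field_simp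
  ring

lemma hasTaylorTwo_norm_sq_mul_quadraticPoly_inversion (c : ℝ) (P : E) (Z : QuadraticForm ℝ E)
    (hz : z ≠ 0) :
    HasTaylorTwo (fun x => ‖x‖ ^ 2 * quadraticPoly c (inversion 0 1 z) P Z (inversion 0 1 x)) z
      ((2 * c) • z + (ℝ ∙ z)ᗮ.reflection P)
      ((2 * (c - inner ℝ P (inversion 0 1 z))) • normSqForm +
        (‖z‖ ^ 2)⁻¹ • Z.comp (ℝ ∙ z)ᗮ.reflection.toLinearMap) := by
  refine ((quadraticForm_inversion_sub_isLittleO Z hz).const_mul_left 2⁻¹).congr' ?_ .rfl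
  filter_upwards [(tendsto_const_add_nhds_zero z).eventually_ne hz] with k hk
  have hinner := congrArg (inner ℝ P) (norm_sq_smul_inversion_add_sub hz hk)
  rw [real_inner_smul_right, inner_sub_right _ ((ℝ ∙ z)ᗮ.reflection k),
    real_inner_smul_right] at hinner
  simp only [quadraticPoly, sub_self, inner_zero_right, add_zero, map_zero, zero_div,
    inner_add_left, real_inner_smul_left, inner_reflection_orthogonal_left, add_apply, smul_apply,
    normSqForm_apply, smul_eq_mul, QuadraticMap.comp_apply, LinearEquiv.coe_coe,
    LinearIsometryEquiv.coe_toLinearEquiv]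
  linear_combination -hinner - c * norm_add_sq_real z k

lemma HasSuperjet.of_inversion (hb : HasSuperjet b (inversion 0 1 z) P Z) (hz : z ≠ 0)
    (hf : ∀ x ≠ 0, f x = ‖x‖ ^ 2 * b (inversion 0 1 x)) :
    HasSuperjet f z ((2 * b (inversion 0 1 z)) • z + (ℝ ∙ z)ᗮ.reflection P)
      ((2 * (b (inversion 0 1 z) - inner ℝ P (inversion 0 1 z))) • normSqForm +
        (‖z‖ ^ 2)⁻¹ • Z.comp (ℝ ∙ z)ᗮ.reflection.toLinearMap) := by
  intro η hη
  have hθ : 0 < η * ‖z‖ ^ 2 := by positivity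
  let g x := ‖x‖ ^ 2 * quadraticPoly (b (inversion 0 1 z)) (inversion 0 1 z) P
    (Z + (η * ‖z‖ ^ 2) • normSqForm) (inversion 0 1 x)
  have hinv : Tendsto (inversion (0 : E) 1) (𝓝 z) (𝓝 (inversion 0 1 z)) :=
    (EuclideanGeometry.hasFDerivAt_inversion hz).continuousAt
  have htouch : IsLocalMax (fun x => f x - g x) z := by
    filter_upwards [hinv.eventually (hb.eventually_le_quadraticPoly hθ),
      isOpen_compl_singleton.mem_nhds hz] with x hx hx0
    simp only [g, quadraticPoly_self, hf z hz, hf x hx0, sub_self, sub_nonpos]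
    gcongr
  have hjet := (hasTaylorTwo_norm_sq_mul_quadraticPoly_inversion _ P
    (Z + (η * ‖z‖ ^ 2) • normSqForm) hz).hasSuperjet.of_isLocalMax_sub htouch
  filter_upwards [hjet (η / 2) (half_pos hη)] with h hh
  simp only [add_apply, smul_apply, normSqForm_apply, smul_eq_mul, QuadraticMap.comp_apply,
    LinearEquiv.coe_coe, LinearIsometryEquiv.coe_toLinearEquiv, LinearIsometryEquiv.norm_map]
    at hh ⊢
  field_simp at hh ⊢
  linarith

end Inversion

section KelvinTransform

open EuclideanGeometry (inversion)

section Basic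

variable {E : Type*} [NormedAddCommGroup E] [InnerProductSpace ℝ E] {w : E → ℝ} {y z : E}

/-- The Kelvin transform of `w` in the unit sphere, with the value `0` at the origin. If `w` is the
conformal factor of a metric `w⁻² |dx|²`, this is the conformal factor of its pullback by the
inversion. -/
def kelvin (w : E → ℝ) (y : E) : ℝ := ‖y‖ ^ 2 * w (inversion 0 1 y)

lemma kelvin_of_norm_eq_one (hy : ‖y‖ = 1) : kelvin w y = w y := by
  simp [kelvin, inversion_zero_one_apply, hy]

lemma kelvin_nonneg (hw : ∀ x, 0 < w x) (y : E) : 0 ≤ kelvin w y :=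
  mul_nonneg (sq_nonneg _) (hw _).le

lemma kelvin_pos (hw : ∀ x, 0 < w x) (hy : y ≠ 0) : 0 < kelvin w y :=
  mul_pos (by positivity) (hw _)

lemma norm_sq_mul_kelvin_inversion (hz : z ≠ 0) :
    ‖z‖ ^ 2 * kelvin w (inversion 0 1 z) = w z := by
  rw [kelvin, EuclideanGeometry.inversion_inversion 0 one_ne_zero, norm_inversion_zero_one]
  field_simp

lemma continuousOn_kelvin (hw : Continuous w) : ContinuousOn (kelvin w) {0}ᶜ :=
  (continuous_norm.pow 2).continuousOn.mul <| hw.comp_continuousOn <|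
    continuousOn_const.inversion continuousOn_const continuousOn_id fun _ hx => hx

lemma HasSuperjet.congr_of_eventuallyEq {f g : E → ℝ} {x p : E} {Q : QuadraticForm ℝ E}
    (hf : HasSuperjet f x p Q) (hfg : f =ᶠ[𝓝 x] g) : HasSuperjet g x p Q :=
  hf.of_isLocalMax_sub <| hfg.mono fun y hy => by simp [hy, hfg.eq_of_nhds]

end Basic

section Supersolution

variable {n : ℕ} {Γ : Set (Fin n → ℝ)} {w b : Euc n → ℝ} {y : Euc n} {c δ : ℝ}

lemma ExpSupersolAt.congr {b' : Euc n → ℝ} (hb : ExpSupersolAt Γ b y) (h : b =ᶠ[𝓝 y] b') :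
    ExpSupersolAt Γ b' y := fun P Z hPZ =>
  h.eq_of_nhds ▸ hb P Z (hPZ.congr_of_eventuallyEq h.symm)

lemma expSupersolAt_kelvin (hΓ : CondC Γ) (hy : y ≠ 0) (hw : ExpSupersolAt Γ w (inversion 0 1 y)) :
    ExpSupersolAt Γ (kelvin w) y := by
  intro P Z hPZ
  let z := inversion 0 1 y
  have hz : z ≠ 0 := inversion_zero_one_ne_zero hy
  have hzy : inversion 0 1 z = y := EuclideanGeometry.inversion_inversion 0 one_ne_zero y
  rw [← hzy] at hPZ
  have hjet := hPZ.of_inversion hz fun x hx => (norm_sq_mul_kelvin_inversion hx).symm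
  refine hΓ.eigs_mem_closure_of_le (hw _ _ hjet) (ℝ ∙ z)ᗮ.reflection one_pos fun k => le_of_eq ?_
  have hnorm : ‖z‖ = ‖y‖⁻¹ := norm_inversion_zero_one y
  have hwz : kelvin w y = ‖y‖ ^ 2 * w z := rfl
  have hinner : inner ℝ z ((ℝ ∙ z)ᗮ.reflection P) = -((‖y‖ ^ 2)⁻¹ * inner ℝ P y) := by
    rw [real_inner_comm, inner_reflection_orthogonal_left,
      Submodule.reflection_orthogonalComplement_singleton_eq_neg, inner_neg_right,
      show z = _ from inversion_zero_one_apply y, real_inner_smul_right]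
  simp only [add_apply, sub_apply, smul_apply, smul_eq_mul, normSqForm_apply,
    QuadraticMap.comp_apply, LinearEquiv.coe_coe, LinearIsometryEquiv.coe_toLinearEquiv,
    LinearIsometryEquiv.norm_map, norm_add_sq_real, real_inner_smul_left, hinner, norm_smul,
    mul_pow, Real.norm_eq_abs, sq_abs, hzy, hnorm, hwz]
  field_simp
  ring

open scoped Classical in
lemma expSupersolAt_update_kelvin (hΓ : CondC Γ) (hw : ∀ x, ExpSupersolAt Γ w x) (c : ℝ)
    (hy : y ≠ 0) : ExpSupersolAt Γ (Function.update (kelvin w) 0 c) y :=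
  (expSupersolAt_kelvin hΓ hy (hw _)).congr <| by
    filter_upwards [isOpen_compl_singleton.mem_nhds hy] with x hx
      using (Function.update_of_ne hx _ _).symm

open scoped Classical in
lemma update_kelvin_pos (hw : ∀ x, 0 < w x) (hc : 0 < c) (y : Euc n) :
    0 < Function.update (kelvin w) 0 c y := by
  rcases eq_or_ne y 0 with rfl | hy
  · rwa [Function.update_self]
  · rw [Function.update_of_ne hy]
    exact kelvin_pos hw hy

open scoped Classical in
lemma logSupersolAt_log_update_kelvin (hΓ : CondC Γ) (hpos : ∀ x, 0 < w x)
    (hw : ∀ x, ExpSupersolAt Γ w x) (hc : 0 < c) (hy : y ≠ 0) :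
    LogSupersolAt Γ (fun y => Real.log (Function.update (kelvin w) 0 c y)) y :=
  (logSupersolAt_log_iff hΓ (update_kelvin_pos hpos hc)).2 (expSupersolAt_update_kelvin hΓ hw c hy)

open scoped Classical in
lemma continuousOn_log_update_kelvin (hcont : Continuous w) (hpos : ∀ x, 0 < w x) (hc : 0 < c) :
    ContinuousOn (fun y => Real.log (Function.update (kelvin w) 0 c y)) {0}ᶜ :=
  ((continuousOn_kelvin hcont).congr fun _ hx => Function.update_of_ne hx _ _).log fun _ _ =>
    (update_kelvin_pos hpos hc _).ne'

lemma exists_forall_kelvin_le (hΓ : CondC Γ) (hδ : 0 < δ)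
    (ht : axialTuple n (2 + δ) (-(1 - δ)) ∉ closure Γ) (hcont : Continuous w)
    (hpos : ∀ x, 0 < w x) (hw : ∀ x, ExpSupersolAt Γ w x) :
    ∃ M, ∀ y ≠ 0, ‖y‖ ≤ 1 → kelvin w y ≤ M := by
  classical
  obtain ⟨M, hM⟩ := (isCompact_sphere (0 : Euc n) 1).bddAbove_image
    (hcont.log fun x => (hpos x).ne').continuousOn
  have hsphere : ∀ y, ‖y‖ = 1 → Real.log (Function.update (kelvin w) 0 1 y) ≤ M := fun y hy => by
    rw [Function.update_of_ne (norm_ne_zero_iff.1 (hy ▸ one_ne_zero)), kelvin_of_norm_eq_one hy]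
    exact hM ⟨y, mem_sphere_zero_iff_norm.2 hy, rfl⟩
  have ht' : axialTuple n (2 + 2 * (δ / 2)) (-1) ∉ closure Γ := fun hmem =>
    ht <| hΓ.mem_closure_of_le hmem fun i => by
      unfold axialTuple
      split_ifs <;> linarith
  refine ⟨Real.exp M, fun y hy hy1 => ?_⟩
  have hle := le_of_logSupersolAt_of_sphere_le hΓ
    (fun z hz => logSupersolAt_log_update_kelvin hΓ hpos hw one_pos hz)
    (continuousOn_log_update_kelvin hcont hpos one_pos) (half_pos hδ) ht' hsphere hy hy1
  rwa [Function.update_of_ne hy, Real.log_le_iff_le_exp (kelvin_pos hpos hy)] at hle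

lemma upperSemicontinuous_update_limsup {X : Type*} [TopologicalSpace X] [T1Space X]
    [DecidableEq X] {f : X → ℝ} {x : X} (hf : ContinuousOn f {x}ᶜ)
    (hbdd : IsBoundedUnder (· ≤ ·) (𝓝[≠] x) f) :
    UpperSemicontinuous (Function.update f x (limsup f (𝓝[≠] x))) := by
  intro y
  rcases eq_or_ne y x with rfl | hy
  · intro c hc
    rw [Function.update_self] at hc
    have hlt := eventually_nhdsWithin_iff.1 (eventually_lt_of_limsup_lt hc hbdd)
    filter_upwards [hlt] with z hz
    rcases eq_or_ne z y with rfl | hzy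
    · rwa [Function.update_self]
    · rw [Function.update_of_ne hzy]
      exact hz hzy
  · have hcont : ContinuousAt f y := hf.continuousAt (isOpen_compl_singleton.mem_nhds hy)
    exact ((continuousAt_update_of_ne hy).2 hcont).upperSemicontinuousAt

open scoped Classical in
lemma expSupersolAt_update_kelvin_limsup [Nontrivial (Euc n)] (hΓ : CondC Γ) (hδ : 0 < δ)
    (ht : axialTuple n (2 + δ) (-(1 - δ)) ∉ closure Γ) (hcont : Continuous w)
    (hpos : ∀ x, 0 < w x) (hw : ∀ x, ExpSupersolAt Γ w x)
    (hc : 0 < limsup (kelvin w) (𝓝[≠] 0)) :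
    ExpSupersolAt Γ (Function.update (kelvin w) 0 (limsup (kelvin w) (𝓝[≠] 0))) 0 := by
  rw [← logSupersolAt_log_iff hΓ (update_kelvin_pos hpos hc)]
  refine logSupersolAt_zero_of_forall_ne hΓ hδ ht (continuousOn_log_update_kelvin hcont hpos hc)
    (fun z hz => logSupersolAt_log_update_kelvin hΓ hpos hw hc hz) fun a ha => ?_
  rw [Function.update_self, Real.lt_log_iff_exp_lt hc] at ha
  have hcobdd : IsCoboundedUnder (· ≤ ·) (𝓝[≠] (0 : Euc n)) (kelvin w) :=
    (isBoundedUnder_of ⟨0, kelvin_nonneg hpos⟩ :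
      IsBoundedUnder (· ≥ ·) (𝓝[≠] (0 : Euc n)) (kelvin w)).isCoboundedUnder_le
  refine ((frequently_lt_of_lt_limsup hcobdd ha).and_eventually self_mem_nhdsWithin).mono ?_
  rintro y ⟨hlt, hy⟩
  rwa [Function.update_of_ne hy, Real.lt_log_iff_exp_lt (kelvin_pos hpos hy)]

end Supersolution

theorem kelvin_exp_neg_le {n : ℕ} {Γ : Set (Fin n → ℝ)} {v : Euc n → ℝ} {y : Euc n} {δ : ℝ}
    (hΓ : CondC Γ) (hδ : 0 < δ) (ht : axialTuple n (2 + δ) (-(1 - δ)) ∉ closure Γ)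
    (hv : Continuous v) (hsub : JetSubsol Γ v) (hsup : ∀ x, LogSupersolAt Γ (fun y => -v y) x)
    (hy : y ≠ 0) (hy1 : ‖y‖ ≤ 1) :
    kelvin (fun x => Real.exp (-v x)) y ≤ Real.exp (-v y) := by
  classical
  have : Nontrivial (Euc n) := ⟨y, 0, hy⟩
  set w := fun x => Real.exp (-v x)
  have hcont : Continuous w := by fun_prop
  have hpos : ∀ x, 0 < w x := fun x => Real.exp_pos _
  have hw : ∀ x, ExpSupersolAt Γ w x := fun x =>
    (logSupersolAt_log_iff hΓ hpos).1 (by simpa only [w, Real.log_exp] using hsup x)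
  obtain ⟨M, hM⟩ := exists_forall_kelvin_le hΓ hδ ht hcont hpos hw
  have hbdd : IsBoundedUnder (· ≤ ·) (𝓝[≠] 0) (kelvin w) := by
    refine isBoundedUnder_of_eventually_le (a := M) ?_
    filter_upwards [self_mem_nhdsWithin, nhdsWithin_le_nhds (closedBall_mem_nhds 0 one_pos)]
      with x hx hx1 using hM x hx (mem_closedBall_zero_iff.1 hx1)
  let b := Function.update (kelvin w) 0 (limsup (kelvin w) (𝓝[≠] 0))
  have hb_of_ne : ∀ x ≠ 0, b x = kelvin w x := fun x hx => Function.update_of_ne hx _ _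
  have hb0 : 0 ≤ b 0 := by
    rw [show b 0 = _ from Function.update_self ..]
    exact le_limsup_of_frequently_le (.of_forall (kelvin_nonneg hpos)) hbdd
  have hb : ∀ x, 0 ≤ b x := fun x => by
    rcases eq_or_ne x 0 with rfl | hx
    exacts [hb0, hb_of_ne x hx ▸ kelvin_nonneg hpos x]
  have hbsup : ∀ x, ‖x‖ < 1 → 0 < b x → ExpSupersolAt Γ b x := fun x _ hbx => by
    rcases eq_or_ne x 0 with rfl | hx
    · rw [show b 0 = _ from Function.update_self ..] at hbx
      exact expSupersolAt_update_kelvin_limsup hΓ hδ ht hcont hpos hw hbx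
    · exact expSupersolAt_update_kelvin hΓ hw _ hx
  have hbsphere : ∀ x, ‖x‖ = 1 → b x ≤ w x := fun x hx => by
    rw [hb_of_ne x (norm_ne_zero_iff.1 (hx ▸ one_ne_zero)), kelvin_of_norm_eq_one hx]
  rw [← hb_of_ne y hy]
  exact hsub.le_exp_neg_of_sphere_le hΓ hv.continuousOn hb
    ((upperSemicontinuous_update_limsup (continuousOn_kelvin hcont) hbdd).upperSemicontinuousOn _)
    hbsup hbsphere hy1

end KelvinTransform

section Liouville

variable {n : ℕ} {Γ : Set (Fin n → ℝ)} {v : Euc n → ℝ}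

lemma exists_pos_axialTuple_notMem_closure (hl : lamStar n ∉ closure Γ) :
    ∃ δ > 0, axialTuple n (2 + δ) (-(1 - δ)) ∉ closure Γ := by
  have hcont : Continuous fun δ : ℝ => axialTuple n (2 + δ) (-(1 - δ)) :=
    continuous_pi fun i => by
      unfold axialTuple
      split_ifs <;> fun_prop
  have hev : ∀ᶠ δ in 𝓝 (0 : ℝ), axialTuple n (2 + δ) (-(1 - δ)) ∈ (closure Γ)ᶜ :=
    hcont.continuousAt.eventually_mem <| isClosed_closure.isOpen_compl.mem_nhds <| by
      rwa [add_zero, sub_zero, ← lamStar_eq_axialTuple]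
  exact ((eventually_mem_nhdsWithin (s := Ioi 0)).and (hev.filter_mono nhdsWithin_le_nhds)).exists

/-- The inversion exchanging `a` and `b` is centred on the line through them, at distance `s`
beyond `a`, and has radius `√(s (s + ‖b - a‖))`. -/
lemma exists_affine_inversion_eq {E : Type*} [NormedAddCommGroup E] [InnerProductSpace ℝ E]
    {a b : E} (hab : a ≠ b) {s : ℝ} (hs : 0 < s) :
    ∃ (x y : E) (l : ℝ), 0 < l ∧ ‖y‖ ^ 2 = s / (s + ‖b - a‖) ∧ x + l • y = a ∧
      x + l • EuclideanGeometry.inversion 0 1 y = b := by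
  set d := ‖b - a‖ with hd
  have hd0 : 0 < d := norm_pos_iff.2 (sub_ne_zero.2 hab.symm)
  set l := √(s * (s + d))
  have hl : 0 < l := Real.sqrt_pos.2 (by positivity)
  have hl2 : l ^ 2 = s * (s + d) := Real.sq_sqrt (by positivity)
  have hy : ‖(s / (d * l)) • (b - a)‖ ^ 2 = s / (s + d) := by
    rw [norm_smul, Real.norm_of_nonneg (by positivity), ← hd, mul_pow, div_pow, mul_pow, hl2]
    field_simp
  refine ⟨a - (s / d) • (b - a), (s / (d * l)) • (b - a), l, hl, hy, ?_, ?_⟩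
  · have hcoeff : l * (s / (d * l)) = s / d := by field_simp
    rw [smul_smul, hcoeff, sub_add_cancel]
  · have hcoeff : l * (s / (s + d))⁻¹ * (s / (d * l)) = s / d + 1 := by field_simp
    rw [inversion_zero_one_apply, hy, smul_smul, smul_smul, hcoeff]
    module

lemma tendsto_log_add_div_atTop (d : ℝ) :
    Tendsto (fun s => Real.log ((s + d) / s)) atTop (𝓝 0) := by
  have hdiv : Tendsto (fun s : ℝ => 1 + d / s) atTop (𝓝 1) := by
    simpa using (tendsto_const_nhds (x := d)).div_atTop tendsto_id |>.const_add (1 : ℝ)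
  rw [← Real.log_one]
  refine ((Real.continuousAt_log one_ne_zero).tendsto.comp hdiv).congr' ?_
  filter_upwards [eventually_gt_atTop 0] with s hs
  rw [Function.comp_apply, add_div, div_self hs.ne']

lemma JetSubsol.le_add_log (hΓ : CondC Γ) (hl : lamStar n ∉ closure Γ) (hv : Continuous v)
    (hsub : JetSubsol Γ v) (hsup : ∀ x, LogSupersolAt Γ (fun y => -v y) x) {a b : Euc n}
    (hab : a ≠ b) {s : ℝ} (hs : 0 < s) : v a ≤ v b + Real.log ((s + ‖b - a‖) / s) := by
  obtain ⟨δ, hδ, ht⟩ := exists_pos_axialTuple_notMem_closure hl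
  obtain ⟨x, y, l, hl, hy, hxa, hxb⟩ := exists_affine_inversion_eq hab hs
  have hy0 : y ≠ 0 := by
    rintro rfl
    rw [norm_zero, zero_pow two_ne_zero] at hy
    exact absurd hy (by positivity)
  have hy1 : ‖y‖ ≤ 1 := by
    rw [← sq_le_one_iff₀ (norm_nonneg y), hy]
    exact div_le_one_of_le₀ (le_add_of_nonneg_right (norm_nonneg _)) (by positivity)
  have hkelvin : s / (s + ‖b - a‖) * Real.exp (-v b) ≤ Real.exp (-v a) := by
    rw [← hy, ← hxa, ← hxb]
    exact kelvin_exp_neg_le hΓ hδ ht (by fun_prop) (hsub.comp_add_smul hΓ x hl)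
      (fun z => (hsup _).comp_add_smul hΓ hl) hy0 hy1
  have hlog := Real.log_le_log (by positivity) hkelvin
  rw [Real.log_mul (by positivity) (Real.exp_pos _).ne', Real.log_exp, Real.log_exp, ← inv_div,
    Real.log_inv] at hlog
  linarith

lemma JetSubsol.le_of_lamStar_notMem_closure (hΓ : CondC Γ) (hl : lamStar n ∉ closure Γ)
    (hv : Continuous v) (hsub : JetSubsol Γ v)
    (hsup : ∀ x, LogSupersolAt Γ (fun y => -v y) x) (a b : Euc n) : v a ≤ v b := by
  rcases eq_or_ne a b with rfl | hab
  · exact le_rfl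
  · have hlim : Tendsto (fun s => v b + Real.log ((s + ‖b - a‖) / s)) atTop (𝓝 (v b)) := by
      simpa using (tendsto_log_add_div_atTop ‖b - a‖).const_add (v b)
    refine ge_of_tendsto hlim ?_
    filter_upwards [eventually_gt_atTop 0] with s hs using hsub.le_add_log hΓ hl hv hsup hab hs

end Liouville

/-- **Liouville theorem for `λ(A[v]) ∈ ∂Γ` in `ℝⁿ`** (Theorem 1.2):
if `Γ` satisfies condition (C) and `λ* ∉ ∂Γ`, then every continuous viscosity solution
of `λ(A[v]) ∈ ∂Γ` in `ℝⁿ` is constant. -/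
theorem liouville_degenerate_entire
    {n : ℕ} (hn : 2 ≤ n) (Γ : Set (Fin n → ℝ)) (hΓ : CondC Γ)
    (hstar : lamStar n ∉ frontier Γ)
    (v : Euc n → ℝ) (hv : Continuous v)
    (hsup : Supersol Γ Set.univ v) (hsub : Subsol Γ Set.univ v) :
    ∀ x y : Euc n, v x = v y := by
  have hle : ∀ x y, v x ≤ v y := by
    have hjet := hsub.jetSubsol hΓ
    by_cases hmem : lamStar n ∈ Γ
    · exact hjet.le_of_lamStar_mem hΓ hmem hv
    · have hnot : lamStar n ∉ closure Γ := fun hcl =>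
        hstar ⟨hcl, fun hint => hmem (interior_subset hint)⟩
      exact hjet.le_of_lamStar_notMem_closure hΓ hnot hv (hsup.logSupersolAt hΓ)
  exact fun x y => le_antisymm (hle x y) (hle y x)
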